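/- arXiv:2411.07125 — 2 statements merged into one kernel-verified Lean document; each statement's English description precedes it below -/
import Mathlib

section
/- For every δ > 0 there exist a constant γ = γ(δ) < ∞ and N ∈ ℕ such that for all n ≥ N and every ε with 0 < ε < 1/2, with probability at least 1 − δ over the random choice of the 2k hubs and the random perfect matching, the total variation mixing time of the chain satisfies t_mix(ε) ≤ γ · n^{(k+2)/(k+1)} · log(1/ε). -/
/-!
The proof bounds the `ℓ²` distance to equilibrium by a Nash-type inequality in Fourier space
whose constant is controlled, with high probability, by averaging over the random jump lengths.

*Energy inequality.* Over one block of time `K n`, a constant number of turns of the drifting walk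
around the cycle, the perturbed chain started from `f` loses at least a constant times
`(‖f‖² - ‖P₀^{Kn} f‖²) + ∑_{z ∈ H} ‖f(· + μ z - z) - f‖²` of squared norm, where `P₀`
(`freeStep`) is the chain without matching edges. By Duhamel the perturbed evolution (`hubStep`)
is the free one plus a source supported at the hubs, and the source is the difference of the
evolution across a matching edge, which is dissipated. Both the effect of the source
(`IsDriven.sum_sq_le`) and the observability of the free evolution at a single vertex
(`mul_sqNorm_le_sum_sq_iterate`) follow from a multiplier of size `O(n)` on which the walk gains
its drift at each step (`windingPotential`).

*Nash iteration.* In Fourier variables the loss is `∑ κ(ξ) |f̂(ξ)|²`, with `κ`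
(`dissipationSymbol`) the sum of a free part and of `|χ(ξ (μ z - z)) - 1|²` over the hubs `z`.
Suppose `∑_{ξ ≠ 0} (1 + m κ(ξ))^{-(k+1)}` (`resolventSum`) is a small enough constant. Since
`|f̂| ≤ 2` for `f = P^t(x,·) - 1/n`, the quantity `u = n ‖f‖²` satisfies
`Δu ≤ - c u^{1 + 1/(k+1)} / m` per block while `u ≥ 1`, so it reaches `1` after `O(m)` blocks, and
then decays exponentially at rate `c / m`. The mixing time is therefore `O(n m log (1/ε))`.

*Choice of `m`.* Up to a factor `4^k`, the expectation over configurations may be taken over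
independent uniform hubs. For `0 < |ξ| ≤ √n` the average of `(1 + m |χ(ξ d) - 1|²)⁻¹` over a
uniform jump `d` is at most `4 / √m` (a Poisson kernel computation), and the free part is at least
of order `ξ² / n`, so that `E ∑ (1 + m κ)^{-(k+1)}` is of order
`√(n / m) m^{-k/2} = √n m^{-(k+1)/2}`. For `|ξ| > √n` the free part is bounded below and contributes
`O(n m^{-(k+1)})`. Both are small for `m = B n^{1/(k+1)}` with `B` large, and Markov's inequality
concludes.
-/

open scoped BigOperators

noncomputable section

attribute [local instance 10] Classical.propDecidable

/-- Transition matrix of the perturbed cycle chain: forward probability `p`, backward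
probability `q`, probability `a` of using the added matching edge at a hub, remaining
mass on the diagonal. -/
def cycleP (n : ℕ) [NeZero n] (p q a : ℝ) (H : Finset (ZMod n)) (μ : ZMod n → ZMod n) :
    Matrix (ZMod n) (ZMod n) ℝ := fun x y =>
  (if y = x + 1 then p else 0) + (if y = x - 1 then q else 0) +
    (if x ∈ H ∧ y = μ x then a else 0) +
    (if y = x then 1 - p - q - (if x ∈ H then a else 0) else 0)

/-- `H` is a set of `2k` hubs and `μ` a fixed-point-free involution (perfect matching)
of `H`, extended by the identity outside `H`. -/
def IsConfig (n : ℕ) [NeZero n] (k : ℕ) (H : Finset (ZMod n)) (μ : ZMod n → ZMod n) : Prop :=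
  H.card = 2 * k ∧ (∀ x ∈ H, μ x ∈ H) ∧ (∀ x, μ (μ x) = x) ∧
    (∀ x ∈ H, μ x ≠ x) ∧ (∀ x, x ∉ H → μ x = x)

/-- Probability, under the uniform choice of the hub set together with a uniform perfect
matching on it, of the event `E`. -/
def configProb (n : ℕ) [NeZero n] (k : ℕ)
    (E : Finset (ZMod n) → (ZMod n → ZMod n) → Prop) : ℝ :=
  ((Finset.univ.filter (fun cfg : Finset (ZMod n) × (ZMod n → ZMod n) =>
      IsConfig n k cfg.1 cfg.2 ∧ E cfg.1 cfg.2)).card : ℝ) /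
    ((Finset.univ.filter (fun cfg : Finset (ZMod n) × (ZMod n → ZMod n) =>
      IsConfig n k cfg.1 cfg.2)).card : ℝ)

/-- The chain driven by `P` is mixed to total-variation tolerance `ε` at time `t`
(from every starting state), the stationary distribution being uniform. -/
def mixedBy (n : ℕ) [NeZero n] (P : Matrix (ZMod n) (ZMod n) ℝ) (ε : ℝ) (t : ℕ) : Prop :=
  ∀ x : ZMod n, (1 / 2 : ℝ) * ∑ y : ZMod n, |(P ^ t) x y - 1 / n| ≤ ε

/-! ### The walk without matching edges -/

section FreeWalk

variable {n : ℕ} {p q : ℝ}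

/-- Row-vector action `f ↦ f P₀` of the walk `P₀` without matching edges. Its adjoint is the walk
with `p` and `q` exchanged. -/
def freeStep (p q : ℝ) (f : ZMod n → ℝ) : ZMod n → ℝ :=
  fun y => p * f (y - 1) + q * f (y + 1) + (1 - p - q) * f y

/-- Squared Euclidean norm with respect to counting measure; the norm that Mathlib puts on
`ι → ℝ` is the supremum norm. -/
def sqNorm {ι : Type*} [Fintype ι] (f : ι → ℝ) : ℝ := ∑ x, f x ^ 2

lemma sqNorm_nonneg {ι : Type*} [Fintype ι] (f : ι → ℝ) : 0 ≤ sqNorm f :=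
  Finset.sum_nonneg fun _ _ => sq_nonneg _

lemma sq_le_sqNorm {ι : Type*} [Fintype ι] (f : ι → ℝ) (x : ι) : f x ^ 2 ≤ sqNorm f :=
  Finset.single_le_sum (f := fun x => f x ^ 2) (fun _ _ => sq_nonneg _) (Finset.mem_univ x)

lemma freeStep_add (p q : ℝ) (f g : ZMod n → ℝ) :
    freeStep p q (f + g) = freeStep p q f + freeStep p q g := by
  funext y; simp only [freeStep, Pi.add_apply]; ring

lemma freeStep_sub (p q : ℝ) (f g : ZMod n → ℝ) :
    freeStep p q (f - g) = freeStep p q f - freeStep p q g := by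
  funext y; simp only [freeStep, Pi.sub_apply]; ring

lemma freeStep_translate (p q : ℝ) (f : ZMod n → ℝ) (d : ZMod n) :
    freeStep p q (fun x => f (x + d)) = fun x => freeStep p q f (x + d) := by
  funext y; simp only [freeStep, add_right_comm _ d, ← sub_add_eq_add_sub]

lemma freeStep_commute_fwdDiff (p q : ℝ) (d : ZMod n) :
    Function.Commute (freeStep (n := n) p q) (fwdDiff d) := fun f => by
  change freeStep p q ((fun x => f (x + d)) - f) = _
  rw [freeStep_sub, freeStep_translate]
  rfl

lemma freeStep_sq_sub_sq_freeStep (p q : ℝ) (f : ZMod n → ℝ) (y : ZMod n) :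
    freeStep p q (fun x => f x ^ 2) y - freeStep p q f y ^ 2 =
      p * q * (f (y - 1) - f (y + 1)) ^ 2 + p * (1 - p - q) * (f (y - 1) - f y) ^ 2
        + q * (1 - p - q) * (f (y + 1) - f y) ^ 2 := by
  unfold freeStep; ring

lemma sq_freeStep_le (hp : 0 ≤ p) (hq : 0 ≤ q) (hpq : p + q ≤ 1) (f : ZMod n → ℝ) (y : ZMod n) :
    freeStep p q f y ^ 2 ≤ freeStep p q (fun x => f x ^ 2) y := by
  have hr : 0 ≤ 1 - p - q := by linarith
  rw [← sub_nonneg, freeStep_sq_sub_sq_freeStep]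
  positivity

variable [NeZero n]

lemma sum_comp_add_right {M : Type*} [AddCommMonoid M] (F : ZMod n → M) (c : ZMod n) :
    ∑ x, F (x + c) = ∑ x, F x :=
  Equiv.sum_comp (Equiv.addRight c) F

lemma sum_comp_sub_right {M : Type*} [AddCommMonoid M] (F : ZMod n → M) (c : ZMod n) :
    ∑ x, F (x - c) = ∑ x, F x :=
  Equiv.sum_comp (Equiv.subRight c) F

lemma sqNorm_translate (f : ZMod n → ℝ) (d : ZMod n) : sqNorm (fun x => f (x + d)) = sqNorm f :=
  sum_comp_add_right (fun x => f x ^ 2) d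

lemma sum_mul_freeStep (p q : ℝ) (F g : ZMod n → ℝ) :
    ∑ y, F y * freeStep p q g y = ∑ x, freeStep q p F x * g x := by
  have hleft := sum_comp_sub_right (fun x => F (x + 1) * g x) 1
  have hright := sum_comp_add_right (fun x => F (x - 1) * g x) 1
  simp only [sub_add_cancel, add_sub_cancel_right] at hleft hright
  calc ∑ y, F y * freeStep p q g y
      = p * ∑ y, F y * g (y - 1) + q * ∑ y, F y * g (y + 1)
          + (1 - p - q) * ∑ y, F y * g y := by
        simp only [Finset.mul_sum, ← Finset.sum_add_distrib, freeStep]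
        exact Finset.sum_congr rfl fun y _ => by ring
    _ = ∑ x, freeStep q p F x * g x := by
        rw [hleft, hright]
        simp only [Finset.mul_sum, ← Finset.sum_add_distrib, freeStep]
        exact Finset.sum_congr rfl fun y _ => by ring

lemma sum_freeStep (p q : ℝ) (g : ZMod n → ℝ) : ∑ y, freeStep p q g y = ∑ x, g x := by
  have h := sum_mul_freeStep p q (fun _ => 1) g
  simp only [one_mul] at h
  rw [h]
  exact Finset.sum_congr rfl fun x _ => by unfold freeStep; ring

lemma sum_mul_sq_freeStep_le (hp : 0 ≤ p) (hq : 0 ≤ q) (hpq : p + q ≤ 1) {F : ZMod n → ℝ}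
    (hF : ∀ x, 0 ≤ F x) (g : ZMod n → ℝ) :
    ∑ y, F y * freeStep p q g y ^ 2 ≤ ∑ x, freeStep q p F x * g x ^ 2 :=
  (Finset.sum_le_sum fun y _ => mul_le_mul_of_nonneg_left (sq_freeStep_le hp hq hpq g y) (hF y))
    |>.trans_eq (sum_mul_freeStep p q F fun x => g x ^ 2)

/-- The `ℓ²` dissipation of one step of the free walk. -/
def freeDissipation (p q : ℝ) (f : ZMod n → ℝ) : ℝ := sqNorm f - sqNorm (freeStep p q f)

lemma freeDissipation_eq_sum (p q : ℝ) (f : ZMod n → ℝ) :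
    freeDissipation p q f =
      ∑ y, (p * q * (f (y - 1) - f (y + 1)) ^ 2 + p * (1 - p - q) * (f (y - 1) - f y) ^ 2
        + q * (1 - p - q) * (f (y + 1) - f y) ^ 2) := by
  simp only [← freeStep_sq_sub_sq_freeStep, Finset.sum_sub_distrib, sum_freeStep]
  rfl

lemma freeDissipation_nonneg (hp : 0 ≤ p) (hq : 0 ≤ q) (hpq : p + q ≤ 1) (f : ZMod n → ℝ) :
    0 ≤ freeDissipation p q f := by
  have hr : 0 ≤ 1 - p - q := by linarith
  rw [freeDissipation_eq_sum]
  positivity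

lemma freeDissipation_translate (p q : ℝ) (f : ZMod n → ℝ) (d : ZMod n) :
    freeDissipation p q (fun x => f (x + d)) = freeDissipation p q f := by
  simp only [freeDissipation, freeStep_translate, sqNorm_translate]

lemma sqNorm_add_add_sqNorm_sub {ι : Type*} [Fintype ι] (f g : ι → ℝ) :
    sqNorm (f + g) + sqNorm (f - g) = 2 * sqNorm f + 2 * sqNorm g := by
  simp only [sqNorm, Finset.mul_sum, ← Finset.sum_add_distrib, Pi.add_apply, Pi.sub_apply]
  exact Finset.sum_congr rfl fun x _ => by ring

lemma freeDissipation_sub_le (hp : 0 ≤ p) (hq : 0 ≤ q) (hpq : p + q ≤ 1) (f g : ZMod n → ℝ) :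
    freeDissipation p q (f - g) ≤ 2 * freeDissipation p q f + 2 * freeDissipation p q g := by
  have hadd := freeDissipation_nonneg hp hq hpq (f + g)
  have hpar := sqNorm_add_add_sqNorm_sub f g
  have hpar' := sqNorm_add_add_sqNorm_sub (freeStep p q f) (freeStep p q g)
  simp only [freeDissipation, freeStep_add, freeStep_sub] at hadd ⊢
  linarith

lemma freeDissipation_fwdDiff_le (hp : 0 ≤ p) (hq : 0 ≤ q) (hpq : p + q ≤ 1) (f : ZMod n → ℝ)
    (d : ZMod n) : freeDissipation p q (fwdDiff d f) ≤ 4 * freeDissipation p q f := by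
  have h := freeDissipation_sub_le hp hq hpq (fun x => f (x + d)) f
  rw [freeDissipation_translate] at h
  exact h.trans (by linarith)

lemma freeDissipation_le_sqNorm_fwdDiff (hp : 0 ≤ p) (hq : 0 ≤ q) (hpq : p + q ≤ 1)
    (f : ZMod n → ℝ) : freeDissipation p q f ≤ 6 * sqNorm (fwdDiff 1 f) := by
  have hback : sqNorm (fwdDiff 1 f) = ∑ y, (f y - f (y - 1)) ^ 2 := by
    rw [← sum_comp_add_right _ 1]
    simp only [add_sub_cancel_right]
    rfl
  have hsplit : 6 * sqNorm (fwdDiff 1 f) =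
      ∑ y, (3 * (f (y + 1) - f y) ^ 2 + 3 * (f y - f (y - 1)) ^ 2) := by
    rw [Finset.sum_add_distrib, ← Finset.mul_sum, ← Finset.mul_sum, ← hback]
    unfold sqNorm fwdDiff; ring
  rw [freeDissipation_eq_sum, hsplit]
  refine Finset.sum_le_sum fun y _ => ?_
  have hpq1 : p * q ≤ 1 := by nlinarith
  have hpr1 : p * (1 - p - q) ≤ 1 := by nlinarith
  have hqr1 : q * (1 - p - q) ≤ 1 := by nlinarith
  nlinarith [mul_le_mul_of_nonneg_right hpq1 (sq_nonneg (f (y - 1) - f (y + 1))),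
    mul_le_mul_of_nonneg_right hpr1 (sq_nonneg (f (y - 1) - f y)),
    mul_le_mul_of_nonneg_right hqr1 (sq_nonneg (f (y + 1) - f y)),
    sq_nonneg (f (y + 1) - f y - (f y - f (y - 1)))]

lemma sum_freeDissipation_iterate (p q : ℝ) (f : ZMod n → ℝ) (T : ℕ) :
    ∑ t ∈ Finset.range T, freeDissipation p q ((freeStep p q)^[t] f) =
      sqNorm f - sqNorm ((freeStep p q)^[T] f) := by
  simp only [freeDissipation, ← Function.iterate_succ_apply' (freeStep p q)]
  exact Finset.sum_range_sub' (fun t => sqNorm ((freeStep p q)^[t] f)) T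

end FreeWalk

/-! ### A potential for the biased walk -/

section Potential

variable {n : ℕ} [NeZero n] {p q : ℝ}

lemma val_add_one_cases (y : ZMod n) :
    (y + 1).val = y.val + 1 ∨ y + 1 = 0 ∧ y.val + 1 = n := by
  have hcast : y + 1 = ((y.val + 1 : ℕ) : ZMod n) := by
    rw [Nat.cast_succ, ZMod.natCast_zmod_val]
  rcases (Nat.succ_le_of_lt (ZMod.val_lt y)).lt_or_eq with hlt | heq
  · exact .inl (by rw [hcast, ZMod.val_natCast, Nat.mod_eq_of_lt hlt])
  · exact .inr ⟨by rw [hcast, ← Nat.succ_eq_add_one, heq, ZMod.natCast_self], heq⟩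

lemma apply_val_add_one {α : Type*} {G : ℕ → α} (hG : G n = G 0) (y : ZMod n) :
    G (y + 1).val = G (y.val + 1) := by
  rcases val_add_one_cases y with hval | ⟨hzero, hwrap⟩
  · rw [hval]
  · rw [hzero, ZMod.val_zero, hwrap, hG]

/-- One period of the winding potential: a ramp, corrected by a multiple of the harmonic function
`(q / p) ^ j` chosen so that the values at `0` and `n` agree. -/
def windingProfile (n : ℕ) (p q : ℝ) (j : ℕ) : ℝ :=
  j + n / (1 - (q / p) ^ n) * (q / p) ^ j

/-- A nonnegative potential of size `O(n)` which the backward-drifting walk `freeStep q p`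
increases by `p - q` at every vertex except the base point `z`, where the winding `n (p - q)` is
paid back. -/
def windingPotential (p q : ℝ) (z x : ZMod n) : ℝ := windingProfile n p q (x - z).val

/-- An upper bound for the winding potential, divided by the length of the cycle. -/
def windingBound (p q : ℝ) : ℝ := 1 + p / (p - q)

lemma windingBound_pos (hq : 0 < q) (hpq : q < p) : 0 < windingBound p q :=
  add_pos one_pos (div_pos (hq.trans hpq) (sub_pos.2 hpq))

lemma pow_div_lt_one (hq : 0 < q) (hpq : q < p) : (q / p) ^ n < 1 :=
  pow_lt_one₀ (div_nonneg hq.le (hq.trans hpq).le) ((div_lt_one (hq.trans hpq)).2 hpq)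
    (NeZero.ne n)

lemma windingProfile_self (hq : 0 < q) (hpq : q < p) :
    windingProfile n p q n = windingProfile n p q 0 := by
  have hne : 1 - (q / p) ^ n ≠ 0 := (sub_pos.2 (pow_div_lt_one hq hpq)).ne'
  unfold windingProfile
  push_cast
  field_simp
  ring

lemma windingPotential_nonneg (hq : 0 < q) (hpq : q < p) (z x : ZMod n) :
    0 ≤ windingPotential p q z x := by
  have hp := hq.trans hpq
  have hden := sub_pos.2 (pow_div_lt_one (n := n) hq hpq)
  unfold windingPotential windingProfile; positivity

lemma windingPotential_le (hq : 0 < q) (hpq : q < p) (z x : ZMod n) :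
    windingPotential p q z x ≤ windingBound p q * n := by
  have hp := hq.trans hpq
  have hv := sub_pos.2 hpq
  have hρ0 : 0 ≤ q / p := by positivity
  have hρ1 : q / p < 1 := (div_lt_one hp).2 hpq
  have hval : ((x - z).val : ℝ) ≤ n := by exact_mod_cast (ZMod.val_lt _).le
  have hcoef : n / (1 - (q / p) ^ n) ≤ n / (1 - q / p) :=
    div_le_div_of_nonneg_left (by positivity) (sub_pos.2 hρ1)
      (sub_le_sub_left (pow_le_of_le_one hρ0 hρ1.le (NeZero.ne n)) _)
  have hprod : n / (1 - (q / p) ^ n) * (q / p) ^ (x - z).val ≤ n / (1 - q / p) * 1 :=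
    mul_le_mul hcoef (pow_le_one₀ hρ0 hρ1.le) (by positivity)
      (div_nonneg (by positivity) (sub_pos.2 hρ1).le)
  have hid : (n : ℝ) + n / (1 - q / p) * 1 = windingBound p q * n := by
    have : p - q ≠ 0 := hv.ne'
    rw [one_sub_div hp.ne']; unfold windingBound; field_simp
  unfold windingPotential windingProfile
  linarith

lemma freeStep_windingPotential (hq : 0 < q) (hpq : q < p) (z x : ZMod n) :
    freeStep q p (windingPotential p q z) x =
      windingPotential p q z x + (p - q) - (if x = z then n * (p - q) else 0) := by
  have hp := hq.trans hpq
  obtain ⟨y, rfl⟩ : ∃ y, x = y + 1 + z := ⟨x - z - 1, by ring⟩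
  have hsucc := apply_val_add_one (windingProfile_self (n := n) hq hpq)
  simp only [freeStep, windingPotential, add_sub_cancel_right, add_eq_right,
    show y + 1 + z - 1 - z = y by ring, show y + 1 + z + 1 - z = y + 1 + 1 by ring]
  rw [hsucc (y + 1)]
  have hρ : p * (q / p) = q := by field_simp
  have hG := windingProfile_self (n := n) hq hpq
  rcases val_add_one_cases y with hval | ⟨hzero, hwrap⟩
  · rw [if_neg fun h => by simp [h] at hval, hval]
    simp only [windingProfile]
    push_cast
    linear_combination (n / (1 - (q / p) ^ n)) * (q / p) ^ y.val * (q / p - 1) * hρ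
  · rw [if_pos hzero, hzero, ZMod.val_zero]
    have hn : (n : ℝ) = y.val + 1 := by exact_mod_cast hwrap.symm
    have hpow : (q / p) ^ n = (q / p) ^ y.val * (q / p) := by rw [← pow_succ, hwrap]
    simp only [windingProfile] at hG ⊢
    generalize (n : ℝ) / (1 - (q / p) ^ n) = C at hG ⊢
    rw [hn, hpow] at hG
    rw [hn]
    push_cast at hG ⊢
    linear_combination p * hG - C * (q / p) ^ y.val * hρ + C * hρ

lemma sum_windingPotential_mul_sq_le (hq : 0 < q) (hpq : q < p) (hpq1 : p + q ≤ 1)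
    (z : ZMod n) (g : ZMod n → ℝ) :
    ∑ y, windingPotential p q z y * freeStep p q g y ^ 2 ≤
      ∑ y, windingPotential p q z y * g y ^ 2 + (p - q) * sqNorm g - n * (p - q) * g z ^ 2 := by
  refine (sum_mul_sq_freeStep_le (hq.trans hpq).le hq.le hpq1
    (windingPotential_nonneg hq hpq z) g).trans_eq ?_
  simp only [freeStep_windingPotential hq hpq, sub_mul (_ + _), add_mul, ite_mul, zero_mul,
    Finset.sum_add_distrib, Finset.sum_sub_distrib, Finset.sum_ite_eq', Finset.mem_univ, if_true,
    sqNorm, Finset.mul_sum]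

lemma sum_sub_windingPotential_mul_sq_le (hq : 0 < q) (hpq : q < p) (hpq1 : p + q ≤ 1)
    (z : ZMod n) (g : ZMod n → ℝ) :
    ∑ y, (windingBound p q * n - windingPotential p q z y) * freeStep p q g y ^ 2 ≤
      ∑ y, (windingBound p q * n - windingPotential p q z y) * g y ^ 2
        - (p - q) * sqNorm g + n * (p - q) * g z ^ 2 := by
  refine (sum_mul_sq_freeStep_le (hq.trans hpq).le hq.le hpq1
    (fun y => sub_nonneg.2 (windingPotential_le hq hpq z y)) g).trans_eq ?_
  have hconst : freeStep q p (fun _ : ZMod n => windingBound p q * n) =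
      fun _ => windingBound p q * n := by funext; unfold freeStep; ring
  have hstep : ∀ x, freeStep q p (fun y => windingBound p q * n - windingPotential p q z y) x =
      windingBound p q * n - windingPotential p q z x - (p - q)
        + (if x = z then n * (p - q) else 0) := fun x => by
    have h := congrFun (freeStep_sub q p (fun _ => windingBound p q * n) (windingPotential p q z)) x
    rw [hconst, Pi.sub_apply, freeStep_windingPotential hq hpq] at h
    exact h.trans (by ring)
  simp only [hstep, sub_mul (_ - _), add_mul, ite_mul, zero_mul, Finset.sum_add_distrib,
    Finset.sum_sub_distrib, Finset.sum_ite_eq', Finset.mem_univ, if_true, sqNorm, Finset.mul_sum]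

end Potential

/-! ### Observability and driven evolutions -/

section Observability

variable {n : ℕ} [NeZero n] {p q : ℝ}

/-- A free walk that dissipates little has to be seen at any given vertex `z`. -/
lemma mul_sqNorm_le_sum_sq_iterate (hq : 0 < q) (hpq : q < p) (hpq1 : p + q ≤ 1) (T : ℕ)
    (g : ZMod n → ℝ) (z : ZMod n) :
    ((p - q) * T - windingBound p q * n) * sqNorm g ≤
      n * (p - q) * ∑ t ∈ Finset.range T, (freeStep p q)^[t] g z ^ 2
        + (p - q) * T * ∑ t ∈ Finset.range T, freeDissipation p q ((freeStep p q)^[t] g) := by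
  set F := fun y => windingBound p q * n - windingPotential p q z y
  set D := ∑ t ∈ Finset.range T, freeDissipation p q ((freeStep p q)^[t] g)
  have hlow : ∀ t ∈ Finset.range T, sqNorm g - D ≤ sqNorm ((freeStep p q)^[t] g) := fun t ht => by
    have hsum : ∑ s ∈ Finset.range t, freeDissipation p q ((freeStep p q)^[s] g) ≤ D :=
      Finset.sum_le_sum_of_subset_of_nonneg (Finset.range_mono (Finset.mem_range.1 ht).le)
        fun s _ _ => freeDissipation_nonneg (hq.trans hpq).le hq.le hpq1 _
    linarith [sum_freeDissipation_iterate p q g t]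
  have hstep : ∀ t ∈ Finset.range T, (p - q) * (sqNorm g - D) ≤
      (∑ y, F y * (freeStep p q)^[t] g y ^ 2 - ∑ y, F y * (freeStep p q)^[t + 1] g y ^ 2)
        + n * (p - q) * (freeStep p q)^[t] g z ^ 2 := fun t ht => by
    have h := sum_sub_windingPotential_mul_sq_le hq hpq hpq1 z ((freeStep p q)^[t] g)
    rw [Function.iterate_succ_apply']
    linarith [mul_le_mul_of_nonneg_left (hlow t ht) (sub_pos.2 hpq).le]
  have htotal := Finset.sum_le_sum hstep
  rw [Finset.sum_add_distrib, Finset.sum_range_sub' fun t => ∑ y, F y * (freeStep p q)^[t] g y ^ 2,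
    Finset.sum_const, Finset.card_range, nsmul_eq_mul, ← Finset.mul_sum] at htotal
  have hfinal : 0 ≤ ∑ y, F y * (freeStep p q)^[T] g y ^ 2 := Finset.sum_nonneg fun y _ =>
    mul_nonneg (sub_nonneg.2 (windingPotential_le hq hpq z y)) (sq_nonneg _)
  have hinit : ∑ y, F y * (freeStep p q)^[0] g y ^ 2 ≤ windingBound p q * n * sqNorm g := by
    unfold sqNorm
    rw [Finset.mul_sum]
    exact Finset.sum_le_sum fun y _ => mul_le_mul_of_nonneg_right
      (sub_le_self _ (windingPotential_nonneg hq hpq z y)) (sq_nonneg _)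
  linarith

/-- `e` is the free evolution from zero initial data, driven by the source `S`. -/
structure IsDriven (p q : ℝ) (S e : ℕ → ZMod n → ℝ) : Prop where
  zero : e 0 = 0
  succ : ∀ t, e (t + 1) = freeStep p q (e t) + S t

/-- A bound for the work that the source `S` performs on the driven evolution `e` at time `t`. -/
def sourceWork (S e : ℕ → ZMod n → ℝ) (t : ℕ) : ℝ := ∑ y, |e (t + 1) y * S t y|

lemma sourceWork_nonneg (S e : ℕ → ZMod n → ℝ) (t : ℕ) : 0 ≤ sourceWork S e t :=
  Finset.sum_nonneg fun _ _ => abs_nonneg _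

lemma sq_sum_sourceWork_le {S : ℕ → ZMod n → ℝ} (e : ℕ → ZMod n → ℝ) {H : Finset (ZMod n)}
    (hS : ∀ t, ∀ y ∉ H, S t y = 0) (T : ℕ) :
    (∑ t ∈ Finset.range T, sourceWork S e t) ^ 2 ≤
      (∑ t ∈ Finset.range T, ∑ z ∈ H, e (t + 1) z ^ 2) * ∑ t ∈ Finset.range T, sqNorm (S t) := by
  have hwork : ∀ t, sourceWork S e t = ∑ y ∈ H, |e (t + 1) y| * |S t y| := fun t => by
    simp only [sourceWork, abs_mul]
    exact (Finset.sum_subset (Finset.subset_univ H) fun y _ hy => by simp [hS t y hy]).symm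
  have hsource : ∀ t, ∑ y ∈ H, S t y ^ 2 ≤ sqNorm (S t) := fun t =>
    Finset.sum_le_sum_of_subset_of_nonneg (Finset.subset_univ H) fun _ _ _ => sq_nonneg _
  simp only [hwork, ← Finset.sum_product']
  refine (Finset.sum_mul_sq_le_sq_mul_sq _ _ _).trans ?_
  simp only [sq_abs]
  rw [Finset.sum_product, Finset.sum_product]
  exact mul_le_mul_of_nonneg_left (Finset.sum_le_sum fun t _ => hsource t) (by positivity)

namespace IsDriven

variable {S e : ℕ → ZMod n → ℝ}

lemma sum_mul_sq_succ_le (h : IsDriven p q S e) {F : ZMod n → ℝ} {M : ℝ} (hF0 : ∀ x, 0 ≤ F x)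
    (hFM : ∀ x, F x ≤ M) (t : ℕ) :
    ∑ y, F y * e (t + 1) y ^ 2 ≤
      ∑ y, F y * freeStep p q (e t) y ^ 2 + 2 * M * sourceWork S e t := by
  rw [sourceWork, Finset.mul_sum, ← Finset.sum_add_distrib]
  refine Finset.sum_le_sum fun y _ => ?_
  have hfree : freeStep p q (e t) y = e (t + 1) y - S t y := by
    rw [h.succ, Pi.add_apply, add_sub_cancel_right]
  have hwork : F y * (e (t + 1) y * S t y) ≤ M * |e (t + 1) y * S t y| :=
    (mul_le_mul_of_nonneg_left (le_abs_self _) (hF0 y)).trans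
      (mul_le_mul_of_nonneg_right (hFM y) (abs_nonneg _))
  rw [hfree]
  nlinarith [mul_nonneg (hF0 y) (sq_nonneg (S t y))]

lemma sum_freeDissipation_add_sqNorm_le (h : IsDriven p q S e) (T : ℕ) :
    ∑ t ∈ Finset.range T, freeDissipation p q (e t) + sqNorm (e T) ≤
      2 * ∑ t ∈ Finset.range T, sourceWork S e t := by
  have hstep : ∀ t ∈ Finset.range T, freeDissipation p q (e t) ≤
      (sqNorm (e t) - sqNorm (e (t + 1))) + 2 * sourceWork S e t := fun t _ => by
    have hone := h.sum_mul_sq_succ_le (F := 1) (M := 1) (fun _ => zero_le_one) (fun _ => le_rfl) t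
    simp only [Pi.one_apply, one_mul] at hone
    simp only [freeDissipation, sqNorm]
    linarith
  have htotal := Finset.sum_le_sum hstep
  rw [Finset.sum_add_distrib, Finset.sum_range_sub' fun t => sqNorm (e t), ← Finset.mul_sum,
    h.zero, show sqNorm (0 : ZMod n → ℝ) = 0 by simp [sqNorm]] at htotal
  linarith

lemma sqNorm_le (h : IsDriven p q S e) (hp : 0 ≤ p) (hq : 0 ≤ q) (hpq1 : p + q ≤ 1) {t T : ℕ}
    (htT : t ≤ T) : sqNorm (e t) ≤ 2 * ∑ s ∈ Finset.range T, sourceWork S e s := by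
  have hdiss : 0 ≤ ∑ s ∈ Finset.range t, freeDissipation p q (e s) :=
    Finset.sum_nonneg fun s _ => freeDissipation_nonneg hp hq hpq1 _
  have hwork : ∑ s ∈ Finset.range t, sourceWork S e s ≤ ∑ s ∈ Finset.range T, sourceWork S e s :=
    Finset.sum_le_sum_of_subset_of_nonneg (Finset.range_mono htT)
      fun s _ _ => sourceWork_nonneg S e s
  linarith [h.sum_freeDissipation_add_sqNorm_le t]

lemma sum_sq_le (h : IsDriven p q S e) (hq : 0 < q) (hpq : q < p) (hpq1 : p + q ≤ 1) (T : ℕ)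
    (z : ZMod n) :
    ∑ t ∈ Finset.range T, e t z ^ 2 ≤
      2 * (T / n + windingBound p q / (p - q)) * ∑ t ∈ Finset.range T, sourceWork S e t := by
  have hv : 0 < p - q := sub_pos.2 hpq
  have hn : (0 : ℝ) < n := by exact_mod_cast NeZero.pos n
  set F := windingPotential p q z
  set W := ∑ t ∈ Finset.range T, sourceWork S e t
  have hstep : ∀ t ∈ Finset.range T, n * (p - q) * e t z ^ 2 ≤
      (∑ y, F y * e t y ^ 2 - ∑ y, F y * e (t + 1) y ^ 2) + (p - q) * (2 * W)
        + 2 * (windingBound p q * n) * sourceWork S e t := fun t ht => by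
    have hsource := h.sum_mul_sq_succ_le (windingPotential_nonneg hq hpq z)
      (windingPotential_le hq hpq z) t
    have hfree := sum_windingPotential_mul_sq_le hq hpq hpq1 z (e t)
    have hnorm := mul_le_mul_of_nonneg_left
      (h.sqNorm_le (hq.trans hpq).le hq.le hpq1 (Finset.mem_range.1 ht).le) hv.le
    linarith
  have htotal := Finset.sum_le_sum hstep
  rw [Finset.sum_add_distrib, Finset.sum_add_distrib,
    Finset.sum_range_sub' fun t => ∑ y, F y * e t y ^ 2, Finset.sum_const, Finset.card_range,
    nsmul_eq_mul, ← Finset.mul_sum, ← Finset.mul_sum, h.zero] at htotal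
  have hinit : ∑ y, F y * (0 : ZMod n → ℝ) y ^ 2 = 0 := by simp
  have hfinal : 0 ≤ ∑ y, F y * e T y ^ 2 := Finset.sum_nonneg fun y _ =>
    mul_nonneg (windingPotential_nonneg hq hpq z y) (sq_nonneg _)
  have hconst : n * (p - q) * (2 * (T / n + windingBound p q / (p - q)) * W) =
      T * ((p - q) * (2 * W)) + 2 * (windingBound p q * n) * W := by field_simp
  exact le_of_mul_le_mul_left (by linarith) (mul_pos hn hv)

/-- The work is quadratic in the source, although a priori it is only of the order of the source
times the driven evolution: the latter is in turn controlled by the work. -/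
lemma sum_sourceWork_le (h : IsDriven p q S e) (hq : 0 < q) (hpq : q < p) (hpq1 : p + q ≤ 1)
    {H : Finset (ZMod n)} (hS : ∀ t, ∀ y ∉ H, S t y = 0) (T : ℕ) :
    ∑ t ∈ Finset.range T, sourceWork S e t ≤
      H.card * (2 * (T / n + windingBound p q / (p - q) + 1))
        * ∑ t ∈ Finset.range T, sqNorm (S t) := by
  set W := ∑ t ∈ Finset.range T, sourceWork S e t with hW
  set B := 2 * (T / n + windingBound p q / (p - q) + 1)
  set Y := ∑ t ∈ Finset.range T, sqNorm (S t)
  have hW0 : 0 ≤ W := Finset.sum_nonneg fun t _ => sourceWork_nonneg S e t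
  have hY0 : 0 ≤ Y := Finset.sum_nonneg fun t _ => sqNorm_nonneg _
  have hB0 : 0 ≤ B := by
    have := windingBound_pos hq hpq
    have := sub_pos.2 hpq
    positivity
  have hpoint : ∀ z ∈ H, ∑ t ∈ Finset.range T, e (t + 1) z ^ 2 ≤ B * W := fun z _ => by
    have hshift := Finset.sum_range_succ' (fun t => e t z ^ 2) T
    rw [Finset.sum_range_succ, h.zero] at hshift
    simp only [Pi.zero_apply] at hshift
    have hlast := (sq_le_sqNorm (e T) z).trans (h.sqNorm_le (hq.trans hpq).le hq.le hpq1 le_rfl)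
    linarith [h.sum_sq_le hq hpq hpq1 T z]
  have hhubs : ∑ t ∈ Finset.range T, ∑ z ∈ H, e (t + 1) z ^ 2 ≤ H.card * B * W := by
    rw [Finset.sum_comm]
    refine (Finset.sum_le_sum hpoint).trans_eq ?_
    rw [Finset.sum_const, nsmul_eq_mul]
    ring
  have hcauchy := sq_sum_sourceWork_le e hS T
  rcases hW0.eq_or_lt with hzero | hpos
  · rw [← hzero]; positivity
  · exact le_of_mul_le_mul_left (by nlinarith) hpos

end IsDriven

end Observability

/-! ### Dissipation of the perturbed chain -/

section HubDissipation

variable {n : ℕ}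

/-- Row-vector action `f ↦ f P` of the perturbed chain. The hub set is not mentioned since `μ` is
the identity off the hubs. -/
def hubStep (p q a : ℝ) (μ : ZMod n → ZMod n) (f : ZMod n → ℝ) : ZMod n → ℝ :=
  freeStep p q f + a • (f ∘ μ - f)

/-- The part of the `ℓ²` dissipation of the perturbed chain at the vertex `y` that is positive
whether or not the chain is lazy. -/
def localVariation (μ : ZMod n → ZMod n) (f : ZMod n → ℝ) (y : ZMod n) : ℝ :=
  (f (y - 1) - f (y + 1)) ^ 2 + (f (y + 1) - f (μ y)) ^ 2

lemma localVariation_nonneg (μ : ZMod n → ZMod n) (f : ZMod n → ℝ) (y : ZMod n) :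
    0 ≤ localVariation μ f y := by
  unfold localVariation; positivity

/-- Walking back from `x` until one leaves the hub set. -/
lemma sq_fwdDiff_le_sum_localVariation {H : Finset (ZMod n)} {μ : ZMod n → ZMod n}
    (hμ : ∀ x ∉ H, μ x = x) (f : ZMod n → ℝ) (j : ℕ) (x : ZMod n)
    (hx : ∃ i ≤ j, x - (i : ZMod n) ∉ H) :
    fwdDiff 1 f x ^ 2 ≤
      2 ^ (j + 1) * ∑ i ∈ Finset.range (j + 1), localVariation μ f (x - (i : ZMod n)) := by
  have hx0 := localVariation_nonneg μ f x
  by_cases hxH : x ∈ H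
  · obtain ⟨i, hij, hi⟩ := hx
    rcases i with - | i
    · simp [hxH] at hi
    obtain ⟨j, rfl⟩ := Nat.exists_eq_succ_of_ne_zero (Nat.ne_zero_of_lt hij)
    have hshift : ∀ m : ℕ, x - ((m + 1 : ℕ) : ZMod n) = x - 1 - (m : ZMod n) := fun m => by
      push_cast; ring
    have ih := sq_fwdDiff_le_sum_localVariation hμ f j (x - 1)
      ⟨i, Nat.succ_le_succ_iff.1 hij, hshift i ▸ hi⟩
    have hback : fwdDiff 1 f x ^ 2 ≤ 2 * fwdDiff 1 f (x - 1) ^ 2 + 2 * localVariation μ f x := by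
      simp only [fwdDiff, localVariation, sub_add_cancel]
      nlinarith [sq_nonneg (f x - f (x - 1) - (f (x - 1) - f (x + 1))),
        sq_nonneg (f (x + 1) - f (μ x))]
    have hone : (1 : ℝ) ≤ 2 ^ (j + 1) := one_le_pow₀ one_le_two
    rw [Finset.sum_range_succ', Nat.cast_zero, sub_zero, pow_succ' (2 : ℝ), mul_add]
    simp only [hshift]
    linarith [le_mul_of_one_le_left hx0 hone]
  · rw [Finset.sum_range_succ', Nat.cast_zero, sub_zero]
    calc fwdDiff 1 f x ^ 2 ≤ localVariation μ f x := by
          rw [localVariation, hμ x hxH]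
          exact le_add_of_nonneg_left (sq_nonneg _)
      _ ≤ ∑ i ∈ Finset.range j, localVariation μ f (x - ((i + 1 : ℕ) : ZMod n))
            + localVariation μ f x :=
          le_add_of_nonneg_left (Finset.sum_nonneg fun _ _ => localVariation_nonneg ..)
      _ ≤ _ := le_mul_of_one_le_left
          (add_nonneg (Finset.sum_nonneg fun _ _ => localVariation_nonneg ..) hx0)
          (one_le_pow₀ one_le_two)

lemma exists_sub_natCast_notMem {H : Finset (ZMod n)} (hH : H.card < n) (x : ZMod n) :
    ∃ i ≤ H.card, x - (i : ZMod n) ∉ H := by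
  by_contra! hcon
  have hinj : Set.InjOn (fun i : ℕ => x - (i : ZMod n)) (Finset.range (H.card + 1)) := by
    intro i hi j hj hij
    simp only [Finset.coe_range, Set.mem_Iio] at hi hj
    have hcast : (i : ZMod n) = (j : ZMod n) := sub_right_injective hij
    rwa [ZMod.natCast_eq_natCast_iff', Nat.mod_eq_of_lt (by omega),
      Nat.mod_eq_of_lt (by omega)] at hcast
  have hcard := Finset.card_le_card_of_injOn (fun i : ℕ => x - (i : ZMod n))
    (fun i hi => hcon i (Nat.lt_succ_iff.1 (Finset.mem_range.1 hi))) hinj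
  simp at hcard

variable [NeZero n]

lemma sum_localVariation_le {p q a : ℝ} (hp : 0 ≤ p) (hq : 0 ≤ q) (ha : 0 ≤ a)
    (hpqa : p + q + a ≤ 1) {μ : ZMod n → ZMod n} (hμ : Function.Involutive μ) (f : ZMod n → ℝ) :
    min (p * q) (q * a) * ∑ y, localVariation μ f y ≤ sqNorm f - sqNorm (hubStep p q a μ f) := by
  have hmatch : ∑ y, f (μ y) ^ 2 = ∑ y, f y ^ 2 :=
    Equiv.sum_comp (Function.Involutive.toPerm μ hμ) (fun y => f y ^ 2)
  have hnorm : sqNorm f =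
      ∑ y, (freeStep p q (fun x => f x ^ 2) y + a * (f (μ y) ^ 2 - f y ^ 2)) := by
    rw [Finset.sum_add_distrib, sum_freeStep, ← Finset.mul_sum, Finset.sum_sub_distrib, hmatch,
      sub_self, mul_zero, add_zero, sqNorm]
  rw [hnorm, sqNorm, ← Finset.sum_sub_distrib, Finset.mul_sum]
  refine Finset.sum_le_sum fun y _ => ?_
  have hvariance : freeStep p q (fun x => f x ^ 2) y + a * (f (μ y) ^ 2 - f y ^ 2)
      - hubStep p q a μ f y ^ 2 =
      p * q * (f (y - 1) - f (y + 1)) ^ 2 + q * a * (f (y + 1) - f (μ y)) ^ 2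
        + (p * a * (f (y - 1) - f (μ y)) ^ 2 + p * (1 - p - q - a) * (f (y - 1) - f y) ^ 2
        + q * (1 - p - q - a) * (f (y + 1) - f y) ^ 2
        + a * (1 - p - q - a) * (f (μ y) - f y) ^ 2) := by
    simp only [hubStep, freeStep, Pi.add_apply, Pi.smul_apply, Pi.sub_apply, Function.comp_apply,
      smul_eq_mul]
    ring
  have hr : 0 ≤ 1 - p - q - a := by linarith
  rw [hvariance, localVariation, mul_add]
  exact le_add_of_le_of_nonneg
    (add_le_add (mul_le_mul_of_nonneg_right (min_le_left _ _) (sq_nonneg _))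
      (mul_le_mul_of_nonneg_right (min_le_right _ _) (sq_nonneg _))) (by positivity)

lemma sqNorm_fwdDiff_one_le {H : Finset (ZMod n)} (hH : H.card < n) {μ : ZMod n → ZMod n}
    (hμ : ∀ x ∉ H, μ x = x) (f : ZMod n → ℝ) :
    sqNorm (fwdDiff 1 f) ≤ 2 ^ (H.card + 1) * (H.card + 1) * ∑ y, localVariation μ f y := by
  calc sqNorm (fwdDiff 1 f)
      ≤ ∑ x, 2 ^ (H.card + 1)
          * ∑ i ∈ Finset.range (H.card + 1), localVariation μ f (x - (i : ZMod n)) :=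
        Finset.sum_le_sum fun x _ => sq_fwdDiff_le_sum_localVariation hμ f H.card x
          (exists_sub_natCast_notMem hH x)
    _ = 2 ^ (H.card + 1) * (H.card + 1) * ∑ y, localVariation μ f y := by
        rw [← Finset.mul_sum, Finset.sum_comm]
        simp only [sum_comp_sub_right (localVariation μ f), Finset.sum_const, Finset.card_range,
          nsmul_eq_mul]
        push_cast; ring

lemma sqNorm_comp_sub_le (μ : ZMod n → ZMod n) (f : ZMod n → ℝ) :
    sqNorm (f ∘ μ - f) ≤ 2 * ∑ y, localVariation μ f y + 2 * sqNorm (fwdDiff 1 f) := by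
  simp only [sqNorm, Finset.mul_sum, ← Finset.sum_add_distrib]
  refine Finset.sum_le_sum fun y _ => ?_
  simp only [localVariation, fwdDiff, Pi.sub_apply, Function.comp_apply]
  nlinarith [sq_nonneg (f (y + 1) - f (μ y) + (f (y + 1) - f y)), sq_nonneg (f (y - 1) - f (y + 1))]

lemma exists_sqNorm_fwdDiff_add_sqNorm_comp_sub_le (k : ℕ) {p q a : ℝ} (hp : 0 < p) (hq : 0 < q)
    (ha : 0 < a) (hpqa : p + q + a ≤ 1) :
    ∃ C : ℝ, 0 < C ∧ ∀ (n : ℕ) [NeZero n], 2 * k < n →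
      ∀ (H : Finset (ZMod n)) (μ : ZMod n → ZMod n), IsConfig n k H μ → ∀ f : ZMod n → ℝ,
        sqNorm (fwdDiff 1 f) + sqNorm (f ∘ μ - f) ≤
          C * (sqNorm f - sqNorm (hubStep p q a μ f)) := by
  set c := min (p * q) (q * a)
  have hc : 0 < c := lt_min (mul_pos hp hq) (mul_pos hq ha)
  set A : ℝ := 2 ^ (2 * k + 1) * ((2 * k : ℕ) + 1)
  have : 0 ≤ A := by positivity
  refine ⟨(3 * A + 2) / c, by positivity, ?_⟩
  rintro n _ hn H μ ⟨hcard, -, hinv, -, hoff⟩ f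
  have hvar := sum_localVariation_le hp.le hq.le ha.le hpqa hinv f
  have hgrad := sqNorm_fwdDiff_one_le (hcard ▸ hn) hoff f
  rw [hcard] at hgrad
  have hjump := sqNorm_comp_sub_le μ f
  rw [div_mul_eq_mul_div, le_div_iff₀ hc]
  calc (sqNorm (fwdDiff 1 f) + sqNorm (f ∘ μ - f)) * c
      ≤ (3 * A + 2) * ∑ y, localVariation μ f y * c := by
        rw [← Finset.sum_mul, ← mul_assoc]
        exact mul_le_mul_of_nonneg_right (by linarith) hc.le
    _ ≤ (3 * A + 2) * (sqNorm f - sqNorm (hubStep p q a μ f)) := by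
        rw [← Finset.sum_mul, mul_comm _ c]
        exact mul_le_mul_of_nonneg_left hvar (by positivity)

end HubDissipation

/-! ### The energy inequality -/

section EnergyInequality

variable {n : ℕ} {p q a : ℝ}

/-- The difference at time `t` between the perturbed and the free evolution of `f`. -/
def hubDefect (p q a : ℝ) (μ : ZMod n → ZMod n) (f : ZMod n → ℝ) (t : ℕ) : ZMod n → ℝ :=
  (hubStep p q a μ)^[t] f - (freeStep p q)^[t] f

/-- What the matching edges feed at time `t` into the evolution of `f`. -/
def hubSource (p q a : ℝ) (μ : ZMod n → ZMod n) (f : ZMod n → ℝ) (t : ℕ) : ZMod n → ℝ :=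
  a • ((hubStep p q a μ)^[t] f ∘ μ - (hubStep p q a μ)^[t] f)

lemma isDriven_hubDefect (p q a : ℝ) (μ : ZMod n → ZMod n) (f : ZMod n → ℝ) :
    IsDriven p q (hubSource p q a μ f) (hubDefect p q a μ f) where
  zero := sub_self _
  succ t := by
    simp only [hubDefect, hubSource, Function.iterate_succ_apply', freeStep_sub]
    rw [hubStep]; abel

variable [NeZero n]

lemma sum_sq_hubDefect_add_sum_freeDissipation_le (hq : 0 < q) (hpq : q < p) (ha : 0 ≤ a)
    (hpqa : p + q + a ≤ 1) {H : Finset (ZMod n)} {μ : ZMod n → ZMod n} (hμ : ∀ x ∉ H, μ x = x)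
    (f : ZMod n → ℝ) (T : ℕ) (z : ZMod n) :
    ∑ t ∈ Finset.range T, hubDefect p q a μ f t z ^ 2
        + ∑ t ∈ Finset.range T, freeDissipation p q (hubDefect p q a μ f t) ≤
      H.card * (2 * (T / n + windingBound p q / (p - q) + 1)) ^ 2
        * ∑ t ∈ Finset.range T,
          sqNorm ((hubStep p q a μ)^[t] f ∘ μ - (hubStep p q a μ)^[t] f) := by
  have hdriven := isDriven_hubDefect p q a μ f
  have hpq1 : p + q ≤ 1 := by linarith
  set B := 2 * (T / n + windingBound p q / (p - q) + 1)
  set W := ∑ t ∈ Finset.range T, sourceWork (hubSource p q a μ f) (hubDefect p q a μ f) t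
  have hB : 0 ≤ B := by
    have := windingBound_pos hq hpq
    have := sub_pos.2 hpq
    positivity
  have hwork := hdriven.sum_sourceWork_le hq hpq hpq1 (H := H)
    (fun t y hy => by simp [hubSource, hμ y hy]) T
  have hsource : ∀ t ∈ Finset.range T, sqNorm (hubSource p q a μ f t) ≤
      sqNorm ((hubStep p q a μ)^[t] f ∘ μ - (hubStep p q a μ)^[t] f) := fun t _ =>
    Finset.sum_le_sum fun y _ => by
      rw [hubSource, Pi.smul_apply, smul_eq_mul, mul_pow]
      exact mul_le_of_le_one_left (sq_nonneg _) (pow_le_one₀ ha (by linarith))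
  have hpoint := hdriven.sum_sq_le hq hpq hpq1 T z
  have hdiss := hdriven.sum_freeDissipation_add_sqNorm_le T
  calc _ ≤ B * W := by linarith [sqNorm_nonneg (hubDefect p q a μ f T)]
    _ ≤ B * (H.card * B * ∑ t ∈ Finset.range T, sqNorm (hubSource p q a μ f t)) :=
        mul_le_mul_of_nonneg_left hwork hB
    _ = H.card * B ^ 2 * ∑ t ∈ Finset.range T, sqNorm (hubSource p q a μ f t) := by ring
    _ ≤ _ := mul_le_mul_of_nonneg_left (Finset.sum_le_sum hsource) (by positivity)

lemma exists_sum_sq_hubDefect_le (k K : ℕ) (hq : 0 < q) (hpq : q < p) (ha : 0 < a)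
    (hpqa : p + q + a ≤ 1) :
    ∃ C : ℝ, 0 < C ∧ ∀ (n : ℕ) [NeZero n], 2 * k < n →
      ∀ (H : Finset (ZMod n)) (μ : ZMod n → ZMod n), IsConfig n k H μ → ∀ f : ZMod n → ℝ,
        (∀ z, ∑ t ∈ Finset.range (K * n), hubDefect p q a μ f t z ^ 2 ≤
          C * (sqNorm f - sqNorm ((hubStep p q a μ)^[K * n] f))) ∧
        ∑ t ∈ Finset.range (K * n),
            sqNorm ((hubStep p q a μ)^[t] f ∘ μ - (hubStep p q a μ)^[t] f) ≤
          C * (sqNorm f - sqNorm ((hubStep p q a μ)^[K * n] f)) ∧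
        ∑ t ∈ Finset.range (K * n), freeDissipation p q ((freeStep p q)^[t] f) ≤
          C * (sqNorm f - sqNorm ((hubStep p q a μ)^[K * n] f)) := by
  have hp := hq.trans hpq
  obtain ⟨C, hC, hstep⟩ := exists_sqNorm_fwdDiff_add_sqNorm_comp_sub_le k hp hq ha hpqa
  set B := ((2 * k : ℕ) : ℝ) * (2 * (K + windingBound p q / (p - q) + 1)) ^ 2
  have hB : 0 ≤ B := by positivity
  refine ⟨(12 + 2 * B + 1) * C, by positivity, fun n _ hn H μ hc f => ?_⟩
  set g := fun t => (hubStep p q a μ)^[t] f with hg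
  set Δ := sqNorm f - sqNorm (g (K * n)) with hΔ
  set G := ∑ t ∈ Finset.range (K * n), sqNorm (fwdDiff 1 (g t))
  set J := ∑ t ∈ Finset.range (K * n), sqNorm (g t ∘ μ - g t)
  have hG : 0 ≤ G := Finset.sum_nonneg fun _ _ => sqNorm_nonneg _
  have hJ : 0 ≤ J := Finset.sum_nonneg fun _ _ => sqNorm_nonneg _
  have htotal : G + J ≤ C * Δ := by
    rw [← Finset.sum_add_distrib, hΔ, show f = g 0 from rfl,
      ← Finset.sum_range_sub' fun t => sqNorm (g t), Finset.mul_sum]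
    refine Finset.sum_le_sum fun t _ => ?_
    simpa only [hg, Function.iterate_succ_apply'] using hstep n hn H μ hc (g t)
  have hdefect : ∀ z, ∑ t ∈ Finset.range (K * n), hubDefect p q a μ f t z ^ 2
      + ∑ t ∈ Finset.range (K * n), freeDissipation p q (hubDefect p q a μ f t) ≤ B * J := by
    have h := sum_sq_hubDefect_add_sum_freeDissipation_le hq hpq ha.le hpqa hc.2.2.2.2 f (K * n)
    rwa [hc.1, Nat.cast_mul K n, mul_div_cancel_right₀ _ (NeZero.ne (n : ℝ))] at h
  have hpq1 : p + q ≤ 1 := by linarith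
  have hdiss : 0 ≤ ∑ t ∈ Finset.range (K * n), freeDissipation p q (hubDefect p q a μ f t) :=
    Finset.sum_nonneg fun t _ => freeDissipation_nonneg hp.le hq.le hpq1 _
  have hBJ : B * J ≤ B * (C * Δ) := mul_le_mul_of_nonneg_left (by linarith) hB
  have hBC : 0 ≤ B * (C * Δ) := mul_nonneg hB (by linarith)
  refine ⟨fun z => by linarith [hdefect z], by linarith, ?_⟩
  have hfree : ∀ t ∈ Finset.range (K * n), freeDissipation p q ((freeStep p q)^[t] f) ≤
      12 * sqNorm (fwdDiff 1 (g t)) + 2 * freeDissipation p q (hubDefect p q a μ f t) :=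
    fun t _ => by
      have h := freeDissipation_sub_le hp.le hq.le hpq1 (g t) (hubDefect p q a μ f t)
      rw [show g t - hubDefect p q a μ f t = (freeStep p q)^[t] f from sub_sub_cancel _ _] at h
      linarith [freeDissipation_le_sqNorm_fwdDiff hp.le hq.le hpq1 (g t)]
  refine (Finset.sum_le_sum hfree).trans ?_
  rw [Finset.sum_add_distrib, ← Finset.mul_sum, ← Finset.mul_sum]
  have := Finset.sum_nonneg fun t (_ : t ∈ Finset.range (K * n)) =>
    sq_nonneg (hubDefect p q a μ f t 0)
  linarith [hdefect 0]

lemma sqNorm_fwdDiff_le_of_windingBound_le (hq : 0 < q) (hpq : q < p) (hpq1 : p + q ≤ 1) {K : ℕ}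
    (hK : 1 + windingBound p q ≤ (p - q) * K) (f : ZMod n → ℝ) (d z : ZMod n) :
    sqNorm (fwdDiff d f) ≤
      (p - q) * ∑ t ∈ Finset.range (K * n), fwdDiff d ((freeStep p q)^[t] f) z ^ 2
        + (p - q) * K *
          (4 * ∑ t ∈ Finset.range (K * n), freeDissipation p q ((freeStep p q)^[t] f)) := by
  have hn : (0 : ℝ) < n := by exact_mod_cast NeZero.pos n
  have : 0 < p - q := sub_pos.2 hpq
  have hcomm : ∀ t, (freeStep p q)^[t] (fwdDiff d f) = fwdDiff d ((freeStep p q)^[t] f) := fun t =>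
    (freeStep_commute_fwdDiff p q d).iterate_left t f
  have hobs := mul_sqNorm_le_sum_sq_iterate hq hpq hpq1 (K * n) (fwdDiff d f) z
  simp only [hcomm, Nat.cast_mul] at hobs
  have hdiss : ∑ t ∈ Finset.range (K * n), freeDissipation p q (fwdDiff d ((freeStep p q)^[t] f)) ≤
      4 * ∑ t ∈ Finset.range (K * n), freeDissipation p q ((freeStep p q)^[t] f) := by
    rw [Finset.mul_sum]
    exact Finset.sum_le_sum fun t _ =>
      freeDissipation_fwdDiff_le (hq.trans hpq).le hq.le hpq1 _ _
  have hgain : n * sqNorm (fwdDiff d f) ≤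
      ((p - q) * (K * n) - windingBound p q * n) * sqNorm (fwdDiff d f) :=
    mul_le_mul_of_nonneg_right (by nlinarith) (sqNorm_nonneg _)
  have hscaled := mul_le_mul_of_nonneg_left hdiss (by positivity : 0 ≤ (p - q) * (K * n))
  exact le_of_mul_le_mul_left (by linarith) hn

lemma sq_fwdDiff_iterate_freeStep_le (μ : ZMod n → ZMod n) (f : ZMod n → ℝ) (t : ℕ) (z : ZMod n) :
    fwdDiff (μ z - z) ((freeStep p q)^[t] f) z ^ 2 ≤
      3 * (sqNorm ((hubStep p q a μ)^[t] f ∘ μ - (hubStep p q a μ)^[t] f)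
        + hubDefect p q a μ f t (μ z) ^ 2 + hubDefect p q a μ f t z ^ 2) := by
  have hjump := sq_le_sqNorm ((hubStep p q a μ)^[t] f ∘ μ - (hubStep p q a μ)^[t] f) z
  simp only [fwdDiff, add_sub_cancel, hubDefect, Pi.sub_apply, Function.comp_apply] at hjump ⊢
  set g := (hubStep p q a μ)^[t] f
  set b := (freeStep p q)^[t] f
  nlinarith [sq_nonneg (g (μ z) - g z + (g (μ z) - b (μ z))),
    sq_nonneg (g (μ z) - g z - (g z - b z)), sq_nonneg (g (μ z) - b (μ z) + (g z - b z))]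

theorem exists_energy_inequality (k : ℕ) (hq : 0 < q) (hpq : q < p) (ha : 0 < a)
    (hpqa : p + q + a ≤ 1) :
    ∃ K : ℕ, 1 ≤ K ∧ ∃ C : ℝ, 0 < C ∧ ∀ (n : ℕ) [NeZero n], 2 * k < n →
      ∀ (H : Finset (ZMod n)) (μ : ZMod n → ZMod n), IsConfig n k H μ → ∀ f : ZMod n → ℝ,
        sqNorm f - sqNorm ((freeStep p q)^[K * n] f) + ∑ z ∈ H, sqNorm (fwdDiff (μ z - z) f) ≤
          C * (sqNorm f - sqNorm ((hubStep p q a μ)^[K * n] f)) := by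
  have hv : 0 < p - q := sub_pos.2 hpq
  have hw := windingBound_pos hq hpq
  obtain ⟨K, hK⟩ := exists_nat_ge ((1 + windingBound p q) / (p - q))
  rw [div_le_iff₀' hv] at hK
  obtain ⟨C, hC, hdefect⟩ := exists_sum_sq_hubDefect_le k K hq hpq ha hpqa
  have hK1 : 1 ≤ K := Nat.one_le_iff_ne_zero.2 fun h => by
    rw [h, Nat.cast_zero, mul_zero] at hK; linarith
  refine ⟨K, hK1, C + 2 * k * (9 * (p - q) * C + 4 * (p - q) * K * C), by positivity,
    fun n _ hn H μ hc f => ?_⟩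
  obtain ⟨hsee, hjumps, hfree⟩ := hdefect n hn H μ hc f
  set Δ := sqNorm f - sqNorm ((hubStep p q a μ)^[K * n] f)
  have hjump : ∀ z ∈ H, sqNorm (fwdDiff (μ z - z) f) ≤
      (9 * (p - q) * C + 4 * (p - q) * K * C) * Δ := fun z _ => by
    have hobs := sqNorm_fwdDiff_le_of_windingBound_le hq hpq (by linarith) hK f (μ z - z) z
    have hpoint := Finset.sum_le_sum fun t (_ : t ∈ Finset.range (K * n)) =>
      sq_fwdDiff_iterate_freeStep_le (p := p) (q := q) (a := a) μ f t z
    rw [← Finset.mul_sum, Finset.sum_add_distrib, Finset.sum_add_distrib] at hpoint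
    have hpoint' := mul_le_mul_of_nonneg_left
      (hpoint.trans (by linarith [hsee z, hsee (μ z)] : _ ≤ 9 * (C * Δ))) hv.le
    have hfree' := mul_le_mul_of_nonneg_left hfree (by positivity : 0 ≤ (p - q) * K * 4)
    linarith
  have hsum : ∑ z ∈ H, sqNorm (fwdDiff (μ z - z) f) ≤
      2 * k * ((9 * (p - q) * C + 4 * (p - q) * K * C) * Δ) := by
    refine (Finset.sum_le_sum hjump).trans_eq ?_
    rw [Finset.sum_const, hc.1, nsmul_eq_mul]
    push_cast; ring
  linarith [sum_freeDissipation_iterate p q f (K * n)]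

end EnergyInequality

/-! ### Fourier analysis -/

section Fourier

variable {n : ℕ} [NeZero n]

lemma sum_norm_sq_sum_mul_stdAddChar {ι : Type*} (s : Finset ι) {b : ι → ZMod n}
    (hb : Set.InjOn b s) (c : ι → ℂ) :
    ∑ d : ZMod n, ‖∑ i ∈ s, c i * ZMod.stdAddChar (d * b i)‖ ^ 2 = n * ∑ i ∈ s, ‖c i‖ ^ 2 := by
  have hexpand : ∀ d : ZMod n,
      ((‖∑ i ∈ s, c i * ZMod.stdAddChar (d * b i)‖ ^ 2 : ℝ) : ℂ) =
        ∑ i ∈ s, ∑ j ∈ s, c i * starRingEnd ℂ (c j) * ZMod.stdAddChar (d * (b i - b j)) := by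
    intro d
    push_cast
    rw [← Complex.mul_conj', map_sum, Finset.sum_mul_sum]
    refine Finset.sum_congr rfl fun i _ => Finset.sum_congr rfl fun j _ => ?_
    rw [map_mul (starRingEnd ℂ), ← AddChar.map_neg_eq_conj, mul_sub, sub_eq_add_neg,
      AddChar.map_add_eq_mul]
    ring
  have horth : ∀ i ∈ s, ∑ j ∈ s, ∑ d : ZMod n,
      c i * starRingEnd ℂ (c j) * ZMod.stdAddChar (d * (b i - b j)) = n * ‖c i‖ ^ 2 := by
    intro i hi
    rw [Finset.sum_eq_single_of_mem i hi, ← Complex.mul_conj']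
    · simp [mul_comm]
    · intro j hj hji
      have hne : b i - b j ≠ 0 := sub_ne_zero.2 fun h => hji (hb hi hj h).symm
      simp [← Finset.mul_sum, AddChar.sum_mulShift _ (ZMod.isPrimitive_stdAddChar n), hne]
  rw [← Complex.ofReal_inj, Complex.ofReal_sum]
  simp only [hexpand]
  rw [Finset.sum_comm]
  simp only [Finset.sum_comm (s := Finset.univ)]
  rw [Finset.sum_congr rfl horth]
  push_cast
  rw [Finset.mul_sum]

/-- The discrete Fourier transform of a real function, without normalisation. -/
def realDFT : (ZMod n → ℝ) →ₗ[ℝ] (ZMod n → ℂ) :=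
  (ZMod.dft (E := ℂ)).toLinearMap.restrictScalars ℝ ∘ₗ
    Complex.ofRealCLM.toLinearMap.compLeft (ZMod n)

lemma realDFT_apply (f : ZMod n → ℝ) (ξ : ZMod n) :
    realDFT f ξ = ∑ x, ZMod.stdAddChar (-(x * ξ)) * (f x : ℂ) := rfl

lemma realDFT_apply_zero (f : ZMod n → ℝ) : realDFT f 0 = (∑ x, f x : ℝ) := by
  simp [realDFT_apply]

lemma sum_norm_sq_realDFT (f : ZMod n → ℝ) : ∑ ξ, ‖realDFT f ξ‖ ^ 2 = n * sqNorm f := by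
  have h := sum_norm_sq_sum_mul_stdAddChar (n := n) Finset.univ neg_injective.injOn
    fun x => (f x : ℂ)
  simpa only [Complex.norm_real, Real.norm_eq_abs, sq_abs, mul_neg, realDFT_apply, sqNorm,
    mul_comm] using h

lemma norm_realDFT_le (f : ZMod n → ℝ) (ξ : ZMod n) : ‖realDFT f ξ‖ ≤ ∑ x, |f x| := by
  rw [realDFT_apply]
  refine (norm_sum_le _ _).trans_eq (Finset.sum_congr rfl fun x _ => ?_)
  rw [norm_mul, AddChar.norm_apply, one_mul, Complex.norm_real, Real.norm_eq_abs]

lemma realDFT_translate (f : ZMod n → ℝ) (d ξ : ZMod n) :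
    realDFT (fun x => f (x + d)) ξ = ZMod.stdAddChar (ξ * d) * realDFT f ξ := by
  rw [realDFT_apply f, ← sum_comp_add_right (fun x => (ZMod.stdAddChar (-(x * ξ)) * f x : ℂ)) d,
    realDFT_apply, Finset.mul_sum]
  refine Finset.sum_congr rfl fun x _ => ?_
  rw [← mul_assoc, ← AddChar.map_add_eq_mul]
  congr 2; ring

lemma realDFT_fwdDiff (f : ZMod n → ℝ) (d ξ : ZMod n) :
    realDFT (fwdDiff d f) ξ = (ZMod.stdAddChar (ξ * d) - 1) * realDFT f ξ := by
  rw [show fwdDiff d f = (fun x => f (x + d)) - f from rfl, map_sub, Pi.sub_apply,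
    realDFT_translate, sub_mul, one_mul]

/-- The eigenvalue of the free walk at the frequency `ξ`. -/
def freeEigenvalue (p q : ℝ) (ξ : ZMod n) : ℂ :=
  p * ZMod.stdAddChar (-ξ) + q * ZMod.stdAddChar ξ + (1 - p - q : ℝ)

lemma realDFT_freeStep (p q : ℝ) (f : ZMod n → ℝ) (ξ : ZMod n) :
    realDFT (freeStep p q f) ξ = freeEigenvalue p q ξ * realDFT f ξ := by
  have hfree : freeStep p q f =
      p • (fun x => f (x + -1)) + q • (fun x => f (x + 1)) + (1 - p - q) • f := by
    funext y; simp [freeStep, sub_eq_add_neg]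
  rw [hfree, map_add, map_add, map_smul, map_smul, map_smul]
  simp only [Pi.add_apply, Pi.smul_apply, Complex.real_smul, realDFT_translate, mul_neg, mul_one,
    freeEigenvalue]
  ring

lemma realDFT_iterate_freeStep (p q : ℝ) (f : ZMod n → ℝ) (ξ : ZMod n) (T : ℕ) :
    realDFT ((freeStep p q)^[T] f) ξ = freeEigenvalue p q ξ ^ T * realDFT f ξ := by
  induction T with
  | zero => simp
  | succ T ih => rw [Function.iterate_succ_apply', realDFT_freeStep, ih, pow_succ', mul_assoc]

lemma norm_sq_freeEigenvalue_le {p q : ℝ} (hp : 0 ≤ p) (hq : 0 ≤ q) (ξ : ZMod n) :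
    ‖freeEigenvalue p q ξ‖ ^ 2 ≤
      1 - (p + q) * (1 - p - q) * ‖(ZMod.stdAddChar ξ : ℂ) - 1‖ ^ 2 := by
  have hnorm : ‖(ZMod.stdAddChar ξ : ℂ)‖ = 1 := AddChar.norm_apply _ _
  rw [freeEigenvalue, AddChar.map_neg_eq_conj]
  generalize (ZMod.stdAddChar ξ : ℂ) = z at hnorm ⊢
  have hcircle : z.im ^ 2 = 1 - z.re ^ 2 := by
    have := Complex.sq_norm z
    rw [hnorm, Complex.normSq_apply] at this; linarith
  have hidentity : ‖p * starRingEnd ℂ z + q * z + (1 - p - q : ℝ)‖ ^ 2 =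
      1 - (p + q) * (1 - p - q) * ‖z - 1‖ ^ 2 - 4 * (p * q * z.im ^ 2) := by
    simp only [Complex.sq_norm, Complex.normSq_apply, Complex.add_re, Complex.mul_re,
      Complex.ofReal_re, Complex.ofReal_im, Complex.conj_re, Complex.conj_im, Complex.add_im,
      Complex.mul_im, Complex.sub_re, Complex.sub_im, Complex.one_re, Complex.one_im]
    linear_combination ((p - q) ^ 2 + 4 * p * q + (p + q) * (1 - p - q)) * hcircle
  have : 0 ≤ p * q * z.im ^ 2 := by positivity
  linarith

lemma norm_freeEigenvalue_le_one {p q : ℝ} (hp : 0 ≤ p) (hq : 0 ≤ q) (hpq : p + q ≤ 1)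
    (ξ : ZMod n) : ‖freeEigenvalue p q ξ‖ ≤ 1 := by
  have : 0 ≤ 1 - p - q := by linarith
  have : 0 ≤ (p + q) * (1 - p - q) * ‖(ZMod.stdAddChar ξ : ℂ) - 1‖ ^ 2 := by positivity
  exact (sq_le_one_iff₀ (norm_nonneg _)).1 (by linarith [norm_sq_freeEigenvalue_le hp hq ξ])

lemma four_mul_abs_valMinAbs_div_le_norm_stdAddChar_sub_one (ξ : ZMod n) :
    4 * |(ξ.valMinAbs : ℝ)| / n ≤ ‖(ZMod.stdAddChar ξ : ℂ) - 1‖ := by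
  have hn : (0 : ℝ) < n := by exact_mod_cast NeZero.pos n
  have hchar : (ZMod.stdAddChar ξ : ℂ) =
      Complex.exp (Complex.I * ((2 * Real.pi * ξ.valMinAbs / n : ℝ) : ℂ)) := by
    conv_lhs => rw [← ZMod.coe_valMinAbs ξ]
    rw [ZMod.stdAddChar_coe]
    congr 1; push_cast; ring
  have hhalf : |(ξ.valMinAbs : ℝ)| ≤ n / 2 := by
    rw [← Int.cast_abs, ← Nat.cast_natAbs]
    exact (Nat.cast_le.2 (ZMod.natAbs_valMinAbs_le ξ)).trans Nat.cast_div_le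
  have hangle : |2 * Real.pi * (ξ.valMinAbs : ℝ) / n / 2| = Real.pi / n * |(ξ.valMinAbs : ℝ)| := by
    rw [show 2 * Real.pi * (ξ.valMinAbs : ℝ) / n / 2 = Real.pi / n * ξ.valMinAbs by field_simp,
      abs_mul, abs_of_pos (by positivity)]
  have hjordan := Real.mul_abs_le_abs_sin (x := 2 * Real.pi * ξ.valMinAbs / n / 2) <| by
    rw [hangle]
    calc _ ≤ Real.pi / n * (n / 2) := mul_le_mul_of_nonneg_left hhalf (by positivity)
      _ = _ := by field_simp
  rw [hchar, Complex.norm_exp_I_mul_ofReal_sub_one, norm_mul, Real.norm_eq_abs, Real.norm_eq_abs,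
    abs_two]
  calc 4 * |(ξ.valMinAbs : ℝ)| / n = 2 * (2 / Real.pi * (Real.pi / n * |(ξ.valMinAbs : ℝ)|)) := by
        field_simp; ring
    _ ≤ _ := mul_le_mul_of_nonneg_left (hangle ▸ hjordan) zero_le_two

/-- The Fourier multiplier of the left-hand side of the energy inequality over time `T`. -/
def dissipationSymbol (p q : ℝ) (T : ℕ) (H : Finset (ZMod n)) (μ : ZMod n → ZMod n)
    (ξ : ZMod n) : ℝ :=
  1 - ‖freeEigenvalue p q ξ‖ ^ (2 * T)
    + ∑ z ∈ H, ‖(ZMod.stdAddChar (ξ * (μ z - z)) : ℂ) - 1‖ ^ 2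

lemma dissipationSymbol_nonneg {p q : ℝ} (hp : 0 ≤ p) (hq : 0 ≤ q) (hpq : p + q ≤ 1) (T : ℕ)
    (H : Finset (ZMod n)) (μ : ZMod n → ZMod n) (ξ : ZMod n) :
    0 ≤ dissipationSymbol p q T H μ ξ :=
  add_nonneg
    (sub_nonneg.2 (pow_le_one₀ (norm_nonneg _) (norm_freeEigenvalue_le_one hp hq hpq ξ)))
    (Finset.sum_nonneg fun _ _ => sq_nonneg _)

lemma sum_dissipationSymbol_mul_norm_sq_realDFT (p q : ℝ) (T : ℕ) (H : Finset (ZMod n))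
    (μ : ZMod n → ZMod n) (f : ZMod n → ℝ) :
    ∑ ξ, dissipationSymbol p q T H μ ξ * ‖realDFT f ξ‖ ^ 2 =
      n * (sqNorm f - sqNorm ((freeStep p q)^[T] f) + ∑ z ∈ H, sqNorm (fwdDiff (μ z - z) f)) := by
  rw [mul_add, mul_sub, Finset.mul_sum]
  simp only [← sum_norm_sq_realDFT, realDFT_iterate_freeStep, realDFT_fwdDiff, norm_mul, norm_pow,
    mul_pow, dissipationSymbol, add_mul _ _ (‖_‖ ^ 2), sub_mul _ _ (‖_‖ ^ 2), one_mul,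
    Finset.sum_add_distrib, Finset.sum_sub_distrib, Finset.sum_mul, ← pow_mul, mul_comm T]
  rw [Finset.sum_comm]

end Fourier

/-! ### Rows of powers of the transition matrix -/

section Rows

variable {n : ℕ} [NeZero n] {k : ℕ} {p q a : ℝ} {H : Finset (ZMod n)} {μ : ZMod n → ZMod n}

lemma vecMul_cycleP (hc : IsConfig n k H μ) (g : ZMod n → ℝ) :
    Matrix.vecMul g (cycleP n p q a H μ) = hubStep p q a μ g := by
  obtain ⟨-, hH, hinv, -, hout⟩ := hc
  funext y
  have hfwd : ∀ z : ZMod n, y = z + 1 ↔ z = y - 1 := fun z => by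
    rw [eq_sub_iff_add_eq, eq_comm]
  have hbwd : ∀ z : ZMod n, y = z - 1 ↔ z = y + 1 := fun z => by
    rw [eq_sub_iff_add_eq, eq_comm]
  have hmatch : ∀ z : ZMod n, (z ∈ H ∧ y = μ z) ↔ (z = μ y ∧ y ∈ H) := fun z =>
    ⟨fun h => ⟨by rw [h.2, hinv], h.2 ▸ hH z h.1⟩, fun h => ⟨h.1 ▸ hH y h.2, by rw [h.1, hinv]⟩⟩
  simp only [Matrix.vecMul, dotProduct, cycleP, mul_add, Finset.sum_add_distrib, hfwd, hbwd, hmatch,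
    hubStep, freeStep, Pi.add_apply, Pi.smul_apply, Pi.sub_apply, Function.comp_apply, smul_eq_mul]
  simp only [eq_comm (a := y)]
  by_cases hy : y ∈ H
  · simp only [hy, and_true, mul_ite, mul_zero, Finset.sum_ite_eq', Finset.mem_univ, if_true]
    ring
  · simp only [hy, hout y hy, and_false, if_false, mul_ite, mul_zero, Finset.sum_ite_eq',
      Finset.mem_univ, if_true, Finset.sum_const_zero]
    ring

/-- The signed measure `δₓ - π`, where `π` is the uniform distribution. -/
def pointMassSubUniform (x : ZMod n) : ZMod n → ℝ := fun y => (if x = y then 1 else 0) - 1 / n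

lemma cycleP_pow_sub (hc : IsConfig n k H μ) (x y : ZMod n) (t : ℕ) :
    (cycleP n p q a H μ ^ t) x y - 1 / n =
      (hubStep p q a μ)^[t] (pointMassSubUniform x) y := by
  induction t generalizing y with
  | zero => simp [Matrix.one_apply, pointMassSubUniform]
  | succ t ih =>
    rw [Function.iterate_succ_apply', ← funext ih, pow_succ, Matrix.mul_apply_eq_vecMul,
      vecMul_cycleP hc]
    simp only [hubStep, freeStep, Pi.add_apply, Pi.smul_apply, Pi.sub_apply,
      Function.comp_apply, smul_eq_mul]
    ring

lemma sum_pointMassSubUniform (x : ZMod n) : ∑ y, pointMassSubUniform x y = 0 := by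
  simp [pointMassSubUniform, Finset.sum_sub_distrib]

lemma sum_abs_pointMassSubUniform_le (x : ZMod n) : ∑ y, |pointMassSubUniform x y| ≤ 2 := by
  calc ∑ y, |pointMassSubUniform x y|
      ≤ ∑ y : ZMod n, ((if x = y then 1 else 0) + 1 / n : ℝ) := Finset.sum_le_sum fun y _ => by
        refine (abs_sub _ _).trans_eq ?_
        rw [abs_of_nonneg (by split_ifs <;> norm_num), abs_of_nonneg (by positivity)]
    _ = 2 := by
        rw [Finset.sum_add_distrib, Finset.sum_ite_eq]
        simp [one_add_one_eq_two]

lemma sum_hubStep (hμ : Function.Involutive μ) (f : ZMod n → ℝ) :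
    ∑ y, hubStep p q a μ f y = ∑ y, f y := by
  have hmatch : ∑ y, f (μ y) = ∑ y, f y := Equiv.sum_comp (Function.Involutive.toPerm μ hμ) f
  simp only [hubStep, Pi.add_apply, Pi.smul_apply, Pi.sub_apply, Function.comp_apply, smul_eq_mul,
    Finset.sum_add_distrib, ← Finset.mul_sum, Finset.sum_sub_distrib, sum_freeStep, hmatch,
    sub_self, mul_zero, add_zero]

lemma sum_abs_hubStep_le (hp : 0 ≤ p) (hq : 0 ≤ q) (ha : 0 ≤ a) (hpqa : p + q + a ≤ 1)
    (hμ : Function.Involutive μ) (f : ZMod n → ℝ) :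
    ∑ y, |hubStep p q a μ f y| ≤ ∑ y, |f y| := by
  have hconvex : ∀ (g : ZMod n → ℝ) y, hubStep p q a μ g y =
      p * g (y - 1) + q * g (y + 1) + (1 - p - q - a) * g y + a * g (μ y) := fun g y => by
    simp only [hubStep, freeStep, Pi.add_apply, Pi.smul_apply, Pi.sub_apply, Function.comp_apply,
      smul_eq_mul]
    ring
  have hr : 0 ≤ 1 - p - q - a := by linarith
  rw [← sum_hubStep (p := p) (q := q) (a := a) hμ fun y => |f y|]
  refine Finset.sum_le_sum fun y _ => ?_
  rw [hconvex, hconvex]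
  refine (abs_add_le _ _).trans ((add_le_add_left (abs_add_three _ _ _) _).trans_eq ?_)
  simp only [abs_mul, abs_of_nonneg hp, abs_of_nonneg hq, abs_of_nonneg hr, abs_of_nonneg ha]

lemma sum_iterate_hubStep (hμ : Function.Involutive μ) (f : ZMod n → ℝ) (t : ℕ) :
    ∑ y, (hubStep p q a μ)^[t] f y = ∑ y, f y := by
  induction t with
  | zero => rfl
  | succ t ih => rw [Function.iterate_succ_apply', sum_hubStep hμ, ih]

lemma sum_abs_iterate_hubStep_le (hp : 0 ≤ p) (hq : 0 ≤ q) (ha : 0 ≤ a) (hpqa : p + q + a ≤ 1)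
    (hμ : Function.Involutive μ) (f : ZMod n → ℝ) (t : ℕ) :
    ∑ y, |(hubStep p q a μ)^[t] f y| ≤ ∑ y, |f y| := by
  induction t with
  | zero => rfl
  | succ t ih =>
    rw [Function.iterate_succ_apply']
    exact (sum_abs_hubStep_le hp hq ha hpqa hμ _).trans ih

end Rows

/-! ### Nash inequality and decay -/

section Nash

lemma one_le_mul_inv_sub_inv_of_pow_succ_le {s : ℕ} {M x y : ℝ} (hM : 0 ≤ M) (hy : 0 < y)
    (hyx : y ≤ x) (hstep : x ^ (s + 1) ≤ M * (x ^ s - y ^ s)) :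
    1 ≤ M * s * (y⁻¹ - x⁻¹) := by
  have hx : 0 < x := hy.trans_le hyx
  have hbernoulli := one_add_mul_le_pow (a := y / x - 1)
    (by linarith [div_pos hy hx]) s
  rw [add_sub_cancel, div_pow, le_div_iff₀ (by positivity)] at hbernoulli
  have hscaled := mul_le_mul_of_nonneg_left hbernoulli hM
  have hgrowth : x ≤ M * s * (1 - y / x) :=
    le_of_mul_le_mul_left (by rw [pow_succ] at hstep; linarith) (pow_pos hx s)
  calc (1 : ℝ) ≤ x / y := (one_le_div hy).2 hyx
    _ ≤ M * s * (1 - y / x) / y := by gcongr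
    _ = M * s * (y⁻¹ - x⁻¹) := by field_simp

/-- In terms of `u = w ^ s` the recursion reads `u ^ (1 + 1 / s) ≤ M (u j - u (j + 1))`, the
discrete version of a Nash differential inequality: whatever the initial value, `1 / w` grows
linearly. -/
lemma le_one_of_pow_succ_le_mul_sub {s : ℕ} (hs : s ≠ 0) {M : ℝ} (hM : 0 < M) {w : ℕ → ℝ}
    (hanti : Antitone w) (hstep : ∀ j, 1 ≤ w j → w j ^ (s + 1) ≤ M * (w j ^ s - w (j + 1) ^ s))
    {J : ℕ} (hJ : M * s ≤ J) : w J ≤ 1 := by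
  by_contra! hcon
  have hw : ∀ j ≤ J, 1 < w j := fun j hj => hcon.trans_le (hanti hj)
  have hlinear : ∀ j ≤ J, (j : ℝ) ≤ M * s * (w j)⁻¹ := by
    intro j
    induction j with
    | zero =>
      intro h
      have := hw 0 h
      rw [Nat.cast_zero]; positivity
    | succ j ih =>
      intro hj
      have hgrow := one_le_mul_inv_sub_inv_of_pow_succ_le hM.le (zero_lt_one.trans (hw (j + 1) hj))
        (hanti j.le_succ) (hstep j (hw j (by omega)).le)
      push_cast
      linarith [ih (by omega)]
  have hMs : 0 < M * s := mul_pos hM (Nat.cast_pos.2 (Nat.pos_of_ne_zero hs))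
  have := mul_lt_mul_of_pos_left (inv_lt_one_of_one_lt₀ (hw J le_rfl)) hMs
  linarith [hlinear J le_rfl]

lemma le_exp_neg_div_mul_of_le_mul_sub {M : ℝ} (hM : 0 < M) {u : ℕ → ℝ} (hu : ∀ i, 0 ≤ u i)
    (hgap : ∀ i, u i ≤ M * (u i - u (i + 1))) (i : ℕ) : u i ≤ Real.exp (-(i / M)) * u 0 := by
  induction i with
  | zero => simp
  | succ i ih =>
    have hstep : u (i + 1) ≤ (1 - 1 / M) * u i := by
      have := (div_le_iff₀' hM).2 (hgap i)
      linarith [div_eq_mul_one_div (u i) M]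
    calc u (i + 1) ≤ Real.exp (-(1 / M)) * u i :=
          hstep.trans (mul_le_mul_of_nonneg_right (Real.one_sub_le_exp_neg _) (hu i))
      _ ≤ Real.exp (-(1 / M)) * (Real.exp (-(i / M)) * u 0) :=
          mul_le_mul_of_nonneg_left ih (Real.exp_pos _).le
      _ = Real.exp (-((i + 1 : ℕ) / M)) * u 0 := by
          rw [← mul_assoc, ← Real.exp_add]
          congr 2; push_cast; ring

lemma le_sq_of_nash_of_gap {s : ℕ} (hs : s ≠ 0) {M ε : ℝ} (hM : 0 < M) (hε : 0 < ε) {u : ℕ → ℝ}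
    (hu : ∀ i, 0 ≤ u i) (hgap : ∀ i, u i ≤ M * (u i - u (i + 1)))
    (hnash : ∀ i, 1 ≤ u i → u i * u i ^ (s : ℝ)⁻¹ ≤ 2 * M * (u i - u (i + 1)))
    {J j : ℕ} (hJ : 2 * M * s ≤ J) (hj : 2 * M * Real.log (1 / ε) ≤ j) :
    u (J + j) ≤ ε ^ 2 := by
  have hanti : Antitone u := antitone_nat_of_succ_le fun i =>
    sub_nonneg.1 (nonneg_of_mul_nonneg_right ((hu i).trans (hgap i)) hM)
  have hroot : ∀ i, (u i ^ (s : ℝ)⁻¹) ^ s = u i := fun i => Real.rpow_inv_natCast_pow (hu i) hs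
  have hfirst : u J ≤ 1 := by
    have hw := le_one_of_pow_succ_le_mul_sub hs (M := 2 * M) (by positivity)
      (w := fun i => u i ^ (s : ℝ)⁻¹)
      (fun i j hij => Real.rpow_le_rpow (hu j) (hanti hij) (by positivity))
      (fun i hi => by
        rw [pow_succ, hroot, hroot]
        exact hnash i (hroot i ▸ one_le_pow₀ hi)) hJ
    exact hroot J ▸ pow_le_one₀ (Real.rpow_nonneg (hu J) _) hw
  have hsecond :=
    le_exp_neg_div_mul_of_le_mul_sub hM (fun i => hu (J + i)) (fun i => hgap (J + i)) j
  refine (hsecond.trans (mul_le_of_le_one_right (Real.exp_pos _).le hfirst)).trans ?_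
  rw [← Real.exp_log (pow_pos hε 2), Real.exp_le_exp, Real.log_pow]
  rw [one_div, Real.log_inv] at hj
  have : 2 * -Real.log ε ≤ j / M := by rw [le_div_iff₀ hM]; linarith
  push_cast
  linarith

variable {ι : Type*} {s : Finset ι} {r c : ι → ℝ} {d : ℕ}

/-- A Nash inequality: since the bounded weights `c` put little mass where `r` is small, their
`r`-average is superlinear in their mass `w ^ d`. -/
lemma sum_mul_le_two_mul_sum_of_resolvent_le (hr : ∀ i ∈ s, 0 ≤ r i) (hc : ∀ i ∈ s, 0 ≤ c i) {A : ℝ}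
    (hA : 0 < A) (hcA : ∀ i ∈ s, c i ≤ A) {w : ℝ} (hw : 1 ≤ w) (hmass : w ^ d = ∑ i ∈ s, c i)
    (hres : ∑ i ∈ s, 1 / (1 + r i) ^ d ≤ 1 / (2 * A * 2 ^ d)) :
    (∑ i ∈ s, c i) * w ≤ 2 * ∑ i ∈ s, r i * c i := by
  have hw0 : 0 < w := by linarith
  have hterm : ∀ i ∈ s, w * c i ≤ r i * c i + w * A * (2 * w) ^ d * (1 / (1 + r i) ^ d) := by
    intro i hi
    have hr1 : 0 < 1 + r i := by linarith [hr i hi]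
    rcases le_total (1 + r i) (2 * w) with hsmall | hlarge
    · have hone : 1 ≤ (2 * w) ^ d * (1 / (1 + r i) ^ d) := by
        rw [mul_one_div, one_le_div (by positivity)]
        exact pow_le_pow_left₀ hr1.le hsmall d
      have hmass := mul_le_mul (hcA i hi) hone zero_le_one hA.le
      linarith [mul_nonneg (hr i hi) (hc i hi), mul_le_mul_of_nonneg_left hmass hw0.le]
    · have := mul_le_mul_of_nonneg_right (by linarith : w ≤ r i) (hc i hi)
      exact le_add_of_le_of_nonneg this (by positivity)
  have hsum := Finset.sum_le_sum hterm
  rw [Finset.sum_add_distrib, ← Finset.mul_sum, ← Finset.mul_sum] at hsum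
  have hlow : w * A * (2 * w) ^ d * ∑ i ∈ s, 1 / (1 + r i) ^ d ≤ w * (∑ i ∈ s, c i) / 2 := by
    refine (mul_le_mul_of_nonneg_left hres (by positivity)).trans_eq ?_
    rw [mul_pow, hmass]; field_simp
  linarith

lemma sum_le_sum_mul_of_resolvent_le (hr : ∀ i ∈ s, 0 ≤ r i) (hc : ∀ i ∈ s, 0 ≤ c i)
    (hres : ∑ i ∈ s, 1 / (1 + r i) ^ d ≤ 1 / (2 * 2 ^ d)) :
    ∑ i ∈ s, c i ≤ ∑ i ∈ s, r i * c i := by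
  refine Finset.sum_le_sum fun i hi => le_mul_of_one_le_left (hc i hi) ?_
  by_contra! hsmall
  have hr1 : ∀ j ∈ s, 0 < 1 + r j := fun j hj => by linarith [hr j hj]
  have hone : 1 / (1 + r i) ^ d ≤ 1 / (2 * 2 ^ d) :=
    (Finset.single_le_sum (f := fun j => 1 / (1 + r j) ^ d)
      (fun j hj => by have := hr1 j hj; positivity) hi).trans hres
  rw [one_div_le_one_div (pow_pos (hr1 i hi) d) (by positivity)] at hone
  have hpow := pow_le_pow_left₀ (hr1 i hi).le (by linarith : 1 + r i ≤ 2) d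
  linarith [pow_pos (two_pos : (0 : ℝ) < 2) d]

end Nash

/-! ### A criterion for mixing -/

section Criterion

variable {n : ℕ} [NeZero n] {k : ℕ} {p q a : ℝ} {H : Finset (ZMod n)} {μ : ZMod n → ZMod n}

/-- The sum over the nonzero frequencies whose smallness yields mixing after of the order of `m`
blocks of time `T`. -/
def resolventSum (d : ℕ) (m p q : ℝ) (T : ℕ) (H : Finset (ZMod n)) (μ : ZMod n → ZMod n) : ℝ :=
  ∑ ξ ∈ Finset.univ.erase 0, 1 / (1 + m * dissipationSymbol p q T H μ ξ) ^ d

lemma sum_erase_zero_mul_norm_sq_realDFT {f : ZMod n → ℝ} (hf : ∑ x, f x = 0) (r : ZMod n → ℝ) :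
    ∑ ξ ∈ Finset.univ.erase 0, r ξ * ‖realDFT f ξ‖ ^ 2 = ∑ ξ, r ξ * ‖realDFT f ξ‖ ^ 2 :=
  Finset.sum_erase _ (by simp [realDFT_apply_zero, hf])

lemma sum_mul_dissipationSymbol_mul_norm_sq_realDFT_le {C : ℝ} {T : ℕ} {f : ZMod n → ℝ}
    (hf : ∑ x, f x = 0)
    (henergy : sqNorm f - sqNorm ((freeStep p q)^[T] f) + ∑ z ∈ H, sqNorm (fwdDiff (μ z - z) f) ≤
      C * (sqNorm f - sqNorm ((hubStep p q a μ)^[T] f)))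
    {m : ℝ} (hm : 0 ≤ m) :
    ∑ ξ ∈ Finset.univ.erase 0, m * dissipationSymbol p q T H μ ξ * ‖realDFT f ξ‖ ^ 2 ≤
      m * C * (n * sqNorm f - n * sqNorm ((hubStep p q a μ)^[T] f)) := by
  simp only [sum_erase_zero_mul_norm_sq_realDFT hf, mul_assoc m, ← Finset.mul_sum,
    sum_dissipationSymbol_mul_norm_sq_realDFT]
  linarith [mul_le_mul_of_nonneg_left henergy (mul_nonneg hm (Nat.cast_nonneg n))]

lemma mixedBy_of_sqNorm_le (hc : IsConfig n k H μ) {ε : ℝ} (hε : 0 ≤ ε) {t : ℕ}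
    (hsq : ∀ x, n * sqNorm ((hubStep p q a μ)^[t] (pointMassSubUniform x)) ≤ ε ^ 2) :
    mixedBy n (cycleP n p q a H μ) ε t := by
  intro x
  set f := (hubStep p q a μ)^[t] (pointMassSubUniform x)
  have hcauchy : (∑ y, |f y|) ^ 2 ≤ n * sqNorm f := by
    simpa [sqNorm] using sq_sum_le_card_mul_sum_sq (s := Finset.univ) (f := fun y => |f y|)
  have hnorm : ∑ y, |f y| ≤ ε := le_of_sq_le_sq (hcauchy.trans (hsq x)) hε
  simp only [cycleP_pow_sub hc]
  linarith [Finset.sum_nonneg fun y (_ : y ∈ Finset.univ) => abs_nonneg (f y)]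

/-- `J` blocks bring `n ‖P^t(x, ·) - π‖₂²` from at most `n` down to `1` by the Nash inequality, and
`j` further blocks bring it down to `ε²` by the spectral gap. -/
theorem mixedBy_of_resolventSum_le {d : ℕ} (hd : d ≠ 0) (hp : 0 ≤ p) (hq : 0 ≤ q) (ha : 0 ≤ a)
    (hpqa : p + q + a ≤ 1) (hc : IsConfig n k H μ) {C : ℝ} (hC : 0 < C) {T : ℕ}
    (henergy : ∀ f : ZMod n → ℝ,
      sqNorm f - sqNorm ((freeStep p q)^[T] f) + ∑ z ∈ H, sqNorm (fwdDiff (μ z - z) f) ≤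
        C * (sqNorm f - sqNorm ((hubStep p q a μ)^[T] f)))
    {m : ℝ} (hm : 0 < m) (hres : resolventSum d m p q T H μ ≤ 1 / (8 * 2 ^ d))
    {ε : ℝ} (hε : 0 < ε) {J j : ℕ} (hJ : 2 * (m * C) * d ≤ J)
    (hj : 2 * (m * C) * Real.log (1 / ε) ≤ j) :
    mixedBy n (cycleP n p q a H μ) ε (T * (J + j)) := by
  refine mixedBy_of_sqNorm_le hc hε.le fun x => ?_
  set f : ℕ → ZMod n → ℝ := fun i => (hubStep p q a μ)^[T * i] (pointMassSubUniform x) with hf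
  have hsum : ∀ i, ∑ y, f i y = 0 := fun i =>
    (sum_iterate_hubStep hc.2.2.1 _ _).trans (sum_pointMassSubUniform x)
  have hbound : ∀ i ξ, ‖realDFT (f i) ξ‖ ^ 2 ≤ 4 := fun i ξ =>
    (pow_le_pow_left₀ (norm_nonneg _) ((norm_realDFT_le _ ξ).trans
      ((sum_abs_iterate_hubStep_le hp hq ha hpqa hc.2.2.1 _ _).trans
        (sum_abs_pointMassSubUniform_le x))) 2).trans_eq (by norm_num)
  have hr : ∀ ξ ∈ Finset.univ.erase 0, 0 ≤ m * dissipationSymbol p q T H μ ξ := fun ξ _ =>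
    mul_nonneg hm.le (dissipationSymbol_nonneg hp hq (by linarith) T H μ ξ)
  have hmass : ∀ i, ∑ ξ ∈ Finset.univ.erase 0, ‖realDFT (f i) ξ‖ ^ 2 = n * sqNorm (f i) :=
    fun i => by
      simpa only [one_mul, sum_norm_sq_realDFT] using
        sum_erase_zero_mul_norm_sq_realDFT (hsum i) fun _ => 1
  have hdrop : ∀ i, ∑ ξ ∈ Finset.univ.erase 0,
      m * dissipationSymbol p q T H μ ξ * ‖realDFT (f i) ξ‖ ^ 2 ≤
        m * C * (n * sqNorm (f i) - n * sqNorm (f (i + 1))) := fun i => by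
    simpa only [hf, mul_add_one, add_comm (T * i), Function.iterate_add_apply] using
      sum_mul_dissipationSymbol_mul_norm_sq_realDFT_le (hsum i) (henergy (f i)) hm.le
  have hu : ∀ i, 0 ≤ n * sqNorm (f i) := fun i => mul_nonneg (Nat.cast_nonneg n) (sqNorm_nonneg _)
  refine le_sq_of_nash_of_gap hd (mul_pos hm hC) hε hu (fun i => ?_) (fun i hi => ?_) hJ hj
  · refine (hmass i ▸ sum_le_sum_mul_of_resolvent_le hr (fun _ _ => sq_nonneg _)
      (hres.trans ?_)).trans (hdrop i)
    gcongr; norm_num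
  · have hnash := sum_mul_le_two_mul_sum_of_resolvent_le hr (fun _ _ => sq_nonneg _) four_pos
      (fun ξ _ => hbound i ξ) (Real.one_le_rpow hi (by positivity))
      ((Real.rpow_inv_natCast_pow (hu i) hd).trans (hmass i).symm) (hres.trans_eq (by norm_num))
    rw [hmass] at hnash
    linarith [hdrop i]

end Criterion

/-! ### Lower bounds on the dissipation symbol -/

section DissipationBounds

variable {n : ℕ} [NeZero n] {p q : ℝ}

lemma norm_sq_stdAddChar_sub_one_le_dissipationSymbol (hp : 0 ≤ p) (hq : 0 ≤ q) (hpq : p + q ≤ 1)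
    (T : ℕ) {H : Finset (ZMod n)} (μ : ZMod n → ZMod n) {z : ZMod n} (hz : z ∈ H) (ξ : ZMod n) :
    ‖(ZMod.stdAddChar (ξ * (μ z - z)) : ℂ) - 1‖ ^ 2 ≤ dissipationSymbol p q T H μ ξ := by
  have hsingle := Finset.single_le_sum
    (f := fun z => ‖(ZMod.stdAddChar (ξ * (μ z - z)) : ℂ) - 1‖ ^ 2) (fun _ _ => sq_nonneg _) hz
  have hfree := pow_le_one₀ (n := 2 * T) (norm_nonneg _) (norm_freeEigenvalue_le_one hp hq hpq ξ)
  unfold dissipationSymbol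
  linarith

lemma norm_freeEigenvalue_pow_le (hp : 0 ≤ p) (hq : 0 ≤ q) (hpq : p + q ≤ 1) (T : ℕ)
    (ξ : ZMod n) :
    ‖freeEigenvalue p q ξ‖ ^ (2 * T) ≤
      1 / (1 + T * ((p + q) * (1 - p - q) * ‖(ZMod.stdAddChar ξ : ℂ) - 1‖ ^ 2)) := by
  have : 0 ≤ 1 - p - q := by linarith
  set θ := (p + q) * (1 - p - q) * ‖(ZMod.stdAddChar ξ : ℂ) - 1‖ ^ 2
  have : 0 ≤ θ := by positivity
  calc ‖freeEigenvalue p q ξ‖ ^ (2 * T)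
      = (‖freeEigenvalue p q ξ‖ ^ 2) ^ T := pow_mul _ _ _
    _ ≤ Real.exp (-θ) ^ T := pow_le_pow_left₀ (sq_nonneg _)
        ((norm_sq_freeEigenvalue_le hp hq ξ).trans (Real.one_sub_le_exp_neg θ)) T
    _ = 1 / Real.exp (T * θ) := by
        rw [← Real.exp_nat_mul, mul_neg, Real.exp_neg, one_div]
    _ ≤ 1 / (1 + T * θ) :=
        one_div_le_one_div_of_le (by positivity) (by linarith [Real.add_one_le_exp (T * θ)])

lemma exists_mul_min_le_dissipationSymbol (hp : 0 ≤ p) (hq : 0 ≤ q) (hpos : 0 < p + q)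
    (hpq : p + q < 1) :
    ∃ c : ℝ, 0 < c ∧ ∀ (n : ℕ) [NeZero n] (T : ℕ), n ≤ T → ∀ H μ (ξ : ZMod n),
      c * min 1 ((ξ.valMinAbs : ℝ) ^ 2 / n) ≤ dissipationSymbol p q T H μ ξ := by
  have hlazy : 0 < 1 - p - q := by linarith
  set b := (p + q) * (1 - p - q)
  have hb : 0 < b := by positivity
  refine ⟨16 * b / (1 + 16 * b), by positivity, fun n _ T hT H μ ξ => ?_⟩
  have hn : (0 : ℝ) < n := by exact_mod_cast NeZero.pos n
  set w := min 1 ((ξ.valMinAbs : ℝ) ^ 2 / n)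
  have hw : 0 ≤ w := by positivity
  have hexponent : 16 * b * w ≤ T * (b * ‖(ZMod.stdAddChar ξ : ℂ) - 1‖ ^ 2) :=
    calc 16 * b * w ≤ 16 * b * ((ξ.valMinAbs : ℝ) ^ 2 / n) := by gcongr; exact min_le_right _ _
      _ = n * (b * (4 * |(ξ.valMinAbs : ℝ)| / n) ^ 2) := by
          rw [div_pow, mul_pow, sq_abs]; field_simp; ring
      _ ≤ T * (b * ‖(ZMod.stdAddChar ξ : ℂ) - 1‖ ^ 2) := by
          gcongr; exact four_mul_abs_valMinAbs_div_le_norm_stdAddChar_sub_one ξ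
  calc 16 * b / (1 + 16 * b) * w = 16 * b * w / (1 + 16 * b) := by ring
    _ ≤ 16 * b * w / (1 + 16 * b * w) := by
        gcongr _ / (1 + ?_)
        exact mul_le_of_le_one_right (by positivity) (min_le_left _ _)
    _ = 1 - 1 / (1 + 16 * b * w) := by field_simp; ring
    _ ≤ 1 - ‖freeEigenvalue p q ξ‖ ^ (2 * T) := by
        refine sub_le_sub_left ((norm_freeEigenvalue_pow_le hp hq hpq.le T ξ).trans ?_) 1
        gcongr
    _ ≤ dissipationSymbol p q T H μ ξ :=
        le_add_of_nonneg_right (Finset.sum_nonneg fun _ _ => sq_nonneg _)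

end DissipationBounds

/-! ### Averages over a uniform jump length -/

section Averages

variable {n : ℕ} [NeZero n]

/-- The factor by which a matching edge of length `d` reduces the contribution of the frequency
`ξ` to the resolvent sum. -/
def edgeDamping (m : ℝ) (ξ d : ZMod n) : ℝ :=
  1 / (1 + m * ‖(ZMod.stdAddChar (ξ * d) : ℂ) - 1‖ ^ 2)

lemma edgeDamping_nonneg {m : ℝ} (hm : 0 ≤ m) (ξ d : ZMod n) : 0 ≤ edgeDamping m ξ d := by
  unfold edgeDamping; positivity

lemma norm_one_sub_mul_sq {z : ℂ} (hz : ‖z‖ = 1) (ρ : ℝ) :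
    ‖1 - ρ * z‖ ^ 2 = (1 - ρ) ^ 2 + ρ * ‖z - 1‖ ^ 2 := by
  have hcircle := Complex.sq_norm z
  rw [hz, Complex.normSq_apply] at hcircle
  simp only [Complex.sq_norm, Complex.normSq_apply, Complex.sub_re, Complex.sub_im, Complex.one_re,
    Complex.one_im, Complex.mul_re, Complex.mul_im, Complex.ofReal_re, Complex.ofReal_im]
  linear_combination (ρ - ρ ^ 2) * hcircle

lemma one_sub_pow_le_half {τ : ℝ} (hτ : τ ≤ 1) {D : ℕ} (hD : 1 ≤ τ * D) :
    (1 - τ) ^ D ≤ 1 / 2 := by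
  calc (1 - τ) ^ D ≤ Real.exp (-τ) ^ D :=
        pow_le_pow_left₀ (by linarith) (Real.one_sub_le_exp_neg τ) D
    _ = Real.exp (-(τ * D)) := by rw [← Real.exp_nat_mul]; ring_nf
    _ ≤ Real.exp (-1) := Real.exp_le_exp.2 (neg_le_neg hD)
    _ ≤ 1 / 2 := by linarith [Real.exp_neg_one_lt_half]

/-- On the unit circle the Lorentzian is at most a multiple of the Poisson-type kernel
`1 / |1 - ρ z|²` with `ρ = 1 - τ`; for `z ^ D = 1` the latter is the square of a polynomial of
degree less than `D`. -/
lemma one_div_sq_add_norm_sub_one_sq_le {τ : ℝ} (hτ₀ : 0 < τ) (hτ₁ : τ ≤ 1) {z : ℂ} (hz : ‖z‖ = 1)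
    {D : ℕ} (hD : 1 ≤ τ * D) (hzD : z ^ D = 1) :
    1 / (τ ^ 2 + ‖z - 1‖ ^ 2) ≤
      4 * ‖∑ l ∈ Finset.range D, (((1 - τ) ^ l : ℝ) : ℂ) * z ^ l‖ ^ 2 := by
  set S := ∑ l ∈ Finset.range D, (((1 - τ) ^ l : ℝ) : ℂ) * z ^ l with hS
  have hkernel : ‖1 - ((1 - τ : ℝ) : ℂ) * z‖ ^ 2 ≤ τ ^ 2 + ‖z - 1‖ ^ 2 := by
    rw [norm_one_sub_mul_sq hz, sub_sub_cancel]
    gcongr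
    exact mul_le_of_le_one_left (sq_nonneg _) (by linarith)
  have hgeom : (1 - ((1 - τ : ℝ) : ℂ) * z) * S = ((1 - (1 - τ) ^ D : ℝ) : ℂ) := by
    simp only [hS, Complex.ofReal_pow, ← mul_pow]
    rw [mul_neg_geom_sum, mul_pow, hzD, mul_one]
    push_cast
    rfl
  have hhalf : 1 / 2 ≤ ‖1 - ((1 - τ : ℝ) : ℂ) * z‖ * ‖S‖ := by
    rw [← norm_mul, hgeom, Complex.norm_real]
    exact (by linarith [one_sub_pow_le_half hτ₁ hD] : (1 : ℝ) / 2 ≤ 1 - (1 - τ) ^ D).trans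
      (le_abs_self _)
  rw [div_le_iff₀ (by positivity)]
  calc (1 : ℝ) = 4 * (1 / 2) ^ 2 := by norm_num
    _ ≤ 4 * (‖1 - ((1 - τ : ℝ) : ℂ) * z‖ * ‖S‖) ^ 2 := by gcongr
    _ = 4 * ‖S‖ ^ 2 * ‖1 - ((1 - τ : ℝ) : ℂ) * z‖ ^ 2 := by ring
    _ ≤ 4 * ‖S‖ ^ 2 * (τ ^ 2 + ‖z - 1‖ ^ 2) := by gcongr

lemma sum_one_sub_pow_sq_le {τ : ℝ} (hτ₀ : 0 < τ) (hτ₁ : τ ≤ 1) (D : ℕ) :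
    ∑ l ∈ Finset.range D, ((1 - τ) ^ l) ^ 2 ≤ 1 / τ := by
  have hρ : 0 ≤ 1 - τ := by linarith
  have hgeom := mul_neg_geom_sum (1 - τ) D
  rw [sub_sub_cancel] at hgeom
  calc ∑ l ∈ Finset.range D, ((1 - τ) ^ l) ^ 2 ≤ ∑ l ∈ Finset.range D, (1 - τ) ^ l :=
        Finset.sum_le_sum fun l _ =>
          pow_le_of_le_one (pow_nonneg hρ l) (pow_le_one₀ hρ (by linarith)) two_ne_zero
    _ ≤ 1 / τ := by rw [le_div_iff₀' hτ₀, hgeom]; linarith [pow_nonneg hρ D]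

lemma sum_edgeDamping_le {r : ℝ} (hr : 1 ≤ r) {ξ : ZMod n} (hξ : r ≤ addOrderOf ξ) :
    ∑ d, edgeDamping (r ^ 2) ξ d ≤ 4 * n / r := by
  have hr0 : 0 < r := by linarith
  have hτ : 1 / r ≤ 1 := (div_le_one hr0).2 hr
  set D := addOrderOf ξ with hD
  have hpow : ∀ (d : ZMod n) (l : ℕ),
      (ZMod.stdAddChar (ξ * d) : ℂ) ^ l = ZMod.stdAddChar (d * ((l : ZMod n) * ξ)) := fun d l => by
    rw [← AddChar.map_nsmul_eq_pow, nsmul_eq_mul]; ring_nf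
  have hterm : ∀ d : ZMod n, edgeDamping (r ^ 2) ξ d ≤ 4 * (1 / r) ^ 2 *
      ‖∑ l ∈ Finset.range D,
        (((1 - 1 / r) ^ l : ℝ) : ℂ) * ZMod.stdAddChar (d * ((l : ZMod n) * ξ))‖ ^ 2 := fun d => by
    have hroot : (ZMod.stdAddChar (ξ * d) : ℂ) ^ D = 1 := by
      rw [hpow, ← nsmul_eq_mul, hD, addOrderOf_nsmul_eq_zero, mul_zero, AddChar.map_zero_eq_one]
    have hlorentz := one_div_sq_add_norm_sub_one_sq_le (by positivity) hτ
      (AddChar.norm_apply _ _) (by rwa [one_div_mul_eq_div, one_le_div hr0]) hroot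
    simp only [hpow] at hlorentz
    calc edgeDamping (r ^ 2) ξ d
        = (1 / r) ^ 2 * (1 / ((1 / r) ^ 2 + ‖(ZMod.stdAddChar (ξ * d) : ℂ) - 1‖ ^ 2)) := by
          unfold edgeDamping; field_simp
      _ ≤ _ := (mul_le_mul_of_nonneg_left hlorentz (sq_nonneg _)).trans_eq (by ring)
  have hinj : Set.InjOn (fun l : ℕ => (l : ZMod n) * ξ) (Finset.range D) := by
    simpa only [nsmul_eq_mul, Finset.coe_range] using nsmul_injOn_Iio_addOrderOf (x := ξ)
  calc ∑ d, edgeDamping (r ^ 2) ξ d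
      ≤ 4 * (1 / r) ^ 2 * (n * ∑ l ∈ Finset.range D, ((1 - 1 / r) ^ l) ^ 2) := by
        refine (Finset.sum_le_sum fun d _ => hterm d).trans_eq ?_
        rw [← Finset.mul_sum, sum_norm_sq_sum_mul_stdAddChar _ hinj]
        simp only [Complex.norm_real, Real.norm_eq_abs, sq_abs]
    _ ≤ 4 * (1 / r) ^ 2 * (n * (1 / (1 / r))) := by
        gcongr; exact sum_one_sub_pow_sq_le (by positivity) hτ D
    _ = 4 * n / r := by field_simp

lemma sum_prod_sub {R : Type*} [CommSemiring R] (k : ℕ) (g : ZMod n → R) :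
    ∑ σ : Fin k × Bool → ZMod n, ∏ i, g (σ (i, true) - σ (i, false)) = (n * ∑ d, g d) ^ k := by
  have hpair : n * ∑ d, g d = ∑ e : Bool → ZMod n, g (e true - e false) := by
    rw [← Equiv.sum_comp (Equiv.boolArrowEquivProd (ZMod n)).symm, Fintype.sum_prod_type]
    simp [Equiv.boolArrowEquivProd, sum_comp_sub_right g]
  rw [hpair, Fintype.sum_pow]
  exact Equiv.sum_comp (Equiv.curry (Fin k) Bool (ZMod n))
    fun τ : Fin k → Bool → ZMod n => ∏ i, g (τ i true - τ i false)

lemma le_addOrderOf_mul_abs_valMinAbs {ξ : ZMod n} (hξ : ξ ≠ 0) :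
    (n : ℝ) ≤ addOrderOf ξ * |(ξ.valMinAbs : ℝ)| := by
  have hdvd : (n : ℤ) ∣ addOrderOf ξ * ξ.valMinAbs := by
    rw [← ZMod.intCast_zmod_eq_zero_iff_dvd]
    push_cast
    rw [← nsmul_eq_mul, addOrderOf_nsmul_eq_zero]
  have hne : (addOrderOf ξ : ℤ) * ξ.valMinAbs ≠ 0 :=
    mul_ne_zero (Int.natCast_ne_zero.2 (addOrderOf_pos ξ).ne') (mt (ZMod.valMinAbs_eq_zero ξ).1 hξ)
  have hle := Int.le_of_dvd (abs_pos.2 hne) ((dvd_abs _ _).2 hdvd)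
  rw [abs_mul, Nat.abs_cast] at hle
  exact_mod_cast hle

lemma sum_Ico_one_div_one_add_sq_le {s : ℝ} (hs : 0 < s) (N : ℕ) :
    ∑ j ∈ Finset.Ico 1 N, 1 / (1 + s ^ 2 * (j : ℝ) ^ 2) ≤ 2 / s := by
  have hterm : ∀ j : ℕ, 1 / (1 + s ^ 2 * ((1 + j : ℕ) : ℝ) ^ 2) ≤
      2 / s * (1 / (1 + s * j)) - 2 / s * (1 / (1 + s * (j + 1 : ℕ))) := fun j => by
    calc 1 / (1 + s ^ 2 * ((1 + j : ℕ) : ℝ) ^ 2)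
        ≤ 2 / ((1 + s * j) * (1 + s * (j + 1 : ℕ))) := by
          rw [div_le_div_iff₀ (by positivity) (by positivity)]
          push_cast
          nlinarith [sq_nonneg (s * (j + 1) - 1), mul_nonneg hs.le j.cast_nonneg]
      _ = _ := by push_cast; field_simp; ring
  rw [Finset.sum_Ico_eq_sum_range]
  refine (Finset.sum_le_sum fun j _ => hterm j).trans ?_
  rw [Finset.sum_range_sub' fun j : ℕ => 2 / s * (1 / (1 + s * j)), Nat.cast_zero, mul_zero,
    add_zero, div_one, mul_one]
  exact sub_le_self _ (by positivity)

lemma sum_erase_zero_val (g : ℕ → ℝ) :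
    ∑ ξ ∈ Finset.univ.erase (0 : ZMod n), g ξ.val = ∑ j ∈ Finset.Ico 1 n, g j := by
  refine Finset.sum_nbij' ZMod.val (fun j => (j : ZMod n)) (fun ξ hξ => ?_) (fun j hj => ?_)
    (fun ξ _ => ZMod.natCast_zmod_val ξ) (fun j hj => ?_) fun _ _ => rfl
  · exact Finset.mem_Ico.2 ⟨ZMod.val_pos.2 (Finset.ne_of_mem_erase hξ), ZMod.val_lt ξ⟩
  · obtain ⟨hj1, hjn⟩ := Finset.mem_Ico.1 hj
    refine Finset.mem_erase.2 ⟨fun h => ?_, Finset.mem_univ _⟩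
    exact (Nat.le_of_dvd hj1 ((ZMod.natCast_eq_zero_iff j n).1 h)).not_gt hjn
  · exact ZMod.val_cast_of_lt (Finset.mem_Ico.1 hj).2

lemma sum_one_div_one_add_valMinAbs_sq_le {s : ℝ} (hs : 0 < s) :
    ∑ ξ ∈ Finset.univ.erase (0 : ZMod n), 1 / (1 + s ^ 2 * (ξ.valMinAbs : ℝ) ^ 2) ≤ 4 / s := by
  set g : ℕ → ℝ := fun j => 1 / (1 + s ^ 2 * (j : ℝ) ^ 2) with hg
  have hg0 : ∀ j, 0 ≤ g j := fun j => by positivity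
  have hval : ∀ ξ ∈ Finset.univ.erase (0 : ZMod n),
      1 / (1 + s ^ 2 * (ξ.valMinAbs : ℝ) ^ 2) ≤ g ξ.val + g (-ξ).val := fun ξ hξ => by
    have habs : 1 / (1 + s ^ 2 * (ξ.valMinAbs : ℝ) ^ 2) = g ξ.valMinAbs.natAbs := by
      simp only [hg, Nat.cast_natAbs, Int.cast_abs, sq_abs]
    rw [habs, ZMod.valMinAbs_natAbs_eq_min, ZMod.neg_val, if_neg (Finset.ne_of_mem_erase hξ)]
    rcases min_choice ξ.val (n - ξ.val) with h | h <;> rw [h]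
    · exact le_add_of_nonneg_right (hg0 _)
    · exact le_add_of_nonneg_left (hg0 _)
  have hneg : ∑ ξ ∈ Finset.univ.erase (0 : ZMod n), g (-ξ).val =
      ∑ ξ ∈ Finset.univ.erase (0 : ZMod n), g ξ.val :=
    Finset.sum_nbij' (-·) (-·) (by simp) (by simp) (by simp) (by simp) (by simp)
  calc _ ≤ ∑ ξ ∈ Finset.univ.erase (0 : ZMod n), (g ξ.val + g (-ξ).val) := Finset.sum_le_sum hval
    _ = 2 * ∑ j ∈ Finset.Ico 1 n, g j := by
        rw [Finset.sum_add_distrib, hneg, sum_erase_zero_val, two_mul]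
    _ ≤ 2 * (2 / s) := by gcongr; exact sum_Ico_one_div_one_add_sq_le hs n
    _ = 4 / s := by ring

end Averages

/-! ### Random configurations -/

section Configurations

variable {n k : ℕ}

/-- The tuple `σ` lists the configuration `(H, μ)`: its entries are the hubs, without repetition,
and `σ (i, true)`, `σ (i, false)` are the two ends of the `i`-th matching edge. A uniform
configuration is then the one listed by a uniform injective tuple. -/
structure IsListing (σ : Fin k × Bool → ZMod n) (H : Finset (ZMod n)) (μ : ZMod n → ZMod n) :
    Prop where
  injective : Function.Injective σ
  mem_iff : ∀ x, x ∈ H ↔ ∃ y, σ y = x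
  match_eq : ∀ i b, μ (σ (i, b)) = σ (i, !b)
  match_of_notMem : ∀ x, x ∉ H → μ x = x

namespace IsListing

variable {σ : Fin k × Bool → ZMod n} {H H' : Finset (ZMod n)} {μ μ' : ZMod n → ZMod n}

lemma mem (h : IsListing σ H μ) (y : Fin k × Bool) : σ y ∈ H := (h.mem_iff _).2 ⟨y, rfl⟩

lemma unique (h : IsListing σ H μ) (h' : IsListing σ H' μ') : H = H' ∧ μ = μ' := by
  have hH : H = H' := by
    ext x
    rw [h.mem_iff, h'.mem_iff]
  refine ⟨hH, funext fun x => ?_⟩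
  by_cases hx : x ∈ H
  · obtain ⟨⟨i, b⟩, rfl⟩ := (h.mem_iff x).1 hx
    rw [h.match_eq, h'.match_eq]
  · rw [h.match_of_notMem x hx, h'.match_of_notMem x (hH ▸ hx)]

lemma perm_comp (h : IsListing σ H μ) (g : Equiv.Perm (ZMod n)) :
    IsListing (g ∘ σ) (H.map g.toEmbedding) (g ∘ μ ∘ g.symm) where
  injective := g.injective.comp h.injective
  mem_iff x := by
    simp only [Finset.mem_map_equiv, h.mem_iff, Function.comp_apply, Equiv.eq_symm_apply]
  match_eq i b := by simp only [Function.comp_apply, Equiv.symm_apply_apply, h.match_eq]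
  match_of_notMem x hx := by
    rw [Finset.mem_map_equiv] at hx
    simp only [Function.comp_apply, h.match_of_notMem _ hx, Equiv.apply_symm_apply]

end IsListing

lemma exists_isListing_of_injective {σ : Fin k × Bool → ZMod n} (hσ : Function.Injective σ) :
    ∃ H μ, IsListing σ H μ := by
  refine ⟨Finset.univ.image σ, Function.extend σ (fun y => σ (y.1, !y.2)) id, hσ,
    fun x => by simp only [Finset.mem_image, Finset.mem_univ, true_and],
    fun i b => hσ.extend_apply _ _ _, fun x hx => Function.extend_apply' _ _ _ ?_⟩
  simpa only [Finset.mem_image, Finset.mem_univ, true_and] using hx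

variable [NeZero n]

lemma IsListing.isConfig {σ : Fin k × Bool → ZMod n} {H : Finset (ZMod n)}
    {μ : ZMod n → ZMod n} (h : IsListing σ H μ) : IsConfig n k H μ := by
  have himage : H = Finset.univ.image σ := by
    ext x
    simp only [h.mem_iff, Finset.mem_image, Finset.mem_univ, true_and]
  refine ⟨?_, fun x hx => ?_, fun x => ?_, fun x hx hfix => ?_, h.match_of_notMem⟩
  · rw [himage, Finset.card_image_of_injective _ h.injective, Finset.card_univ, Fintype.card_prod,
      Fintype.card_fin, Fintype.card_bool, mul_comm]
  · obtain ⟨y, rfl⟩ := (h.mem_iff x).1 hx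
    exact h.match_eq y.1 y.2 ▸ h.mem _
  · by_cases hx : x ∈ H
    · obtain ⟨⟨i, b⟩, rfl⟩ := (h.mem_iff x).1 hx
      rw [h.match_eq, h.match_eq, Bool.not_not]
    · rw [h.match_of_notMem x hx, h.match_of_notMem x hx]
  · obtain ⟨⟨i, b⟩, rfl⟩ := (h.mem_iff x).1 hx
    rw [h.match_eq] at hfix
    exact Bool.not_ne_self b (congrArg Prod.snd (h.injective hfix))

lemma IsConfig.val_match_ne {H : Finset (ZMod n)} {μ : ZMod n → ZMod n} (hc : IsConfig n k H μ)
    {x : ZMod n} (hx : x ∈ H) : x.val ≠ (μ x).val :=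
  fun h => hc.2.2.2.1 x hx (ZMod.val_injective n h).symm

lemma IsConfig.card_filter_val_lt {H : Finset (ZMod n)} {μ : ZMod n → ZMod n}
    (hc : IsConfig n k H μ) : (H.filter fun x => x.val < (μ x).val).card = k := by
  have hswap : (H.filter fun x => ¬ x.val < (μ x).val).card =
      (H.filter fun x => x.val < (μ x).val).card := by
    refine Finset.card_nbij' μ μ (fun x hx => ?_) (fun x hx => ?_) (fun x _ => hc.2.2.1 x)
      fun x _ => hc.2.2.1 x
    all_goals
      obtain ⟨hxH, hx⟩ := Finset.mem_filter.1 hx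
      refine Finset.mem_filter.2 ⟨hc.2.1 x hxH, ?_⟩
      have hne := hc.val_match_ne hxH
      rw [hc.2.2.1]
      omega
  have hsplit := Finset.card_filter_add_card_filter_not (s := H) fun x => x.val < (μ x).val
  have hcard := hc.1
  omega

/-- The listing enumerates the hubs whose representative in `[0, n)` is smaller than that of their
partner. -/
lemma IsConfig.exists_isListing {H : Finset (ZMod n)} {μ : ZMod n → ZMod n}
    (hc : IsConfig n k H μ) : ∃ σ : Fin k × Bool → ZMod n, IsListing σ H μ := by
  have hinv := hc.2.2.1
  obtain ⟨e⟩ : Nonempty (Fin k ≃ H.filter fun x => x.val < (μ x).val) :=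
    ⟨(Finset.equivFinOfCardEq hc.card_filter_val_lt).symm⟩
  have he : ∀ i, (e i : ZMod n) ∈ H ∧ (e i : ZMod n).val < (μ (e i)).val := fun i =>
    Finset.mem_filter.1 (e i).2
  have hsurj : ∀ x ∈ H, x.val < (μ x).val → ∃ i, (e i : ZMod n) = x := fun x hx hlt =>
    ⟨e.symm ⟨x, Finset.mem_filter.2 ⟨hx, hlt⟩⟩, by rw [Equiv.apply_symm_apply]⟩
  refine ⟨fun y => if y.2 then e y.1 else μ (e y.1), ?_, fun x => ⟨fun hx => ?_, ?_⟩,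
    fun i b => ?_, hc.2.2.2.2⟩
  · rintro ⟨i, b⟩ ⟨j, c⟩ h
    obtain ⟨rfl, hij⟩ : b = c ∧ (e i : ZMod n) = e j := by
      cases b <;> cases c <;> simp only [if_true, Bool.false_eq_true, if_false] at h
      · exact ⟨rfl, Function.Involutive.injective hinv h⟩
      · have hj := (he j).2
        rw [← h, hinv] at hj
        exact absurd hj (he i).2.not_gt
      · have hi := (he i).2
        rw [h, hinv] at hi
        exact absurd hi (he j).2.not_gt
      · exact ⟨rfl, h⟩
    rw [e.injective (Subtype.ext hij)]
  · rcases (hc.val_match_ne hx).lt_or_gt with hlt | hgt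
    · obtain ⟨i, rfl⟩ := hsurj x hx hlt
      exact ⟨(i, true), rfl⟩
    · obtain ⟨i, hi⟩ := hsurj (μ x) (hc.2.1 x hx) (by rwa [hinv])
      exact ⟨(i, false), show μ (e i) = x by rw [hi, hinv]⟩
  · rintro ⟨⟨i, b⟩, rfl⟩
    cases b
    · exact hc.2.1 _ (he i).1
    · exact (he i).1
  · cases b
    · exact hinv _
    · rfl

/-- All configurations `(H, μ)` with `2 * k` hubs. -/
def configs (n : ℕ) [NeZero n] (k : ℕ) : Finset (Finset (ZMod n) × (ZMod n → ZMod n)) :=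
  Finset.univ.filter fun c => IsConfig n k c.1 c.2

/-- All listings of the configuration `c`. -/
def listings (k : ℕ) (c : Finset (ZMod n) × (ZMod n → ZMod n)) :
    Finset (Fin k × Bool → ZMod n) :=
  Finset.univ.filter fun σ => IsListing σ c.1 c.2

lemma mem_configs {c : Finset (ZMod n) × (ZMod n → ZMod n)} :
    c ∈ configs n k ↔ IsConfig n k c.1 c.2 := Finset.mem_filter_univ c

lemma mem_listings {c : Finset (ZMod n) × (ZMod n → ZMod n)} {σ : Fin k × Bool → ZMod n} :
    σ ∈ listings k c ↔ IsListing σ c.1 c.2 := Finset.mem_filter_univ σ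

/-- A permutation of the vertices carrying one configuration to the other carries listings to
listings. -/
lemma card_listings_le {c c' : Finset (ZMod n) × (ZMod n → ZMod n)} (hc : c ∈ configs n k)
    (hc' : c' ∈ configs n k) : (listings k c).card ≤ (listings k c').card := by
  obtain ⟨σ, hσ⟩ := (mem_configs.1 hc).exists_isListing
  obtain ⟨σ', hσ'⟩ := (mem_configs.1 hc').exists_isListing
  obtain ⟨g, hg⟩ := Equiv.Perm.exists_extending_pair σ σ' hσ.injective hσ'.injective
  obtain rfl : g ∘ σ = σ' := funext hg
  obtain ⟨hH, hμ⟩ := (hσ.perm_comp g).unique hσ'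
  refine Finset.card_le_card_of_injOn (g ∘ ·) (fun τ hτ => ?_) g.injective.comp_left.injOn
  have himage := (mem_listings.1 hτ).perm_comp g
  rw [hH, hμ] at himage
  exact mem_listings.2 himage

lemma card_listings_eq {c c' : Finset (ZMod n) × (ZMod n → ZMod n)} (hc : c ∈ configs n k)
    (hc' : c' ∈ configs n k) : (listings k c).card = (listings k c').card :=
  (card_listings_le hc hc').antisymm (card_listings_le hc' hc)

lemma pairwise_disjoint_listings :
    Pairwise (Function.onFun Disjoint (listings (n := n) k)) := fun c c' hne => by
  refine Finset.disjoint_left.2 fun σ hσ hσ' => hne ?_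
  exact Prod.ext_iff.2 ((mem_listings.1 hσ).unique (mem_listings.1 hσ'))

lemma card_filter_injective_eq {c : Finset (ZMod n) × (ZMod n → ZMod n)} (hc : c ∈ configs n k) :
    (Finset.univ.filter fun σ : Fin k × Bool → ZMod n => Function.Injective σ).card =
      (configs n k).card * (listings k c).card := by
  have hunion : (Finset.univ.filter fun σ : Fin k × Bool → ZMod n => Function.Injective σ) =
      (configs n k).biUnion (listings k) := by
    ext σ
    simp only [Finset.mem_filter_univ, Finset.mem_biUnion, mem_listings]
    refine ⟨fun hσ => ?_, fun ⟨c, _, h⟩ => h.injective⟩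
    obtain ⟨H, μ, h⟩ := exists_isListing_of_injective hσ
    exact ⟨(H, μ), mem_configs.2 h.isConfig, h⟩
  rw [hunion, Finset.card_biUnion fun c _ c' _ hne => pairwise_disjoint_listings hne,
    Finset.sum_congr rfl fun c' hc' => card_listings_eq hc' hc, Finset.sum_const, smul_eq_mul]

lemma pow_le_card_filter_injective (hn : 4 * k ≤ n) :
    ((n : ℝ) / 2) ^ (2 * k) ≤
      (Finset.univ.filter fun σ : Fin k × Bool → ZMod n => Function.Injective σ).card := by
  have hcard : (Finset.univ.filter fun σ : Fin k × Bool → ZMod n => Function.Injective σ).card =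
      n.descFactorial (2 * k) := by
    rw [← Fintype.card_subtype,
      Fintype.card_congr (Equiv.subtypeInjectiveEquivEmbedding (Fin k × Bool) (ZMod n)),
      Fintype.card_embedding_eq, ZMod.card, Fintype.card_prod, Fintype.card_fin, Fintype.card_bool,
      mul_comm]
  have hhalf : (n : ℝ) / 2 ≤ (n + 1 - 2 * k : ℕ) := by
    have : (4 * k : ℝ) ≤ n := by exact_mod_cast hn
    rw [Nat.cast_sub (by omega)]
    push_cast
    linarith
  rw [hcard]
  exact (pow_le_pow_left₀ (by positivity) hhalf _).trans
    (by exact_mod_cast Nat.pow_sub_le_descFactorial n (2 * k))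

lemma configs_nonempty (hn : 4 * k ≤ n) : (configs n k).Nonempty := by
  have hn0 : (0 : ℝ) < n := by exact_mod_cast NeZero.pos n
  have hcard := (pow_pos (half_pos hn0) (2 * k)).trans_le (pow_le_card_filter_injective hn)
  obtain ⟨σ, hσ⟩ := Finset.card_pos.1 (Nat.cast_pos.1 hcard)
  obtain ⟨H, μ, h⟩ := exists_isListing_of_injective ((Finset.mem_filter_univ σ).1 hσ)
  exact ⟨(H, μ), mem_configs.2 h.isConfig⟩

lemma card_mul_card_listings_mul_le_sum {B : Finset (Finset (ZMod n) × (ZMod n → ZMod n))}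
    (hB : B ⊆ configs n k) {c : Finset (ZMod n) × (ZMod n → ZMod n)} (hc : c ∈ configs n k)
    {W : (Fin k × Bool → ZMod n) → ℝ} (hW : ∀ σ, 0 ≤ W σ) {η : ℝ}
    (hηW : ∀ c ∈ B, ∀ σ ∈ listings k c, η ≤ W σ) :
    B.card * (listings k c).card * η ≤ ∑ σ, W σ := by
  calc B.card * (listings k c).card * η
      = ∑ c ∈ B, ∑ _σ ∈ listings k c, η := by
        simp only [Finset.sum_const, nsmul_eq_mul]
        rw [Finset.sum_congr rfl fun c' hc' => by rw [card_listings_eq (hB hc') hc],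
          Finset.sum_const, nsmul_eq_mul, mul_assoc]
    _ ≤ ∑ c ∈ B, ∑ σ ∈ listings k c, W σ :=
        Finset.sum_le_sum fun c hc => Finset.sum_le_sum (hηW c hc)
    _ = ∑ σ ∈ B.biUnion (listings k), W σ :=
        (Finset.sum_biUnion fun c _ c' _ hne => pairwise_disjoint_listings hne).symm
    _ ≤ ∑ σ, W σ :=
        Finset.sum_le_sum_of_subset_of_nonneg (Finset.subset_univ _) fun σ _ _ => hW σ

lemma configProb_mono {E E' : Finset (ZMod n) → (ZMod n → ZMod n) → Prop}
    (h : ∀ H μ, IsConfig n k H μ → E H μ → E' H μ) : configProb n k E ≤ configProb n k E' := by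
  refine div_le_div_of_nonneg_right (Nat.cast_le.2 (Finset.card_le_card ?_)) (Nat.cast_nonneg _)
  exact Finset.monotone_filter_right _ fun c _ hc => ⟨hc.1, h _ _ hc.1 hc.2⟩

lemma one_sub_le_configProb {E : Finset (ZMod n) → (ZMod n → ZMod n) → Prop}
    (hne : (configs n k).Nonempty) {δ : ℝ}
    (hbad : (((configs n k).filter fun c => ¬ E c.1 c.2).card : ℝ) ≤ δ * (configs n k).card) :
    1 - δ ≤ configProb n k E := by
  have hsplit := Finset.card_filter_add_card_filter_not (s := configs n k) fun c => E c.1 c.2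
  have hgood : configProb n k E =
      ((configs n k).filter fun c => E c.1 c.2).card / (configs n k).card := by
    rw [configProb, configs, Finset.filter_filter]
  rw [hgood, le_div_iff₀ (by exact_mod_cast hne.card_pos)]
  have : ((configs n k).card : ℝ) = ((configs n k).filter fun c => E c.1 c.2).card +
      ((configs n k).filter fun c => ¬ E c.1 c.2).card := by exact_mod_cast hsplit.symm
  linarith

/-- Markov's inequality over random configurations, with the expectation taken over all
`2k`-tuples of vertices: at least a fraction `4 ^ (-k)` of them are injective. -/
theorem one_sub_le_configProb_of_sum_le (hn : 4 * k ≤ n) {W : (Fin k × Bool → ZMod n) → ℝ}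
    (hW : ∀ σ, 0 ≤ W σ) {η δ : ℝ} (hη : 0 < η) (hδ : 0 ≤ δ)
    (hsum : ∑ σ, W σ ≤ δ * η * ((n : ℝ) / 2) ^ (2 * k))
    {E : Finset (ZMod n) → (ZMod n → ZMod n) → Prop}
    (hE : ∀ σ H μ, IsListing σ H μ → W σ ≤ η → E H μ) :
    1 - δ ≤ configProb n k E := by
  obtain ⟨c, hc⟩ := configs_nonempty hn
  refine one_sub_le_configProb ⟨c, hc⟩ ?_
  set B := (configs n k).filter fun c => ¬ E c.1 c.2
  have hbad : B.card * (listings k c).card * η ≤ ∑ σ, W σ := by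
    refine card_mul_card_listings_mul_le_sum (Finset.filter_subset _ _) hc hW fun c' hc' σ hσ => ?_
    by_contra! hlt
    exact (Finset.mem_filter.1 hc').2 (hE σ _ _ (mem_listings.1 hσ) hlt.le)
  have hcount : ((n : ℝ) / 2) ^ (2 * k) ≤ (configs n k).card * (listings k c).card := by
    exact_mod_cast (pow_le_card_filter_injective hn).trans_eq
      (congrArg Nat.cast (card_filter_injective_eq hc))
  obtain ⟨σ, hσ⟩ := (mem_configs.1 hc).exists_isListing
  have hpos : (0 : ℝ) < (listings k c).card := by
    exact_mod_cast Finset.card_pos.2 ⟨σ, mem_listings.2 hσ⟩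
  refine le_of_mul_le_mul_right ?_ (mul_pos hpos hη)
  have := mul_le_mul_of_nonneg_left hcount (mul_nonneg hδ hη.le)
  linarith

end Configurations

/-! ### Expected resolvent sum -/

section Expectation

variable {n : ℕ} [NeZero n] {k : ℕ} {c r L : ℝ}

/-- Nonzero frequencies with representative of absolute value at most `√n`, for which the free
step need not have decayed after time of order `n`. -/
def lowFreq (n : ℕ) [NeZero n] : Finset (ZMod n) :=
  (Finset.univ.erase 0).filter fun ξ => (ξ.valMinAbs : ℝ) ^ 2 ≤ n

/-- Majorant of the resolvent sum of order `k + 1` at scale `m = r ^ 2`, as a function of a listing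
`σ` of the hubs. Low frequencies use the free dissipation, of rate `c`, in one factor and one
matching edge in each of the `k` others; high frequencies use the free dissipation only. -/
def resolventMajorant (k : ℕ) (c r : ℝ) (σ : Fin k × Bool → ZMod n) : ℝ :=
  ∑ ξ ∈ lowFreq n, 1 / (1 + (r * √(c / n)) ^ 2 * (ξ.valMinAbs : ℝ) ^ 2) *
      ∏ i, edgeDamping (r ^ 2) ξ (σ (i, true) - σ (i, false)) +
    n / (c * r ^ 2) ^ (k + 1)

lemma resolventMajorant_nonneg (hc : 0 ≤ c) (σ : Fin k × Bool → ZMod n) :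
    0 ≤ resolventMajorant k c r σ :=
  add_nonneg (Finset.sum_nonneg fun ξ _ => mul_nonneg (by positivity)
    (Finset.prod_nonneg fun i _ => edgeDamping_nonneg (sq_nonneg r) _ _)) (by positivity)

section Bounds

variable {p q : ℝ} {T : ℕ} {H : Finset (ZMod n)} {μ : ZMod n → ZMod n}

lemma one_div_pow_le_of_mem_lowFreq (hp : 0 ≤ p) (hq : 0 ≤ q) (hpq : p + q ≤ 1) (hc : 0 ≤ c)
    {σ : Fin k × Bool → ZMod n} (hσ : IsListing σ H μ) {ξ : ZMod n} (hξ : ξ ∈ lowFreq n)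
    (hrate : c * min 1 ((ξ.valMinAbs : ℝ) ^ 2 / n) ≤ dissipationSymbol p q T H μ ξ) :
    1 / (1 + r ^ 2 * dissipationSymbol p q T H μ ξ) ^ (k + 1) ≤
      1 / (1 + (r * √(c / n)) ^ 2 * (ξ.valMinAbs : ℝ) ^ 2) *
        ∏ i, edgeDamping (r ^ 2) ξ (σ (i, true) - σ (i, false)) := by
  have hn : (0 : ℝ) < n := by exact_mod_cast NeZero.pos n
  have hκ := dissipationSymbol_nonneg hp hq hpq T H μ ξ
  rw [min_eq_right ((div_le_one hn).2 (Finset.mem_filter.1 hξ).2)] at hrate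
  have hfree : (r * √(c / n)) ^ 2 * (ξ.valMinAbs : ℝ) ^ 2 ≤
      r ^ 2 * dissipationSymbol p q T H μ ξ := by
    rw [mul_pow, Real.sq_sqrt (by positivity), mul_assoc, div_mul_eq_mul_div, mul_div_assoc]
    exact mul_le_mul_of_nonneg_left hrate (sq_nonneg r)
  have hedge : ∀ i, ‖(ZMod.stdAddChar (ξ * (σ (i, true) - σ (i, false))) : ℂ) - 1‖ ^ 2 ≤
      dissipationSymbol p q T H μ ξ := fun i => by
    simpa only [hσ.match_eq, Bool.not_false] using
      norm_sq_stdAddChar_sub_one_le_dissipationSymbol hp hq hpq T μ (hσ.mem (i, false)) ξ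
  calc 1 / (1 + r ^ 2 * dissipationSymbol p q T H μ ξ) ^ (k + 1)
      = 1 / (1 + r ^ 2 * dissipationSymbol p q T H μ ξ) *
          ∏ _i : Fin k, 1 / (1 + r ^ 2 * dissipationSymbol p q T H μ ξ) := by
        rw [Finset.prod_const, Finset.card_univ, Fintype.card_fin, ← pow_succ', one_div_pow]
    _ ≤ _ := by
        unfold edgeDamping
        gcongr with i
        exact hedge i

lemma sum_one_div_pow_le_of_le_dissipationSymbol (hc : 0 < c) (hr : 0 < r) {s : Finset (ZMod n)}
    (hrate : ∀ ξ ∈ s, c ≤ dissipationSymbol p q T H μ ξ) :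
    ∑ ξ ∈ s, 1 / (1 + r ^ 2 * dissipationSymbol p q T H μ ξ) ^ (k + 1) ≤
      n / (c * r ^ 2) ^ (k + 1) := by
  have hterm : ∀ ξ ∈ s, 1 / (1 + r ^ 2 * dissipationSymbol p q T H μ ξ) ^ (k + 1) ≤
      1 / (c * r ^ 2) ^ (k + 1) := fun ξ hξ => by
    gcongr
    linarith [mul_le_mul_of_nonneg_left (hrate ξ hξ) (sq_nonneg r)]
  have hcard : s.card ≤ n := (Finset.card_le_univ s).trans_eq (ZMod.card n)
  calc _ ≤ s.card * (1 / (c * r ^ 2) ^ (k + 1)) := by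
        simpa only [nsmul_eq_mul] using Finset.sum_le_card_nsmul _ _ _ hterm
    _ ≤ n * (1 / (c * r ^ 2) ^ (k + 1)) := by gcongr
    _ = n / (c * r ^ 2) ^ (k + 1) := mul_one_div _ _

lemma resolventSum_le_resolventMajorant (hp : 0 ≤ p) (hq : 0 ≤ q) (hpq : p + q ≤ 1) (hc : 0 < c)
    (hr : 0 < r) (hrate : ∀ ξ : ZMod n,
      c * min 1 ((ξ.valMinAbs : ℝ) ^ 2 / n) ≤ dissipationSymbol p q T H μ ξ)
    {σ : Fin k × Bool → ZMod n} (hσ : IsListing σ H μ) :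
    resolventSum (k + 1) (r ^ 2) p q T H μ ≤ resolventMajorant k c r σ := by
  have hn : (0 : ℝ) < n := by exact_mod_cast NeZero.pos n
  unfold resolventSum resolventMajorant
  rw [← Finset.sum_filter_add_sum_filter_not _ fun ξ : ZMod n => (ξ.valMinAbs : ℝ) ^ 2 ≤ n]
  refine add_le_add (Finset.sum_le_sum fun ξ hξ => ?_)
    (sum_one_div_pow_le_of_le_dissipationSymbol hc hr fun ξ hξ => ?_)
  · exact one_div_pow_le_of_mem_lowFreq hp hq hpq hc.le hσ hξ (hrate ξ)
  · have hlarge : 1 ≤ (ξ.valMinAbs : ℝ) ^ 2 / n :=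
      (one_le_div hn).2 (not_le.1 (Finset.mem_filter.1 hξ).2).le
    simpa only [min_eq_left hlarge, mul_one] using hrate ξ

end Bounds

lemma le_addOrderOf_of_mem_lowFreq (hrn : r ^ 2 ≤ n) {ξ : ZMod n} (hξ : ξ ∈ lowFreq n) :
    r ≤ addOrderOf ξ := by
  obtain ⟨hξ0, hv⟩ := Finset.mem_filter.1 hξ
  have hn : (0 : ℝ) < n := by exact_mod_cast NeZero.pos n
  have hsqrt : √(n : ℝ) * √n ≤ addOrderOf ξ * √n :=
    calc √(n : ℝ) * √n = n := Real.mul_self_sqrt hn.le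
      _ ≤ addOrderOf ξ * |(ξ.valMinAbs : ℝ)| :=
          le_addOrderOf_mul_abs_valMinAbs (Finset.ne_of_mem_erase hξ0)
      _ ≤ addOrderOf ξ * √n := by
          gcongr
          exact Real.abs_le_sqrt hv
  exact (Real.le_sqrt_of_sq_le hrn).trans (le_of_mul_le_mul_right hsqrt (Real.sqrt_pos.2 hn))

lemma sum_lowFreq_mul_pow_le (hc : 0 < c) (hr : 1 ≤ r) (hrn : r ^ 2 ≤ n) :
    ∑ ξ ∈ lowFreq n, 1 / (1 + (r * √(c / n)) ^ 2 * (ξ.valMinAbs : ℝ) ^ 2) *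
        (n * ∑ d, edgeDamping (r ^ 2) ξ d) ^ k ≤
      4 / (r * √(c / n)) * (n * (4 * n / r)) ^ k := by
  have hn : (0 : ℝ) < n := by exact_mod_cast NeZero.pos n
  calc _ ≤ ∑ ξ ∈ lowFreq n, 1 / (1 + (r * √(c / n)) ^ 2 * (ξ.valMinAbs : ℝ) ^ 2) *
          (n * (4 * n / r)) ^ k := by
        gcongr with ξ hξ
        · exact mul_nonneg hn.le
            (Finset.sum_nonneg fun d _ => edgeDamping_nonneg (sq_nonneg r) _ _)
        · exact sum_edgeDamping_le hr (le_addOrderOf_of_mem_lowFreq hrn hξ)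
    _ = (∑ ξ ∈ lowFreq n, 1 / (1 + (r * √(c / n)) ^ 2 * (ξ.valMinAbs : ℝ) ^ 2)) *
          (n * (4 * n / r)) ^ k := (Finset.sum_mul _ _ _).symm
    _ ≤ (∑ ξ ∈ Finset.univ.erase (0 : ZMod n),
          1 / (1 + (r * √(c / n)) ^ 2 * (ξ.valMinAbs : ℝ) ^ 2)) * (n * (4 * n / r)) ^ k := by
        gcongr
        exact Finset.filter_subset _ _
    _ ≤ 4 / (r * √(c / n)) * (n * (4 * n / r)) ^ k := by
        gcongr
        exact sum_one_div_one_add_valMinAbs_sq_le (by positivity)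

lemma sum_resolventMajorant_eq :
    ∑ σ : Fin k × Bool → ZMod n, resolventMajorant k c r σ =
      ∑ ξ ∈ lowFreq n, 1 / (1 + (r * √(c / n)) ^ 2 * (ξ.valMinAbs : ℝ) ^ 2) *
          (n * ∑ d, edgeDamping (r ^ 2) ξ d) ^ k +
        (n : ℝ) ^ (2 * k) * (n / (c * r ^ 2) ^ (k + 1)) := by
  have hcard : (Fintype.card (Fin k × Bool → ZMod n) : ℝ) = (n : ℝ) ^ (2 * k) := by
    rw [Fintype.card_fun, ZMod.card, Fintype.card_prod, Fintype.card_fin, Fintype.card_bool,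
      mul_comm, Nat.cast_pow]
  unfold resolventMajorant
  rw [Finset.sum_add_distrib, Finset.sum_comm, Finset.sum_const, Finset.card_univ, nsmul_eq_mul,
    hcard]
  simp only [← Finset.mul_sum, sum_prod_sub]

lemma sum_resolventMajorant_le (hc : 0 < c) (hr : 1 ≤ r) (hrn : r ^ 2 ≤ n) (hL : 1 ≤ L)
    (hrL : r ^ (k + 1) = L * √n) :
    ∑ σ : Fin k × Bool → ZMod n, resolventMajorant k c r σ ≤
      (n : ℝ) ^ (2 * k) * ((4 ^ (k + 1) / √c + 1 / c ^ (k + 1)) / L) := by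
  have hn : (0 : ℝ) < n := by exact_mod_cast NeZero.pos n
  have hlow : 4 / (r * √(c / n)) * (n * (4 * n / r)) ^ k =
      (n : ℝ) ^ (2 * k) * (4 ^ (k + 1) / √c / L) :=
    calc _ = 4 ^ (k + 1) * (n : ℝ) ^ (2 * k) * √n / (√c * r ^ (k + 1)) := by
          rw [Real.sqrt_div hc.le, mul_pow, div_pow, mul_pow, pow_succ r, pow_succ 4, pow_mul' _ 2,
            pow_two]
          field_simp
      _ = _ := by
          rw [hrL]
          field_simp
  have hhigh : (n : ℝ) / (c * r ^ 2) ^ (k + 1) ≤ 1 / c ^ (k + 1) / L :=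
    calc (n : ℝ) / (c * r ^ 2) ^ (k + 1) = 1 / c ^ (k + 1) / L ^ 2 := by
          rw [mul_pow, ← pow_mul, mul_comm 2, pow_mul, hrL, mul_pow, Real.sq_sqrt hn.le]
          field_simp
      _ ≤ 1 / c ^ (k + 1) / L := by
          gcongr
          exact le_self_pow₀ hL two_ne_zero
  calc _ ≤ 4 / (r * √(c / n)) * (n * (4 * n / r)) ^ k +
          (n : ℝ) ^ (2 * k) * (n / (c * r ^ 2) ^ (k + 1)) := by
        rw [sum_resolventMajorant_eq]
        gcongr
        exact sum_lowFreq_mul_pow_le hc hr hrn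
    _ ≤ (n : ℝ) ^ (2 * k) * (4 ^ (k + 1) / √c / L) +
          (n : ℝ) ^ (2 * k) * (1 / c ^ (k + 1) / L) := by
        rw [hlow]
        gcongr
    _ = _ := by ring

end Expectation

lemma exists_pow_succ_eq_mul_sqrt {k n : ℕ} (hk : 1 ≤ k) (hn : 1 ≤ n) {L : ℝ} (hL : 1 ≤ L)
    (hLn : L ^ 2 ≤ n) :
    ∃ r : ℝ, 1 ≤ r ∧ r ^ 2 ≤ n ∧ r ^ (k + 1) = L * √n ∧
      r ^ 2 ≤ L ^ 2 * (n : ℝ) ^ (1 / ((k : ℝ) + 1)) := by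
  have hn1 : (1 : ℝ) ≤ n := by exact_mod_cast hn
  have hk0 : k + 1 ≠ 0 := k.succ_ne_zero
  have hbase : 1 ≤ L * √n := one_le_mul_of_one_le_of_one_le hL (Real.one_le_sqrt.2 hn1)
  set r := (L * √n) ^ (((k + 1 : ℕ) : ℝ)⁻¹)
  have hpow : r ^ (k + 1) = L * √n := Real.rpow_inv_natCast_pow (by linarith) hk0
  have hpow_sq : (r ^ 2) ^ (k + 1) = L ^ 2 * n := by
    rw [pow_right_comm, hpow, mul_pow, Real.sq_sqrt (by linarith)]
  refine ⟨r, Real.one_le_rpow hbase (by positivity), ?_, hpow, ?_⟩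
  · refine le_of_pow_le_pow_left₀ hk0 (by linarith) ?_
    calc (r ^ 2) ^ (k + 1) = L ^ 2 * n := hpow_sq
      _ ≤ (n : ℝ) * n := by gcongr
      _ = (n : ℝ) ^ 2 := (sq _).symm
      _ ≤ (n : ℝ) ^ (k + 1) := pow_le_pow_right₀ hn1 (by omega)
  · refine le_of_pow_le_pow_left₀ hk0 (by positivity) ?_
    have hroot : ((n : ℝ) ^ (1 / ((k : ℝ) + 1))) ^ (k + 1) = n := by
      rw [one_div, ← Nat.cast_add_one]
      exact Real.rpow_inv_natCast_pow (by linarith) hk0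
    rw [hpow_sq, mul_pow, hroot]
    gcongr
    exact le_self_pow₀ (one_le_pow₀ hL) hk0

/-- Expectation bounds the resolvent sum by `O(1 / L)` at scale `m = r ^ 2` with
`r ^ (k + 1) = L * √n`, so a large constant `L` suffices for Markov's inequality. -/
theorem exists_one_sub_le_configProb_resolventSum_le {k : ℕ} (hk : 1 ≤ k) {p q : ℝ} (hp : 0 ≤ p)
    (hq : 0 ≤ q) (hpos : 0 < p + q) (hpq : p + q < 1) {δ η : ℝ} (hδ : 0 < δ) (hη : 0 < η) :
    ∃ (D : ℝ) (N : ℕ), ∀ (n : ℕ) [NeZero n], N ≤ n → ∀ T, n ≤ T →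
      ∃ m : ℝ, 1 ≤ m ∧ m ≤ D * (n : ℝ) ^ (1 / ((k : ℝ) + 1)) ∧
        1 - δ ≤ configProb n k fun H μ => resolventSum (k + 1) m p q T H μ ≤ η := by
  obtain ⟨c, hc, hrate⟩ := exists_mul_min_le_dissipationSymbol hp hq hpos hpq
  set Q : ℝ := 4 ^ (k + 1) / √c + 1 / c ^ (k + 1)
  set L : ℝ := max 1 (Q * 4 ^ k / (δ * η))
  have hL : 1 ≤ L := le_max_left _ _
  have hQL : Q / L ≤ δ * η / 4 ^ k := by
    rw [div_le_div_iff₀ (by linarith) (by positivity), ← div_le_iff₀' (by positivity)]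
    exact le_max_right _ _
  refine ⟨L ^ 2, max (4 * k) ⌈L ^ 2⌉₊, fun n _ hN T hT => ?_⟩
  obtain ⟨hkn, hLn⟩ := max_le_iff.1 hN
  obtain ⟨r, hr, hrn, hrL, hrD⟩ :=
    exists_pow_succ_eq_mul_sqrt hk (NeZero.pos n) hL (Nat.ceil_le.1 hLn)
  have hr0 : 0 < r := by linarith
  refine ⟨r ^ 2, one_le_pow₀ hr, hrD, one_sub_le_configProb_of_sum_le hkn
    (resolventMajorant_nonneg (r := r) hc.le) hη hδ.le ?_ fun σ H μ hσ hση =>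
      (resolventSum_le_resolventMajorant hp hq hpq.le hc hr0 (hrate n T hT H μ) hσ).trans hση⟩
  calc _ ≤ (n : ℝ) ^ (2 * k) * (Q / L) := sum_resolventMajorant_le hc hr hrn hL hrL
    _ ≤ (n : ℝ) ^ (2 * k) * (δ * η / 4 ^ k) := by gcongr
    _ = δ * η * ((n : ℝ) / 2) ^ (2 * k) := by
        rw [div_pow, pow_mul 2, show (2 : ℝ) ^ 2 = 4 by norm_num]
        ring

/-! ### The mixing time -/

lemma ceil_add_ceil_le {α β m l : ℝ} (hα : 0 ≤ α) (hβ : 0 ≤ β) (hm : 1 ≤ m) (hl : 1 / 2 ≤ l) :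
    (⌈α * m⌉₊ : ℝ) + ⌈β * m * l⌉₊ ≤ (2 * α + β + 4) * (m * l) := by
  have hml : 1 ≤ 2 * (m * l) := by nlinarith
  have hα_ceil := (Nat.ceil_lt_add_one (by positivity : 0 ≤ α * m)).le
  have hβ_ceil := (Nat.ceil_lt_add_one (by positivity : 0 ≤ β * m * l)).le
  have hα_le : α * m ≤ 2 * l * (α * m) := le_mul_of_one_le_left (by positivity) (by linarith)
  linarith

lemma mul_rpow_one_div_add_one {x y : ℝ} (hx : 0 < x) (hy : y + 1 ≠ 0) :
    x * x ^ (1 / (y + 1)) = x ^ ((y + 2) / (y + 1)) := by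
  rw [show (y + 2) / (y + 1) = 1 + 1 / (y + 1) by field_simp; ring, Real.rpow_add hx,
    Real.rpow_one]

lemma half_le_log_one_div {ε : ℝ} (hε : 0 < ε) (hε2 : ε ≤ 1 / 2) : 1 / 2 ≤ Real.log (1 / ε) := by
  have hlog : Real.log 2 ≤ Real.log (1 / ε) :=
    Real.log_le_log two_pos ((le_div_iff₀ hε).2 (by linarith))
  linarith [Real.log_two_gt_d9]

lemma exists_mixedBy_of_resolventSum_le {n k d : ℕ} [NeZero n] (hd : d ≠ 0) {p q a : ℝ}
    (hp : 0 ≤ p) (hq : 0 ≤ q) (ha : 0 ≤ a) (hpqa : p + q + a ≤ 1) {H : Finset (ZMod n)}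
    {μ : ZMod n → ZMod n} (hc : IsConfig n k H μ) {C : ℝ} (hC : 0 < C) {T : ℕ}
    (henergy : ∀ f, sqNorm f - sqNorm ((freeStep p q)^[T] f) +
      ∑ z ∈ H, sqNorm (fwdDiff (μ z - z) f) ≤
        C * (sqNorm f - sqNorm ((hubStep p q a μ)^[T] f)))
    {m : ℝ} (hm : 1 ≤ m) (hres : resolventSum d m p q T H μ ≤ 1 / (8 * 2 ^ d))
    {ε : ℝ} (hε : 0 < ε) (hε2 : ε ≤ 1 / 2) :
    ∃ t : ℕ, (t : ℝ) ≤ T * ((4 * C * d + 2 * C + 4) * (m * Real.log (1 / ε))) ∧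
      mixedBy n (cycleP n p q a H μ) ε t := by
  refine ⟨T * (⌈2 * C * d * m⌉₊ + ⌈2 * C * m * Real.log (1 / ε)⌉₊), ?_,
    mixedBy_of_resolventSum_le hd hp hq ha hpqa hc hC henergy (by linarith) hres hε
      (by linarith [Nat.le_ceil (2 * C * d * m)])
      (by linarith [Nat.le_ceil (2 * C * m * Real.log (1 / ε))])⟩
  have hceil := ceil_add_ceil_le (by positivity : 0 ≤ 2 * C * d) (by positivity : 0 ≤ 2 * C) hm
    (half_le_log_one_div hε hε2)
  push_cast
  gcongr
  linarith

/-- for every `δ > 0` there are `γ = γ(δ) < ∞` and `N` such that for all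
`n ≥ N` and all `0 < ε < 1/2`, with probability at least `1 - δ` over the random hubs
and matching, `t_mix(ε) ≤ γ · n^{(k+2)/(k+1)} · log(1/ε)`. -/
theorem mixing_time_upper_bound (k : ℕ) (hk : 1 ≤ k) (p q a : ℝ)
    (hp : 0 < p) (hq : 0 < q) (ha : 0 < a) (hpqa : p + q + a ≤ 1) (hpq : q < p)
    (δ : ℝ) (hδ : 0 < δ) :
    ∃ (γ : ℝ) (N : ℕ), ∀ (n : ℕ) [NeZero n], N ≤ n →
      ∀ ε : ℝ, 0 < ε → ε < 1 / 2 →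
        1 - δ ≤ configProb n k (fun H μ =>
          ∃ t : ℕ, (t : ℝ) ≤ γ * (n : ℝ) ^ (((k : ℝ) + 2) / ((k : ℝ) + 1)) * Real.log (1 / ε) ∧
            mixedBy n (cycleP n p q a H μ) ε t) := by
  obtain ⟨K, hK, C, hC, henergy⟩ := exists_energy_inequality k hq hpq ha hpqa
  obtain ⟨D, N, hprob⟩ := exists_one_sub_le_configProb_resolventSum_le hk hp.le hq.le
    (by linarith) (by linarith) hδ (by positivity : (0 : ℝ) < 1 / (8 * 2 ^ (k + 1)))
  set A : ℝ := 4 * C * (k + 1 : ℕ) + 2 * C + 4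
  refine ⟨K * A * D, max N (2 * k + 1), fun n _ hn ε hε hε2 => ?_⟩
  obtain ⟨hN, hkn⟩ := max_le_iff.1 hn
  obtain ⟨m, hm, hmD, hgood⟩ := hprob n hN (K * n) (Nat.le_mul_of_pos_left n hK)
  refine hgood.trans (configProb_mono fun H μ hc hres => ?_)
  obtain ⟨t, ht, hmix⟩ := exists_mixedBy_of_resolventSum_le k.succ_ne_zero hp.le hq.le ha.le hpqa
    hc hC (henergy n hkn H μ hc) hm hres hε hε2.le
  have hlog := half_le_log_one_div hε hε2.le
  refine ⟨t, ht.trans ?_, hmix⟩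
  calc ((K * n : ℕ) : ℝ) * (A * (m * Real.log (1 / ε)))
      ≤ (K * n : ℕ) * (A * (D * (n : ℝ) ^ (1 / ((k : ℝ) + 1)) * Real.log (1 / ε))) := by gcongr
    _ = K * A * D * (n * (n : ℝ) ^ (1 / ((k : ℝ) + 1))) * Real.log (1 / ε) := by
        push_cast
        ring
    _ = _ := by
        rw [mul_rpow_one_div_add_one (by exact_mod_cast NeZero.pos n) (by positivity)]
end
end

section
/- There exist constants γ* > 0 and ε* > 0 such that the probability (over the random choice of the 2k hubs and the random perfect matching) that the total variation mixing time satisfies t_mix(ε*) ≥ γ* · n^{(k+2)/(k+1)} tends to 1 as n → ∞. -/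
open scoped BigOperators

noncomputable section

attribute [local instance 10] Classical.propDecidable

/-!
A step of the chain is an i.i.d. choice between the moves `x ↦ x + 1`, `x ↦ x - 1`, `x ↦ μ x` and
`x ↦ x`. Hence `X_t = X_0 + S_t + ∑ r, c_r (μ r - r)`, where `S_t` is the net number of `±1` steps,
`c_r` is the net number of crossings of the edge from `r` to `μ r`, and `r` runs over one endpoint
of each of the `k` matching edges. The variance of `S_t` is at most `t`, and the second moment of
`c_r` up to time `t ≤ τ`, averaged over the starting point, is `O(τ / n)`. By Chebyshev's inequality
some starting point has a time-`t` law giving mass at least `1 / 2` to a set of size of order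
`√τ (√(τ / n)) ^ k`. For `τ = δ² n ^ ((k + 2) / (k + 1))` with `δ` small this is at most `n / 4`.

The bound on `c_r` is a Kipnis–Varadhan argument. Let `f` be `1` at `r`, `-1` at `μ r` and `0`
elsewhere, and let `g` solve `g - (1 - 1 / τ) P g = a f`. Then `c_r + g(X)` is a martingale up to
the drift `(1 / τ) P g`, so it suffices to bound `∑ g²` by `O(τ)` and the Dirichlet form of `g` by
`O(1)`. Pairing the equation with `g` bounds the Dirichlet form by a multiple of
`a (g r - g (μ r))`, while the edge `{r, μ r}` alone makes it at least `a (g r - g (μ r))²`; so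
`g r - g (μ r)` is bounded and both estimates follow.
-/

/-! ### Chains driven by i.i.d. random moves -/

section MarkovOp

variable {ι U V A : Type*} [Fintype ι] {w : ι → ℝ} {m : ι → V → V}

/-- Transition operator of the chain that moves from `x` to `m i x` with probability `w i`:
`(markovOp w m ^ t) f x` is the expectation of `f` at time `t` for the chain started at `x`. -/
def markovOp (w : ι → ℝ) (m : ι → V → V) : Module.End ℝ (V → ℝ) :=
  ∑ i, w i • LinearMap.funLeft ℝ ℝ (m i)

lemma markovOp_apply (f : V → ℝ) (x : V) : markovOp w m f x = ∑ i, w i * f (m i x) := by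
  simp [markovOp, LinearMap.funLeft_apply]

lemma markovOp_pow_succ_apply (t : ℕ) (f : V → ℝ) (x : V) :
    (markovOp w m ^ (t + 1)) f x = ∑ i, w i * (markovOp w m ^ t) f (m i x) := by
  rw [pow_succ', Module.End.mul_apply, markovOp_apply]

lemma markovOp_pow_monotone (hw : ∀ i, 0 ≤ w i) (t : ℕ) : Monotone (markovOp w m ^ t) := by
  rw [Module.End.coe_pow]
  refine Monotone.iterate (fun f g hfg x => ?_) t
  simp only [markovOp_apply]
  exact Finset.sum_le_sum fun i _ => mul_le_mul_of_nonneg_left (hfg _) (hw i)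

lemma markovOp_pow_one (hw1 : ∑ i, w i = 1) (t : ℕ) : (markovOp w m ^ t) 1 = 1 := by
  rw [Module.End.coe_pow]
  refine Function.iterate_fixed (funext fun x => ?_) t
  simp [markovOp_apply, hw1]

lemma markovOp_pow_comp {m' : ι → U → U} {π : V → U} (h : ∀ i x, π (m i x) = m' i (π x))
    (t : ℕ) (f : U → ℝ) :
    (markovOp w m ^ t) (f ∘ π) = (markovOp w m' ^ t) f ∘ π := by
  have semiconj : Function.Semiconj (· ∘ π) (markovOp w m') (markovOp w m) := fun f => by
    ext x
    simp [markovOp_apply, h]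
  simpa only [Module.End.coe_pow] using ((semiconj.iterate_right t) f).symm

lemma markovOp_pow_eqOn {s : Set V} (hs : ∀ i, Set.MapsTo (m i) s s) {f g : V → ℝ}
    (hfg : Set.EqOn f g s) (t : ℕ) : Set.EqOn ((markovOp w m ^ t) f) ((markovOp w m ^ t) g) s := by
  induction t with
  | zero => exact hfg
  | succ t ih =>
    intro x hx
    rw [markovOp_pow_succ_apply, markovOp_pow_succ_apply]
    exact Finset.sum_congr rfl fun i _ => by rw [ih (hs i hx)]

lemma sum_mul_add_sq (hw1 : ∑ i, w i = 1) (u : ℝ) (v : ι → ℝ) :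
    ∑ i, w i * (u + v i) ^ 2 = u ^ 2 + 2 * u * ∑ i, w i * v i + ∑ i, w i * v i ^ 2 := by
  calc ∑ i, w i * (u + v i) ^ 2
      = ∑ i, (w i * u ^ 2 + 2 * u * (w i * v i) + w i * v i ^ 2) :=
        Finset.sum_congr rfl fun i _ => by ring
    _ = _ := by
        rw [Finset.sum_add_distrib, Finset.sum_add_distrib, ← Finset.sum_mul, hw1, one_mul,
          ← Finset.mul_sum]

/-! ### Additive functionals -/

/-- Moves of the chain together with an additive functional: the move `i` made at `x` adds
`φ i x` to the second component. -/
def skewMove [Add A] (m : ι → V → V) (φ : ι → V → A) (i : ι) (z : V × A) : V × A :=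
  (m i z.1, z.2 + φ i z.1)

lemma markovOp_skewMove_pow_map [AddMonoid A] {φ : ι → V → A} (ψ : A →+ ℝ) (t : ℕ) (f : ℝ → ℝ)
    (x : V) :
    (markovOp w (skewMove m φ) ^ t) (fun z => f (ψ z.2)) (x, 0) =
      (markovOp w (skewMove m fun i y => ψ (φ i y)) ^ t) (fun z => f z.2) (x, 0) := by
  have := congrFun (markovOp_pow_comp (w := w) (m := skewMove m φ) (π := Prod.map id ψ)
    (m' := skewMove m fun i y => ψ (φ i y)) (fun i z => by simp [skewMove]) t fun z => f z.2) (x, 0)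
  simpa [Function.comp_def] using this

lemma markovOp_skewMove_pow_fst [Add A] {φ : ι → V → A} (t : ℕ) (f : V → ℝ) :
    (markovOp w (skewMove m φ) ^ t) (fun z => f z.1) = fun z => (markovOp w m ^ t) f z.1 :=
  markovOp_pow_comp (π := Prod.fst) (fun _ _ => rfl) t f

lemma markovOp_pow_displacement [AddMonoid V] [AddMonoid A] {φ : ι → V → A} (D : A →+ V)
    (hD : ∀ i x, m i x = x + D (φ i x)) (t : ℕ) (f : V → ℝ) (x : V) :
    (markovOp w (skewMove m φ) ^ t) (fun z => f (x + D z.2)) (x, 0) = (markovOp w m ^ t) f x := by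
  have invariant : ∀ i, Set.MapsTo (skewMove m φ i) {z | z.1 = x + D z.2} {z | z.1 = x + D z.2} :=
    fun i z hz => by
      rw [Set.mem_ofPred_eq] at hz ⊢
      simp only [skewMove, map_add]
      rw [hD, ← add_assoc, ← hz]
  have agree : Set.EqOn (fun z => f (x + D z.2)) (fun z : V × A => f z.1) {z | z.1 = x + D z.2} :=
    fun z hz => congrArg f (Eq.symm hz)
  rw [markovOp_pow_eqOn invariant agree t (by simp : (x, (0 : A)) ∈ _), markovOp_skewMove_pow_fst]

lemma markovOp_pow_sq_of_iid (hw1 : ∑ i, w i = 1) (s : ι → ℝ) (t : ℕ) (b : ℝ) (z : V × ℝ) :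
    (markovOp w (skewMove m fun i _ => s i) ^ t) (fun z => (z.2 - b) ^ 2) z =
      (z.2 + t * ∑ i, w i * s i - b) ^ 2 + t * (∑ i, w i * s i ^ 2 - (∑ i, w i * s i) ^ 2) := by
  induction t generalizing z with
  | zero => simp
  | succ t ih =>
    set mean := ∑ i, w i * s i
    set var := ∑ i, w i * s i ^ 2 - mean ^ 2 with hvar
    calc (markovOp w (skewMove m fun i _ => s i) ^ (t + 1)) (fun z => (z.2 - b) ^ 2) z
        = ∑ i, (w i * (z.2 + t * mean - b + s i) ^ 2 + w i * (t * var)) := by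
          rw [markovOp_pow_succ_apply]
          refine Finset.sum_congr rfl fun i _ => ?_
          rw [ih]
          simp only [skewMove]
          ring
      _ = (z.2 + (t + 1 : ℕ) * mean - b) ^ 2 + (t + 1 : ℕ) * var := by
          rw [Finset.sum_add_distrib, sum_mul_add_sq hw1, ← Finset.sum_mul, hw1]
          push_cast
          linear_combination hvar

/-- `c + g` is a martingale up to the drift `τ⁻¹ * markovOp w m g`. -/
lemma markovOp_skewMove_sq_le (hw : ∀ i, 0 ≤ w i) (hw1 : ∑ i, w i = 1) {φ : ι → V → ℝ} {τ : ℝ}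
    (hτ : 0 < τ) {g : V → ℝ}
    (hg : ∀ x, g x - (1 - τ⁻¹) * markovOp w m g x = ∑ i, w i * φ i x) (z : V × ℝ) :
    markovOp w (skewMove m φ) (fun z => (z.2 + g z.1) ^ 2) z ≤
      (1 + τ⁻¹) * (z.2 + g z.1) ^ 2 + (τ⁻¹ * markovOp w m g z.1 ^ 2 +
        2 * ∑ i, w i * φ i z.1 ^ 2 + 2 * ∑ i, w i * (g (m i z.1) - g z.1) ^ 2) := by
  obtain ⟨x, c⟩ := z
  dsimp only
  set v : ι → ℝ := fun i => φ i x + (g (m i x) - g x) with hv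
  have drift : ∑ i, w i * v i = τ⁻¹ * markovOp w m g x := by
    simp only [hv, mul_add, mul_sub, Finset.sum_add_distrib, Finset.sum_sub_distrib,
      ← Finset.sum_mul, hw1, ← hg x, ← markovOp_apply]
    ring
  have increment : ∑ i, w i * v i ^ 2 ≤
      2 * ∑ i, w i * φ i x ^ 2 + 2 * ∑ i, w i * (g (m i x) - g x) ^ 2 := by
    rw [Finset.mul_sum, Finset.mul_sum, ← Finset.sum_add_distrib]
    refine Finset.sum_le_sum fun i _ => ?_
    have := mul_le_mul_of_nonneg_left (add_sq_le (a := φ i x) (b := g (m i x) - g x)) (hw i)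
    linarith
  calc markovOp w (skewMove m φ) (fun z => (z.2 + g z.1) ^ 2) (x, c)
      = ∑ i, w i * ((c + g x) + v i) ^ 2 := by
        rw [markovOp_apply]
        refine Finset.sum_congr rfl fun i _ => ?_
        simp only [skewMove, hv]
        ring
    _ = (c + g x) ^ 2 + τ⁻¹ * (2 * (c + g x) * markovOp w m g x) + ∑ i, w i * v i ^ 2 := by
        rw [sum_mul_add_sq hw1, drift]
        ring
    _ ≤ (c + g x) ^ 2 + τ⁻¹ * ((c + g x) ^ 2 + markovOp w m g x ^ 2) +
          (2 * ∑ i, w i * φ i x ^ 2 + 2 * ∑ i, w i * (g (m i x) - g x) ^ 2) := by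
        gcongr
        exact two_mul_le_add_sq _ _
    _ = _ := by ring

end MarkovOp

/-! ### Second moments of additive functionals at stationarity -/

section KipnisVaradhan

variable {ι V : Type*} [Fintype ι] [Fintype V] {w : ι → ℝ} {m : ι → V → V}

lemma sum_markovOp (hw1 : ∑ i, w i = 1) (hm : ∀ i, Function.Bijective (m i)) (f : V → ℝ) :
    ∑ x, markovOp w m f x = ∑ x, f x := by
  simp only [markovOp_apply]
  rw [Finset.sum_comm]
  simp only [← Finset.mul_sum, (hm _).sum_comp, ← Finset.sum_mul, hw1, one_mul]

lemma sum_markovOp_pow (hw1 : ∑ i, w i = 1) (hm : ∀ i, Function.Bijective (m i)) (t : ℕ)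
    (f : V → ℝ) : ∑ x, (markovOp w m ^ t) f x = ∑ x, f x := by
  induction t with
  | zero => rfl
  | succ t ih => rw [pow_succ', Module.End.mul_apply, sum_markovOp hw1 hm, ih]

lemma sum_sq_markovOp_le (hw : ∀ i, 0 ≤ w i) (hw1 : ∑ i, w i = 1)
    (hm : ∀ i, Function.Bijective (m i)) (f : V → ℝ) :
    ∑ x, markovOp w m f x ^ 2 ≤ ∑ x, f x ^ 2 := by
  refine (Finset.sum_le_sum fun x _ => ?_).trans_eq (sum_markovOp hw1 hm fun x => f x ^ 2)
  simp only [markovOp_apply]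
  exact Real.pow_arith_mean_le_arith_mean_pow_of_even _ w _ (fun i _ => hw i) hw1 even_two

/-- Dirichlet form of the chain with respect to the counting measure. -/
def dirichletForm (w : ι → ℝ) (m : ι → V → V) (f : V → ℝ) : ℝ :=
  1 / 2 * ∑ x, ∑ i, w i * (f (m i x) - f x) ^ 2

lemma dirichletForm_nonneg (hw : ∀ i, 0 ≤ w i) (f : V → ℝ) : 0 ≤ dirichletForm w m f :=
  mul_nonneg (by norm_num) <| Finset.sum_nonneg fun _ _ => Finset.sum_nonneg fun i _ =>
    mul_nonneg (hw i) (sq_nonneg _)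

lemma dirichletForm_eq_sum_mul_sub (hw1 : ∑ i, w i = 1) (hm : ∀ i, Function.Bijective (m i))
    (f : V → ℝ) : dirichletForm w m f = ∑ x, f x * (f x - markovOp w m f x) := by
  have pointwise : ∀ x, ∑ i, w i * (f (m i x) - f x) ^ 2 =
      2 * (f x * (f x - markovOp w m f x)) + (markovOp w m (fun y => f y ^ 2) x - f x ^ 2) := by
    intro x
    have := sum_mul_add_sq hw1 (-f x) fun i => f (m i x)
    simp only [neg_add_eq_sub] at this
    rw [this, markovOp_apply, markovOp_apply]
    ring
  simp only [dirichletForm, pointwise, Finset.sum_add_distrib, Finset.sum_sub_distrib,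
    sum_markovOp hw1 hm, ← Finset.mul_sum]
  ring

lemma exists_resolvent {X : Type*} [Finite X] {m : ι → X → X} (hw : ∀ i, 0 ≤ w i)
    (hw1 : ∑ i, w i = 1) (hm : ∀ i, Function.Bijective (m i)) {l : ℝ} (hl0 : 0 ≤ l) (hl : l < 1)
    (f : X → ℝ) : ∃ g : X → ℝ, ∀ x, g x - l * markovOp w m g x = f x := by
  have := Fintype.ofFinite X
  have injective : Function.Injective ((1 : Module.End ℝ (X → ℝ)) - l • markovOp w m) := by
    rw [← LinearMap.ker_eq_bot, LinearMap.ker_eq_bot']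
    intro g hg
    have fixed : ∀ x, g x = l * markovOp w m g x := fun x => sub_eq_zero.mp (congrFun hg x)
    have norm_eq : ∑ x, g x ^ 2 = l ^ 2 * ∑ x, markovOp w m g x ^ 2 := by
      rw [Finset.mul_sum]
      exact Finset.sum_congr rfl fun x _ => by rw [← mul_pow, ← fixed x]
    have norm_zero : ∑ x, g x ^ 2 = 0 := by
      have contraction := sum_sq_markovOp_le hw hw1 hm g
      have norm_nonneg : 0 ≤ ∑ x, g x ^ 2 := Finset.sum_nonneg fun x _ => sq_nonneg _
      nlinarith [pow_lt_one₀ hl0 hl two_ne_zero, sq_nonneg l]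
    rw [Finset.sum_eq_zero_iff_of_nonneg fun x _ => sq_nonneg _] at norm_zero
    exact funext fun x => by simpa using norm_zero x (Finset.mem_univ x)
  obtain ⟨g, hg⟩ := LinearMap.injective_iff_surjective.mp injective f
  exact ⟨g, fun x => congrFun hg x⟩

lemma resolvent_bounds (hw : ∀ i, 0 ≤ w i) (hw1 : ∑ i, w i = 1)
    (hm : ∀ i, Function.Bijective (m i)) {τ C : ℝ} (hτ : 2 ≤ τ) (hC : 0 ≤ C) {f g : V → ℝ}
    (hg : ∀ x, g x - (1 - τ⁻¹) * markovOp w m g x = f x)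
    (hfg : (∑ x, f x * g x) ^ 2 ≤ C * dirichletForm w m g) :
    ∑ x, g x ^ 2 ≤ τ * C ∧ dirichletForm w m g ≤ 4 * C := by
  have inv_le : τ⁻¹ ≤ 2⁻¹ := inv_anti₀ (by norm_num) hτ
  have inv_pos : 0 < τ⁻¹ := by positivity
  have energy_nonneg := dirichletForm_nonneg (m := m) hw g
  have norm_nonneg : 0 ≤ ∑ x, g x ^ 2 := Finset.sum_nonneg fun x _ => sq_nonneg _
  have pairing : (1 - τ⁻¹) * dirichletForm w m g + τ⁻¹ * ∑ x, g x ^ 2 = ∑ x, f x * g x := by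
    rw [dirichletForm_eq_sum_mul_sub hw1 hm, Finset.mul_sum, Finset.mul_sum,
      ← Finset.sum_add_distrib]
    exact Finset.sum_congr rfl fun x _ => by rw [← hg x]; ring
  have young : ∑ x, f x * g x ≤ C + dirichletForm w m g / 4 := by
    have amgm : C * dirichletForm w m g ≤ (C + dirichletForm w m g / 4) ^ 2 := by
      nlinarith [sq_nonneg (C - dirichletForm w m g / 4)]
    exact le_of_abs_le <| abs_le_of_sq_le_sq (hfg.trans amgm) (by positivity)
  have half_le : 1 / 2 * dirichletForm w m g ≤ (1 - τ⁻¹) * dirichletForm w m g := by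
    gcongr
    linarith
  have combined : dirichletForm w m g / 4 + τ⁻¹ * ∑ x, g x ^ 2 ≤ C := by linarith
  exact ⟨(inv_mul_le_iff₀ (by positivity)).mp (by linarith [combined]),
    by linarith [combined, mul_nonneg inv_pos.le norm_nonneg]⟩

lemma le_three_mul_of_le_one_add_inv_mul_add {u : ℕ → ℝ} {τ η : ℝ} (hτ : 0 < τ) (hη : 0 ≤ η)
    (hu0 : 0 ≤ u 0) (hu : ∀ s, u (s + 1) ≤ (1 + τ⁻¹) * u s + η) {t : ℕ} (ht : t ≤ τ) :
    u t ≤ 3 * (u 0 + τ * η) := by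
  have exp_le : Real.exp (t * τ⁻¹) ≤ 3 := by
    have : t * τ⁻¹ ≤ 1 := mul_inv_le_one_of_le₀ ht hτ.le
    linarith [Real.exp_le_exp.mpr this, Real.exp_one_lt_d9]
  calc u t ≤ (u 0 + t * η) * Real.exp (t * τ⁻¹) := by
        simpa using discrete_gronwall hu0 (fun s _ => hu s) (fun _ _ => (inv_pos.mpr hτ).le)
          (fun _ _ => hη) t.zero_le
    _ ≤ (u 0 + τ * η) * 3 := by gcongr
    _ = 3 * (u 0 + τ * η) := mul_comm _ _

lemma sum_markovOp_pow_sq_add_le (hw : ∀ i, 0 ≤ w i) (hw1 : ∑ i, w i = 1)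
    (hm : ∀ i, Function.Bijective (m i)) {φ : ι → V → ℝ} {τ : ℝ} (hτ : 0 < τ) {g : V → ℝ}
    (hg : ∀ x, g x - (1 - τ⁻¹) * markovOp w m g x = ∑ i, w i * φ i x) {t : ℕ} (ht : t ≤ τ) :
    ∑ x, (markovOp w (skewMove m φ) ^ t) (fun z => (z.2 + g z.1) ^ 2) (x, 0) ≤
      3 * (∑ x, g x ^ 2 + τ * (τ⁻¹ * ∑ x, g x ^ 2 + 2 * ∑ x, ∑ i, w i * φ i x ^ 2 +
        4 * dirichletForm w m g)) := by
  set Ψ : V × ℝ → ℝ := fun z => (z.2 + g z.1) ^ 2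
  set η : V → ℝ := fun x => τ⁻¹ * markovOp w m g x ^ 2 + 2 * ∑ i, w i * φ i x ^ 2 +
    2 * ∑ i, w i * (g (m i x) - g x) ^ 2
  have sum_η_le : ∑ x, η x ≤
      τ⁻¹ * ∑ x, g x ^ 2 + 2 * ∑ x, ∑ i, w i * φ i x ^ 2 + 4 * dirichletForm w m g := by
    simp only [η, Finset.sum_add_distrib, ← Finset.mul_sum, dirichletForm]
    have := mul_le_mul_of_nonneg_left (sum_sq_markovOp_le hw hw1 hm g) (inv_pos.mpr hτ).le
    linarith
  have η_nonneg : 0 ≤ ∑ x, η x := Finset.sum_nonneg fun x _ => by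
    have h1 := Finset.sum_nonneg fun i (_ : i ∈ Finset.univ) =>
      mul_nonneg (hw i) (sq_nonneg (φ i x))
    have h2 := Finset.sum_nonneg fun i (_ : i ∈ Finset.univ) =>
      mul_nonneg (hw i) (sq_nonneg (g (m i x) - g x))
    positivity
  have recurrence : ∀ s, ∑ x, (markovOp w (skewMove m φ) ^ (s + 1)) Ψ (x, 0) ≤
      (1 + τ⁻¹) * ∑ x, (markovOp w (skewMove m φ) ^ s) Ψ (x, 0) + ∑ x, η x := by
    intro s
    rw [← sum_markovOp_pow hw1 hm s η, Finset.mul_sum, ← Finset.sum_add_distrib]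
    refine Finset.sum_le_sum fun x _ => ?_
    have one_step : markovOp w (skewMove m φ) Ψ ≤ (1 + τ⁻¹) • Ψ + fun z => η z.1 :=
      markovOp_skewMove_sq_le hw hw1 hτ hg
    have := markovOp_pow_monotone hw s one_step (m := skewMove m φ) (x, 0)
    rwa [map_add, map_smul, markovOp_skewMove_pow_fst, ← Module.End.mul_apply, ← pow_succ] at this
  have gronwall := le_three_mul_of_le_one_add_inv_mul_add
    (u := fun s => ∑ x, (markovOp w (skewMove m φ) ^ s) Ψ (x, 0)) hτ η_nonneg
    (Finset.sum_nonneg fun x _ => sq_nonneg _) recurrence ht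
  refine gronwall.trans ?_
  simp only [pow_zero, Module.End.one_apply, Ψ, zero_add]
  gcongr

/-- A form of the Kipnis–Varadhan inequality: the second moment of an additive functional grows
linearly in time as soon as its mean increment has finite `H₋₁` norm, here `√C`. -/
lemma sum_markovOp_pow_sq_le (hw : ∀ i, 0 ≤ w i) (hw1 : ∑ i, w i = 1)
    (hm : ∀ i, Function.Bijective (m i)) {φ : ι → V → ℝ} {τ C : ℝ} (hτ : 2 ≤ τ) (hC : 0 ≤ C)
    (hφ : ∀ g : V → ℝ, (∑ x, (∑ i, w i * φ i x) * g x) ^ 2 ≤ C * dirichletForm w m g)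
    {t : ℕ} (ht : t ≤ τ) :
    ∑ x, (markovOp w (skewMove m φ) ^ t) (fun z => z.2 ^ 2) (x, 0) ≤
      τ * (110 * C + 12 * ∑ x, ∑ i, w i * φ i x ^ 2) := by
  have hτ0 : 0 < τ := by linarith
  have inv_lt_one : τ⁻¹ < 1 := inv_lt_one_of_one_lt₀ (by linarith)
  obtain ⟨g, hg⟩ := exists_resolvent hw hw1 hm (sub_nonneg.mpr inv_lt_one.le)
    (sub_lt_self 1 (inv_pos.mpr hτ0)) fun x => ∑ i, w i * φ i x
  obtain ⟨norm_le, energy_le⟩ := resolvent_bounds hw hw1 hm hτ hC hg (hφ g)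
  have martingale_le := sum_markovOp_pow_sq_add_le hw hw1 hm hτ0 hg ht
  have sq_le : (fun z : V × ℝ => z.2 ^ 2) ≤
      (2 : ℝ) • (fun z => (z.2 + g z.1) ^ 2) + (2 : ℝ) • fun z => g z.1 ^ 2 := fun z => by
    simp only [Pi.add_apply, Pi.smul_apply, smul_eq_mul]
    nlinarith [sq_nonneg (z.2 + 2 * g z.1)]
  calc ∑ x, (markovOp w (skewMove m φ) ^ t) (fun z => z.2 ^ 2) (x, 0)
      ≤ ∑ x, (2 * (markovOp w (skewMove m φ) ^ t) (fun z => (z.2 + g z.1) ^ 2) (x, 0) +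
          2 * (markovOp w m ^ t) (fun y => g y ^ 2) x) := by
        refine Finset.sum_le_sum fun x _ => ?_
        have := markovOp_pow_monotone hw t sq_le (m := skewMove m φ) (x, 0)
        rwa [map_add, map_smul, map_smul, markovOp_skewMove_pow_fst t fun y => g y ^ 2] at this
    _ = 2 * ∑ x, (markovOp w (skewMove m φ) ^ t) (fun z => (z.2 + g z.1) ^ 2) (x, 0) +
          2 * ∑ x, g x ^ 2 := by
        rw [Finset.sum_add_distrib, ← Finset.mul_sum, ← Finset.mul_sum, sum_markovOp_pow hw1 hm]
    _ ≤ τ * (110 * C + 12 * ∑ x, ∑ i, w i * φ i x ^ 2) := by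
        have cancel : τ * (τ⁻¹ * ∑ x, g x ^ 2) = ∑ x, g x ^ 2 := mul_inv_cancel_left₀ hτ0.ne' _
        nlinarith [mul_le_mul_of_nonneg_left energy_le hτ0.le]

end KipnisVaradhan

/-! ### Crossings of a matching edge -/

section Crossings

variable {n : ℕ} {p q a : ℝ} {μ : ZMod n → ZMod n}

/-- Probabilities of the four moves in `cycleMove`. -/
def cycleWeight (p q a : ℝ) : Fin 4 → ℝ := ![p, q, a, 1 - p - q - a]

/-- The moves of the perturbed cycle chain: forward, backward, along the matching, rest. Off the
hubs the matching is the identity, so there the third move is a rest too. -/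
def cycleMove (μ : ZMod n → ZMod n) : Fin 4 → ZMod n → ZMod n := ![(· + 1), (· - 1), μ, id]

lemma cycleWeight_nonneg (hp : 0 ≤ p) (hq : 0 ≤ q) (ha : 0 ≤ a) (hpqa : p + q + a ≤ 1) (i : Fin 4) :
    0 ≤ cycleWeight p q a i := by
  fin_cases i <;> simp [cycleWeight] <;> linarith

lemma sum_cycleWeight : ∑ i, cycleWeight p q a i = 1 := by
  simp [cycleWeight, Fin.sum_univ_four]

lemma cycleMove_bijective (hμ : Function.Involutive μ) (i : Fin 4) :
    Function.Bijective (cycleMove μ i) := by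
  fin_cases i
  exacts [(Equiv.addRight 1).bijective, (Equiv.subRight 1).bijective, hμ.bijective,
    Function.bijective_id]

lemma toLin'_cycleP [NeZero n] {H : Finset (ZMod n)} (hμ : ∀ x, x ∉ H → μ x = x) :
    Matrix.toLin' (cycleP n p q a H μ) = markovOp (cycleWeight p q a) (cycleMove μ) := by
  refine LinearMap.ext fun f => funext fun x => ?_
  by_cases hx : x ∈ H
  · simp [Matrix.mulVec, dotProduct, cycleP, markovOp_apply, Fin.sum_univ_four, cycleWeight,
      cycleMove, add_mul, Finset.sum_add_distrib, hx]
  · simp [Matrix.mulVec, dotProduct, cycleP, markovOp_apply, Fin.sum_univ_four, cycleWeight,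
      cycleMove, add_mul, Finset.sum_add_distrib, hx, hμ x hx]
    ring

/-- The signed indicator of the directed edge from `r` to `μ r`: the net number of crossings of this
edge produced by one use of the matching at `x`. -/
def edgeSign (μ : ZMod n → ZMod n) (r x : ZMod n) : ℤ :=
  (if x = r then 1 else 0) - (if x = μ r then 1 else 0)

/-- Net number of crossings of the edge from `r` to `μ r` produced by each move. -/
def crossing (μ : ZMod n → ZMod n) (r : ZMod n) (i : Fin 4) (x : ZMod n) : ℤ :=
  ![0, 0, edgeSign μ r x, 0] i

lemma sum_edgeSign_mul [NeZero n] (r : ZMod n) (g : ZMod n → ℝ) :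
    ∑ x, (edgeSign μ r x : ℝ) * g x = g r - g (μ r) := by
  simp [edgeSign, sub_mul, Finset.sum_sub_distrib]

lemma sum_sq_edgeSign [NeZero n] {r : ZMod n} (hr : μ r ≠ r) :
    ∑ x, (edgeSign μ r x : ℝ) ^ 2 = 2 := by
  simp only [pow_two]
  rw [sum_edgeSign_mul]
  simp [edgeSign, hr, hr.symm]
  norm_num

/-- The two crossings of the edge between `r` and `μ r` already contribute this much energy. -/
lemma mul_sq_sub_le_dirichletForm [NeZero n] (hp : 0 ≤ p) (hq : 0 ≤ q) (ha : 0 ≤ a)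
    (hpqa : p + q + a ≤ 1) (hμ : Function.Involutive μ) {r : ZMod n} (hr : μ r ≠ r)
    (g : ZMod n → ℝ) :
    a * (g r - g (μ r)) ^ 2 ≤ dirichletForm (cycleWeight p q a) (cycleMove μ) g := by
  have term_nonneg : ∀ x i, 0 ≤ cycleWeight p q a i * (g (cycleMove μ i x) - g x) ^ 2 := fun x i =>
    mul_nonneg (cycleWeight_nonneg hp hq ha hpqa i) (sq_nonneg _)
  have jump_le : ∀ x, a * (g (μ x) - g x) ^ 2 ≤
      ∑ i, cycleWeight p q a i * (g (cycleMove μ i x) - g x) ^ 2 := fun x =>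
    Finset.single_le_sum (fun i _ => term_nonneg x i) (Finset.mem_univ 2)
  have two_points : ∑ x ∈ {r, μ r}, a * (g (μ x) - g x) ^ 2 ≤
      ∑ x, ∑ i, cycleWeight p q a i * (g (cycleMove μ i x) - g x) ^ 2 :=
    (Finset.sum_le_sum fun x _ => jump_le x).trans <|
      Finset.sum_le_univ_sum_of_nonneg fun x => Finset.sum_nonneg fun i _ => term_nonneg x i
  rw [Finset.sum_pair hr.symm, hμ r] at two_points
  rw [dirichletForm]
  linarith

lemma sum_sq_crossing_le [NeZero n] (hp : 0 ≤ p) (hq : 0 ≤ q) (ha : 0 ≤ a) (hpqa : p + q + a ≤ 1)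
    (hμ : Function.Involutive μ) {r : ZMod n} (hr : μ r ≠ r) {τ : ℝ} (hτ : 2 ≤ τ) {t : ℕ}
    (ht : t ≤ τ) :
    ∑ x, (markovOp (cycleWeight p q a)
      (skewMove (cycleMove μ) fun i x => (crossing μ r i x : ℝ)) ^ t) (fun z => z.2 ^ 2) (x, 0) ≤
        150 * τ := by
  have mean : ∀ x, ∑ i, cycleWeight p q a i * (crossing μ r i x : ℝ) = a * edgeSign μ r x := by
    intro x
    simp [Fin.sum_univ_four, cycleWeight, crossing]
  have square : ∑ x, ∑ i, cycleWeight p q a i * (crossing μ r i x : ℝ) ^ 2 = 2 * a := by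
    calc _ = a * ∑ x, (edgeSign μ r x : ℝ) ^ 2 := by
          rw [Finset.mul_sum]
          simp [Fin.sum_univ_four, cycleWeight, crossing]
      _ = 2 * a := by rw [sum_sq_edgeSign hr, mul_comm]
  have pairing : ∀ g : ZMod n → ℝ,
      (∑ x, (∑ i, cycleWeight p q a i * (crossing μ r i x : ℝ)) * g x) ^ 2 ≤
        a * dirichletForm (cycleWeight p q a) (cycleMove μ) g := fun g => by
    simp only [mean, mul_assoc, ← Finset.mul_sum, sum_edgeSign_mul]
    rw [mul_pow, pow_two a, mul_assoc]
    exact mul_le_mul_of_nonneg_left (mul_sq_sub_le_dirichletForm hp hq ha hpqa hμ hr g) ha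
  have := sum_markovOp_pow_sq_le (cycleWeight_nonneg hp hq ha hpqa) sum_cycleWeight
    (cycleMove_bijective hμ) hτ ha pairing ht
  rw [square] at this
  nlinarith

end Crossings

/-! ### Confinement of the chain to a small set -/

section Integers

/-- The integers at distance at most `K` from the real number `b`. -/
def intBall (b K : ℝ) : Finset ℤ := Finset.Icc ⌈b - K⌉ ⌊b + K⌋

lemma mem_intBall {b K : ℝ} {z : ℤ} : z ∈ intBall b K ↔ |z - b| ≤ K := by
  rw [intBall, Finset.mem_Icc, Int.ceil_le, Int.le_floor, abs_sub_le_iff]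
  constructor <;> rintro ⟨h1, h2⟩ <;> constructor <;> linarith

lemma card_intBall_le (b : ℝ) {K : ℝ} (hK : 0 ≤ K) : ((intBall b K).card : ℝ) ≤ 2 * K + 1 := by
  rw [intBall, Int.card_Icc, ← Int.cast_natCast, Int.toNat_eq_max]
  push_cast
  exact max_le (by linarith [Int.floor_le (b + K), Int.le_ceil (b - K)]) (by linarith)

lemma one_le_inv_sq_mul_sq {K u : ℝ} (hK : 0 < K) (hu : K < |u|) : 1 ≤ (K ^ 2)⁻¹ * u ^ 2 := by
  rw [← sq_abs u, inv_mul_eq_div, one_le_div (by positivity)]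
  gcongr

/-- Markov's inequality for the squares, with a union bound over the coordinates. -/
lemma one_le_sq_add_sum_sq_of_notMem {E : Type*} [Fintype E] [DecidableEq E] {K L : ℝ}
    (hK : 0 < K) (hL : 0 < L) {b : ℝ} {c : ℤ × (E → ℤ)}
    (hc : c ∉ intBall b K ×ˢ Fintype.piFinset fun _ => intBall 0 L) :
    1 ≤ (K ^ 2)⁻¹ * (c.1 - b) ^ 2 + ∑ r, (L ^ 2)⁻¹ * (c.2 r : ℝ) ^ 2 := by
  have step_nonneg : 0 ≤ (K ^ 2)⁻¹ * (c.1 - b) ^ 2 := by positivity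
  have cross_nonneg : ∀ r ∈ Finset.univ, 0 ≤ (L ^ 2)⁻¹ * (c.2 r : ℝ) ^ 2 := fun r _ => by positivity
  have cross_sum_nonneg := Finset.sum_nonneg cross_nonneg
  simp only [Finset.mem_product, Fintype.mem_piFinset, mem_intBall, sub_zero, not_and_or,
    not_forall, not_le] at hc
  rcases hc with hs | ⟨r, hr⟩
  · linarith [one_le_inv_sq_mul_sq hK hs]
  · linarith [one_le_inv_sq_mul_sq hL hr, Finset.single_le_sum cross_nonneg (Finset.mem_univ r)]

end Integers

section History

variable {n : ℕ} {p q a : ℝ} {H : Finset (ZMod n)} {μ : ZMod n → ZMod n}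

/-- The matching edges, each oriented by its endpoint of smaller representative in `[0, n)`. -/
def matchingEdges (H : Finset (ZMod n)) (μ : ZMod n → ZMod n) : Finset (ZMod n) :=
  H.filter fun x => x.val < (μ x).val

lemma ne_of_mem_matchingEdges {r : ZMod n} (hr : r ∈ matchingEdges H μ) : μ r ≠ r := fun he => by
  simp [matchingEdges, he] at hr

lemma edgeSign_smul_sub (hμ : Function.Involutive μ) (r x : ZMod n) :
    edgeSign μ r x • (μ r - r) =
      (if x = r then μ x - x else 0) + (if μ x = r then μ x - x else 0) := by
  have h : x = μ r ↔ μ x = r := ⟨fun h => by rw [h, hμ], fun h => by rw [← h, hμ]⟩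
  rw [edgeSign, sub_smul, ite_smul, ite_smul, if_congr h rfl rfl]
  split_ifs with h1 h2 h2 <;> subst_vars <;> simp [hμ _, *]

/-- Net number of steps around the cycle and net number of crossings of each matching edge. -/
abbrev History (H : Finset (ZMod n)) (μ : ZMod n → ZMod n) : Type := ℤ × (matchingEdges H μ → ℤ)

/-- Contribution of a single move to the history. -/
def historyIncrement (H : Finset (ZMod n)) (μ : ZMod n → ZMod n) (i : Fin 4) (x : ZMod n) :
    History H μ :=
  ((![1, -1, 0, 0] : Fin 4 → ℤ) i, fun r => crossing μ r i x)

/-- Transition operator of the cycle chain together with its history. -/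
abbrev historyOp (p q a : ℝ) (H : Finset (ZMod n)) (μ : ZMod n → ZMod n) :
    Module.End ℝ (ZMod n × History H μ → ℝ) :=
  markovOp (cycleWeight p q a) (skewMove (cycleMove μ) (historyIncrement H μ))

/-- Displacement of a chain with the given history. -/
def displacement (H : Finset (ZMod n)) (μ : ZMod n → ZMod n) : History H μ →+ ZMod n where
  toFun c := c.1 • 1 + ∑ r, c.2 r • (μ r - r)
  map_zero' := by simp
  map_add' c d := by
    simp only [Prod.fst_add, Prod.snd_add, Pi.add_apply, add_smul, Finset.sum_add_distrib]
    abel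

/-- The positions reached from `x` with a net number of steps within `K` of `b` and at most `L` net
crossings of each matching edge. -/
def confinedSet (H : Finset (ZMod n)) (μ : ZMod n → ZMod n) (b K L : ℝ) (x : ZMod n) :
    Finset (ZMod n) :=
  (intBall b K ×ˢ Fintype.piFinset fun _ => intBall 0 L).image fun c => x + displacement H μ c

lemma history_steps_sq_le (hpq : p + q ≤ 1) (t : ℕ) (x : ZMod n) :
    (historyOp p q a H μ ^ t) (fun z => (z.2.1 - (p - q) * t) ^ 2) (x, 0) ≤ t := by
  have project := markovOp_skewMove_pow_map (w := cycleWeight p q a) (m := cycleMove μ)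
    (φ := historyIncrement H μ) ((Int.castAddHom ℝ).comp (AddMonoidHom.fst ℤ _)) t
    (fun u => (u - (p - q) * t) ^ 2) x
  have variance := markovOp_pow_sq_of_iid (w := cycleWeight p q a) (m := cycleMove μ)
    sum_cycleWeight (fun i => ((![1, -1, 0, 0] : Fin 4 → ℤ) i : ℝ)) t ((p - q) * t) (x, 0)
  refine (project.trans variance).trans_le ?_
  simp only [Fin.sum_univ_four, cycleWeight, Matrix.cons_val, Int.cast_one, Int.cast_neg,
    Int.cast_zero]
  have excess_nonneg : 0 ≤ t * (1 - (p + q) + (p - q) ^ 2) :=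
    mul_nonneg t.cast_nonneg (add_nonneg (sub_nonneg.mpr hpq) (sq_nonneg _))
  linarith

lemma history_crossing_sq (r : matchingEdges H μ) (t : ℕ) (x : ZMod n) :
    (historyOp p q a H μ ^ t) (fun z => (z.2.2 r : ℝ) ^ 2) (x, 0) =
    (markovOp (cycleWeight p q a) (skewMove (cycleMove μ) fun i x => (crossing μ r i x : ℝ)) ^ t)
      (fun z => z.2 ^ 2) (x, 0) :=
  markovOp_skewMove_pow_map (φ := historyIncrement H μ) ((Int.castAddHom ℝ).comp
    ((Pi.evalAddMonoidHom (fun _ => ℤ) r).comp (AddMonoidHom.snd ℤ _))) t (· ^ 2) x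

end History

section Confinement

variable {n k : ℕ} [NeZero n] {p q a : ℝ} {H : Finset (ZMod n)} {μ : ZMod n → ZMod n}

lemma IsConfig.involutive (h : IsConfig n k H μ) : Function.Involutive μ := h.2.2.1

lemma IsConfig.mem_matchingEdges_iff (h : IsConfig n k H μ) {x : ZMod n} (hx : x ∈ H) :
    μ x ∈ matchingEdges H μ ↔ x ∉ matchingEdges H μ := by
  obtain ⟨-, hH, hinv, hne, -⟩ := h
  have val_ne : (μ x).val ≠ x.val := fun he => hne x hx (ZMod.val_injective n he)
  simp only [matchingEdges, Finset.mem_filter, hx, hH x hx, hinv x, true_and, not_lt]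
  omega

lemma IsConfig.card_matchingEdges (h : IsConfig n k H μ) : (matchingEdges H μ).card = k := by
  have edges_subset : matchingEdges H μ ⊆ H := Finset.filter_subset _ _
  have complement : H.filter (fun x => x ∉ matchingEdges H μ) = (matchingEdges H μ).image μ := by
    ext x
    simp only [Finset.mem_filter, Finset.mem_image]
    constructor
    · rintro ⟨hx, hxE⟩
      exact ⟨μ x, (h.mem_matchingEdges_iff hx).mpr hxE, h.involutive x⟩
    · rintro ⟨y, hy, rfl⟩
      have hyH : y ∈ H := edges_subset hy
      exact ⟨h.2.1 y hyH, fun hμy => (h.mem_matchingEdges_iff hyH).mp hμy hy⟩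
  have split := Finset.card_filter_add_card_filter_not (s := H) (· ∈ matchingEdges H μ)
  rw [complement, Finset.card_image_of_injective _ h.involutive.injective,
    Finset.filter_mem_eq_inter, Finset.inter_eq_right.mpr edges_subset, h.1] at split
  omega

lemma IsConfig.sum_edgeSign_smul (h : IsConfig n k H μ) (x : ZMod n) :
    ∑ r : matchingEdges H μ, edgeSign μ r x • (μ r - r) = μ x - x := by
  rw [Finset.sum_coe_sort (matchingEdges H μ) fun r => edgeSign μ r x • (μ r - r)]
  simp only [edgeSign_smul_sub h.involutive, Finset.sum_add_distrib, Finset.sum_ite_eq]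
  by_cases hx : x ∈ H
  · by_cases hxE : x ∈ matchingEdges H μ <;> simp [h.mem_matchingEdges_iff hx, hxE]
  · simp [h.2.2.2.2 x hx]

lemma IsConfig.cycleMove_eq (h : IsConfig n k H μ) (i : Fin 4) (x : ZMod n) :
    cycleMove μ i x = x + displacement H μ (historyIncrement H μ i x) := by
  have jump : μ x = x + displacement H μ (historyIncrement H μ 2 x) := by
    have := h.sum_edgeSign_smul x
    simp_all [displacement, historyIncrement, crossing]
  fin_cases i
  on_goal 3 => exact jump
  all_goals simp [cycleMove, displacement, historyIncrement, crossing, sub_eq_add_neg]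

lemma IsConfig.card_confinedSet_le (h : IsConfig n k H μ) (b : ℝ) {K L : ℝ} (hK : 0 ≤ K)
    (hL : 0 ≤ L) (x : ZMod n) :
    ((confinedSet H μ b K L x).card : ℝ) ≤ (2 * K + 1) * (2 * L + 1) ^ k := by
  calc ((confinedSet H μ b K L x).card : ℝ)
      ≤ (intBall b K).card * (intBall 0 L).card ^ k := by
        have := Finset.card_image_le (s := intBall b K ×ˢ Fintype.piFinset fun _ => intBall 0 L)
          (f := fun c => x + displacement H μ c)
        rw [Finset.card_product, Fintype.card_piFinset, Finset.prod_const, Finset.card_univ,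
          Fintype.card_coe, h.card_matchingEdges] at this
        exact_mod_cast this
    _ ≤ (2 * K + 1) * (2 * L + 1) ^ k := by
        gcongr
        exacts [card_intBall_le b hK, card_intBall_le 0 hL]

lemma IsConfig.one_le_sum_confinedSet_add (h : IsConfig n k H μ) (hp : 0 ≤ p) (hq : 0 ≤ q)
    (ha : 0 ≤ a) (hpqa : p + q + a ≤ 1) {K L : ℝ} (hK : 0 < K) (hL : 0 < L) (b : ℝ) (t : ℕ)
    (x : ZMod n) :
    1 ≤ ∑ y ∈ confinedSet H μ b K L x, (cycleP n p q a H μ ^ t) x y +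
      (K ^ 2)⁻¹ * (historyOp p q a H μ ^ t) (fun z => (z.2.1 - b) ^ 2) (x, 0) +
      ∑ r, (L ^ 2)⁻¹ * (historyOp p q a H μ ^ t) (fun z => (z.2.2 r : ℝ) ^ 2) (x, 0) := by
  set ind : ZMod n → ℝ := fun y => if y ∈ confinedSet H μ b K L x then 1 else 0 with hind
  have pointwise : (1 : ZMod n × History H μ → ℝ) ≤
      (fun z => ind (x + displacement H μ z.2)) + (K ^ 2)⁻¹ • (fun z => ((z.2.1 : ℝ) - b) ^ 2) +
        ∑ r, (L ^ 2)⁻¹ • (fun z => (z.2.2 r : ℝ) ^ 2) := fun z => by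
    have ind_nonneg : 0 ≤ ind (x + displacement H μ z.2) := ite_nonneg zero_le_one le_rfl
    simp only [Pi.one_apply, Pi.add_apply, Pi.smul_apply, Finset.sum_apply, smul_eq_mul]
    by_cases hz : z.2 ∈ intBall b K ×ˢ Fintype.piFinset fun _ => intBall 0 L
    · have hx : x + displacement H μ z.2 ∈ confinedSet H μ b K L x :=
        Finset.mem_image_of_mem (fun c => x + displacement H μ c) hz
      have : ind (x + displacement H μ z.2) = 1 := if_pos hx
      rw [this, add_assoc]
      exact le_add_of_nonneg_right (by positivity)
    · linarith [one_le_sq_add_sum_sq_of_notMem hK hL hz]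
  have mass : (historyOp p q a H μ ^ t) (fun z => ind (x + displacement H μ z.2)) (x, 0) =
      ∑ y ∈ confinedSet H μ b K L x, (cycleP n p q a H μ ^ t) x y := by
    rw [markovOp_pow_displacement _ h.cycleMove_eq, ← toLin'_cycleP h.2.2.2.2,
      ← Matrix.toLin'_pow, Matrix.toLin'_apply]
    simp [Matrix.mulVec, dotProduct, hind]
  have expectation := markovOp_pow_monotone (m := skewMove (cycleMove μ) (historyIncrement H μ))
    (cycleWeight_nonneg hp hq ha hpqa) t pointwise (x, 0)
  rw [markovOp_pow_one sum_cycleWeight] at expectation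
  simp only [map_add, map_smul, map_sum, Pi.one_apply, Pi.add_apply, Pi.smul_apply,
    Finset.sum_apply, smul_eq_mul, mass] at expectation
  exact expectation

lemma IsConfig.sum_history_crossing_sq_le (h : IsConfig n k H μ) (hp : 0 ≤ p) (hq : 0 ≤ q)
    (ha : 0 ≤ a) (hpqa : p + q + a ≤ 1) {τ L : ℝ} (hτ : 2 ≤ τ) (hL : 0 < L)
    (hLτ : 600 * k * τ ≤ n * L ^ 2) {t : ℕ} (ht : t ≤ τ) :
    ∑ x, ∑ r, (L ^ 2)⁻¹ *
      (historyOp p q a H μ ^ t) (fun z => (z.2.2 r : ℝ) ^ 2) (x, 0) ≤ n / 4 := by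
  calc _ = (L ^ 2)⁻¹ * ∑ r, ∑ x,
        (historyOp p q a H μ ^ t) (fun z => (z.2.2 r : ℝ) ^ 2) (x, 0) := by
        rw [Finset.sum_comm]
        simp only [Finset.mul_sum]
    _ ≤ (L ^ 2)⁻¹ * ∑ _r : matchingEdges H μ, 150 * τ := by
        gcongr with r
        simp only [history_crossing_sq]
        exact sum_sq_crossing_le hp hq ha hpqa h.involutive (ne_of_mem_matchingEdges r.2) hτ ht
    _ = (L ^ 2)⁻¹ * (k * (150 * τ)) := by
        simp [h.card_matchingEdges]
    _ ≤ n / 4 := by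
        rw [inv_mul_le_iff₀ (by positivity)]
        linarith

/-- Chebyshev's inequality for the number of steps and for each number of crossings, averaged over
the starting point. -/
lemma IsConfig.exists_confined (h : IsConfig n k H μ) (hp : 0 ≤ p) (hq : 0 ≤ q) (ha : 0 ≤ a)
    (hpqa : p + q + a ≤ 1) {τ K L : ℝ} (hτ : 2 ≤ τ) (hK : 0 < K) (hL : 0 < L)
    (hKτ : 4 * τ ≤ K ^ 2) (hLτ : 600 * k * τ ≤ n * L ^ 2) {t : ℕ} (ht : t ≤ τ) :
    ∃ (x : ZMod n) (B : Finset (ZMod n)), (B.card : ℝ) ≤ (2 * K + 1) * (2 * L + 1) ^ k ∧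
      1 / 2 ≤ ∑ y ∈ B, (cycleP n p q a H μ ^ t) x y := by
  set b := (p - q) * t
  have steps : ∀ x, (K ^ 2)⁻¹ * (historyOp p q a H μ ^ t) (fun z => (z.2.1 - b) ^ 2) (x, 0) ≤
      1 / 4 := fun x => by
    rw [inv_mul_le_iff₀ (by positivity)]
    linarith [history_steps_sq_le (H := H) (μ := μ) (a := a) (p := p) (q := q) (by linarith) t x]
  have crossings := h.sum_history_crossing_sq_le hp hq ha hpqa hτ hL hLτ ht
  have average : ∑ _x : ZMod n, (1 / 2 : ℝ) ≤
      ∑ x, ∑ y ∈ confinedSet H μ b K L x, (cycleP n p q a H μ ^ t) x y := by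
    have chebyshev : ∑ _x : ZMod n, (1 : ℝ) ≤ ∑ x, (_ + 1 / 4 + _) :=
      Finset.sum_le_sum fun x _ =>
      (h.one_le_sum_confinedSet_add hp hq ha hpqa hK hL b t x).trans <|
        add_le_add_left (add_le_add_right (steps x) _) _
    simp only [Finset.sum_add_distrib, Finset.sum_const, Finset.card_univ, ZMod.card,
      nsmul_eq_mul] at chebyshev ⊢
    linarith
  obtain ⟨x, -, hx⟩ := Finset.exists_le_of_sum_le Finset.univ_nonempty average
  exact ⟨x, _, h.card_confinedSet_le b hK.le hL.le x, hx⟩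

end Confinement

/-! ### The mixing time -/

section MixingTime

variable {n k : ℕ} [NeZero n]

lemma sum_pow_le_of_mixedBy {P : Matrix (ZMod n) (ZMod n) ℝ} {ε : ℝ} {t : ℕ}
    (h : mixedBy n P ε t) (x : ZMod n) (B : Finset (ZMod n)) :
    ∑ y ∈ B, (P ^ t) x y ≤ B.card / n + 2 * ε := by
  have excess : ∑ y ∈ B, ((P ^ t) x y - 1 / n) ≤ ∑ y, |(P ^ t) x y - 1 / n| :=
    (Finset.sum_le_sum fun y _ => le_abs_self _).trans
      (Finset.sum_le_univ_sum_of_nonneg fun y => abs_nonneg _)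
  rw [Finset.sum_sub_distrib, Finset.sum_const, nsmul_eq_mul, mul_one_div] at excess
  linarith [h x]

lemma not_mixedBy_zero (hn : 2 ≤ n) (P : Matrix (ZMod n) (ZMod n) ℝ) {ε : ℝ} (hε : ε < 1 / 4) :
    ¬ mixedBy n P ε 0 := fun h => by
  have point_mass := sum_pow_le_of_mixedBy h 0 {0}
  have : (1 : ℝ) / n ≤ 1 / 2 := by
    gcongr
    exact_mod_cast hn
  simp at point_mass this
  linarith

lemma confinement_size_le (k : ℕ) {δ M y : ℝ} (hδ : 0 ≤ δ) (hδ1 : δ ≤ 1)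
    (hδM : 24 * (3 * M) ^ k * δ ≤ 1) (hM : 1 ≤ M) (hy : 0 ≤ y) (hδy : 1 ≤ δ * y)
    (hδyk : 1 ≤ δ * y ^ (k + 2)) :
    (2 * (2 * (δ * y ^ (k + 2))) + 1) * (2 * (M * (δ * y)) + 1) ^ k ≤ y ^ (2 * k + 2) / 4 := by
  calc _ ≤ (6 * (δ * y ^ (k + 2))) * (3 * (M * (δ * y))) ^ k := by
        gcongr
        · linarith
        · nlinarith
    _ = 24 * (3 * M) ^ k * δ * δ ^ k * (y ^ (2 * k + 2) / 4) := by
        simp only [mul_pow]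
        ring
    _ ≤ 1 * 1 * (y ^ (2 * k + 2) / 4) := by
        gcongr
        exact pow_le_one₀ hδ hδ1
    _ = _ := by ring

/-- Here `y = n ^ (1 / (2 * (k + 1)))`, so the confining radii `√τ` and `√(τ / n)` are of order
`δ * y ^ (k + 2)` and `δ * y`. -/
lemma IsConfig.not_mixedBy {H : Finset (ZMod n)} {μ : ZMod n → ZMod n} (h : IsConfig n k H μ)
    {p q a : ℝ} (hp : 0 ≤ p) (hq : 0 ≤ q) (ha : 0 ≤ a) (hpqa : p + q + a ≤ 1) {δ y : ℝ}
    (hδ : 0 < δ) (hδ1 : δ ≤ 1) (hδk : 24 * (3 * (600 * (k + 1))) ^ k * δ ≤ 1)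
    (hy : y ^ (2 * k + 2) = n) (hδy : 2 ≤ δ * y) {t : ℕ} (ht : t ≤ (δ * y ^ (k + 2)) ^ 2) :
    ¬ mixedBy n (cycleP n p q a H μ) (1 / 16) t := fun hmix => by
  set M : ℝ := 600 * (k + 1)
  have hk : (0 : ℝ) ≤ k := k.cast_nonneg
  have hy1 : 1 ≤ y := by nlinarith
  have hτ : 2 ≤ δ * y ^ (k + 2) := by
    have : y ≤ y ^ (k + 2) := le_self_pow₀ hy1 (by omega)
    nlinarith
  have hL : 600 * k * (δ * y ^ (k + 2)) ^ 2 ≤ n * (M * (δ * y)) ^ 2 := by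
    calc 600 * k * (δ * y ^ (k + 2)) ^ 2 ≤ M ^ 2 * (δ * y ^ (k + 2)) ^ 2 := by
          gcongr
          nlinarith [hk]
      _ = n * (M * (δ * y)) ^ 2 := by
          rw [← hy]
          ring
  obtain ⟨x, B, hB, hPB⟩ := h.exists_confined (K := 2 * (δ * y ^ (k + 2))) (L := M * (δ * y))
    hp hq ha hpqa (by nlinarith) (by positivity) (by positivity) (by linarith) hL ht
  have card_le := hB.trans <| confinement_size_le k hδ.le hδ1 hδk (by linarith) (by linarith)
    (by linarith) (by linarith)
  have hn : (0 : ℝ) < n := Nat.cast_pos.mpr (NeZero.pos n)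
  have density : (B.card : ℝ) / n ≤ 1 / 4 := by
    rw [div_le_iff₀ hn]
    linarith
  linarith [sum_pow_le_of_mixedBy hmix x B]

lemma exists_pow_eq_natCast_and_rpow_eq (k n : ℕ) :
    ∃ y : ℝ, 0 ≤ y ∧ y ^ (2 * k + 2) = n ∧
      (n : ℝ) ^ (((k : ℝ) + 2) / ((k : ℝ) + 1)) = (y ^ (k + 2)) ^ 2 := by
  have hn : (0 : ℝ) ≤ n := n.cast_nonneg
  refine ⟨(n : ℝ) ^ (1 / (2 * ((k : ℝ) + 1))), by positivity, ?_, ?_⟩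
  · rw [← Real.rpow_mul_natCast hn]
    convert Real.rpow_one _
    push_cast
    field_simp
  · rw [← pow_mul, ← Real.rpow_mul_natCast hn]
    congr 1
    push_cast
    field_simp

lemma exists_isConfig (hn : 2 * k ≤ n) : ∃ H μ, IsConfig n k H μ := by
  obtain ⟨e⟩ : Nonempty (Fin k ⊕ Fin k ↪ ZMod n) :=
    Function.Embedding.nonempty_of_card_le (by simpa [← two_mul] using hn)
  set μ : Equiv.Perm (ZMod n) := Equiv.Perm.viaEmbedding (Equiv.sumComm (Fin k) (Fin k)) e
  have swap : ∀ a, μ (e a) = e a.swap := Equiv.Perm.viaEmbedding_apply _ e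
  have fixed : ∀ x ∉ Set.range e, μ x = x := Equiv.Perm.viaEmbedding_apply_of_notMem _ e
  have mem_hubs : ∀ x, x ∈ Finset.univ.map e ↔ x ∈ Set.range e := by simp
  refine ⟨Finset.univ.map e, μ, by simp [two_mul], fun x hx => ?_, fun x => ?_, fun x hx => ?_,
    fun x hx => fixed x (mt (mem_hubs x).mpr hx)⟩
  · obtain ⟨a, rfl⟩ := (mem_hubs x).mp hx
    exact swap a ▸ Finset.mem_map_of_mem e (Finset.mem_univ _)
  · by_cases hx : x ∈ Set.range e
    · obtain ⟨a, rfl⟩ := hx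
      rw [swap, swap, Sum.swap_swap]
    · rw [fixed x hx, fixed x hx]
  · obtain ⟨a, rfl⟩ := (mem_hubs x).mp hx
    rw [swap, e.injective.ne_iff]
    cases a <;> simp

lemma tendsto_configProb {E : ∀ n [NeZero n], Finset (ZMod n) → (ZMod n → ZMod n) → Prop} {N : ℕ}
    (hE : ∀ n [NeZero n], N ≤ n → ∀ H μ, IsConfig n k H μ → E n H μ) :
    Filter.Tendsto (fun n : ℕ => if h : n = 0 then (0 : ℝ) else
      letI : NeZero n := ⟨h⟩
      configProb n k (E n)) Filter.atTop (nhds 1) := by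
  refine tendsto_const_nhds.congr' ?_
  filter_upwards [Filter.eventually_ge_atTop N, Filter.eventually_ge_atTop (2 * k),
    Filter.eventually_ne_atTop 0] with n hN hk hn
  have : NeZero n := ⟨hn⟩
  obtain ⟨H, μ, h⟩ := exists_isConfig hk
  rw [dif_neg hn, configProb, eq_comm]
  simp only [and_iff_left_of_imp (hE n hN _ _)]
  refine div_self (Nat.cast_ne_zero.mpr (Finset.card_ne_zero.mpr ⟨(H, μ), ?_⟩))
  exact Finset.mem_filter.mpr ⟨Finset.mem_univ _, h⟩

end MixingTime

theorem mixing_time_lower_bound_general (k : ℕ) :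
    ∃ γ ε : ℝ, 0 < γ ∧ 0 < ε ∧ ∀ p q a : ℝ, 0 ≤ p → 0 ≤ q → 0 ≤ a → p + q + a ≤ 1 →
      ∀ (n : ℕ) [NeZero n], 2 ≤ n → ∀ H μ, IsConfig n k H μ → ∀ t : ℕ,
        (t : ℝ) < γ * (n : ℝ) ^ (((k : ℝ) + 2) / ((k : ℝ) + 1)) →
          ¬ mixedBy n (cycleP n p q a H μ) ε t := by
  set C : ℝ := 24 * (3 * (600 * (k + 1))) ^ k
  have hC : 1 ≤ C := by
    have : (1 : ℝ) ≤ (3 * (600 * (k + 1))) ^ k := one_le_pow₀ (by linarith [k.cast_nonneg (α := ℝ)])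
    linarith
  have hδ : 0 < C⁻¹ := by positivity
  have hδ1 : C⁻¹ ≤ 1 := inv_le_one_of_one_le₀ hC
  refine ⟨(C⁻¹ / 2) ^ (2 * k + 4), 1 / 16, by positivity, by norm_num,
    fun p q a hp hq ha hpqa n _ hn H μ h t ht => ?_⟩
  obtain ⟨y, hy, hyn, hrpow⟩ := exists_pow_eq_natCast_and_rpow_eq k n
  have ht' : (t : ℝ) < (C⁻¹ * y / 2) ^ (2 * k + 4) := ht.trans_eq <| by rw [hrpow]; ring
  rcases le_total 2 (C⁻¹ * y) with large | small
  · refine h.not_mixedBy hp hq ha hpqa hδ hδ1 (mul_inv_cancel₀ (by positivity)).le hyn large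
      (ht.le.trans ?_)
    rw [hrpow, mul_pow]
    gcongr
    calc (C⁻¹ / 2) ^ (2 * k + 4) ≤ (C⁻¹ / 2) ^ 2 :=
          pow_le_pow_of_le_one (by positivity) (by linarith) (by omega)
      _ ≤ C⁻¹ ^ 2 := by gcongr; linarith
  · obtain rfl : t = 0 := by
      have : (t : ℝ) < 1 := ht'.trans_le (pow_le_one₀ (by positivity) (by linarith))
      exact_mod_cast Nat.lt_one_iff.mp (by exact_mod_cast this)
    exact not_mixedBy_zero hn _ (by norm_num)

/-- there are `γ* > 0` and `ε* > 0` so that the probability (over the random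
hubs and matching) that `t_mix(ε*) ≥ γ* · n^{(k+2)/(k+1)}` tends to `1` as `n → ∞`. -/
theorem mixing_time_lower_bound (k : ℕ) (hk : 1 ≤ k) (p q a : ℝ)
    (hp : 0 < p) (hq : 0 < q) (ha : 0 < a) (hpqa : p + q + a ≤ 1) (hpq : q < p) :
    ∃ (γstar εstar : ℝ), 0 < γstar ∧ 0 < εstar ∧
      Filter.Tendsto (fun n : ℕ =>
          if h : n = 0 then (0 : ℝ) else
            letI : NeZero n := ⟨h⟩
            configProb n k (fun H μ =>
              ∀ t : ℕ, (t : ℝ) < γstar * (n : ℝ) ^ (((k : ℝ) + 2) / ((k : ℝ) + 1)) →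
                ¬ mixedBy n (cycleP n p q a H μ) εstar t))
        Filter.atTop (nhds 1) := by
  obtain ⟨γ, ε, hγ, hε, h⟩ := mixing_time_lower_bound_general k
  exact ⟨γ, ε, hγ, hε, tendsto_configProb (N := 2)
    (E := fun n _ H μ => ∀ t : ℕ, (t : ℝ) < γ * (n : ℝ) ^ (((k : ℝ) + 2) / ((k : ℝ) + 1)) →
      ¬ mixedBy n (cycleP n p q a H μ) ε t)
    fun n _ => h p q a hp.le hq.le ha.le hpqa n⟩
end
end
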